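/- Let A* be a block-nondegenerate local maximizer of f over the feasible set. Then there exists δ > 0 such that every greedy HOOI sequence {A^k}_{k≥0} with ‖A⁰ − A*‖_F ≤ δ converges (blockwise in Frobenius norm) to a feasible point Ā that is a local maximizer of f. -/

import Mathlib

open Matrix BigOperators Filter

def froSq {ι κ : Type*} [Fintype ι] [Fintype κ] (M : Matrix ι κ ℝ) : ℝ :=
  ∑ i, ∑ j, (M i j) ^ 2

noncomputable def fro {ι κ : Type*} [Fintype ι] [Fintype κ] (M : Matrix ι κ ℝ) : ℝ :=
  Real.sqrt (froSq M)

noncomputable def eigList {m : ℕ} {κ : Type*} [Fintype κ] (Y : Matrix (Fin m) κ ℝ) : List ℝ :=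
  ((((Finset.univ : Finset (Fin m)).val.map
      (fun j => (Matrix.isHermitian_mul_conjTranspose_self Y).eigenvalues j)).sort (· ≤ ·)).reverse)

noncomputable def sval {m : ℕ} {κ : Type*} [Fintype κ] (Y : Matrix (Fin m) κ ℝ) (i : ℕ) : ℝ :=
  Real.sqrt ((eigList Y).getD (i - 1) 0)

/-- Feasibility: every factor matrix has orthonormal columns. -/
def TFeas {N : ℕ} {I r : Fin N → ℕ}
    (A : (n : Fin N) → Matrix (Fin (I n)) (Fin (r n)) ℝ) : Prop :=
  ∀ n, (A n)ᵀ * A n = 1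

/-- `Gₙ(A) = unfoldₙ(X ×₁ A₁ᵀ ⋯ ×_{n−1} A_{n−1}ᵀ ×_{n+1} A_{n+1}ᵀ ⋯ ×_N A_Nᵀ)`. -/
noncomputable def Gmat {N : ℕ} {I r : Fin N → ℕ} (X : ((n : Fin N) → Fin (I n)) → ℝ)
    (A : (n : Fin N) → Matrix (Fin (I n)) (Fin (r n)) ℝ) (n : Fin N) :
    Matrix (Fin (I n)) ((m : {m : Fin N // m ≠ n}) → Fin (r m.1)) ℝ :=
  fun j c => ∑ idx : ((m : {m : Fin N // m ≠ n}) → Fin (I m.1)),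
    X (fun i => if h : i = n then Fin.cast (by rw [h]) j else idx ⟨i, h⟩) *
      ∏ m : {m : Fin N // m ≠ n}, A m.1 (idx m) (c m)

/-- `f(A) = ‖X ×₁ A₁ᵀ ⋯ ×_N A_Nᵀ‖_F²`. -/
noncomputable def fval {N : ℕ} {I r : Fin N → ℕ} (X : ((n : Fin N) → Fin (I n)) → ℝ)
    (A : (n : Fin N) → Matrix (Fin (I n)) (Fin (r n)) ℝ) : ℝ :=
  ∑ c : ((n : Fin N) → Fin (r n)),
    (∑ idx : ((n : Fin N) → Fin (I n)), X idx * ∏ n, A n (idx n) (c n)) ^ 2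

/-- A critical point: `Gₙ(A)Gₙ(A)ᵀAₙ = AₙAₙᵀGₙ(A)Gₙ(A)ᵀAₙ` for all `n`. -/
def Critical {N : ℕ} {I r : Fin N → ℕ} (X : ((n : Fin N) → Fin (I n)) → ℝ)
    (A : (n : Fin N) → Matrix (Fin (I n)) (Fin (r n)) ℝ) : Prop :=
  ∀ n, Gmat X A n * (Gmat X A n)ᵀ * A n =
    A n * (A n)ᵀ * (Gmat X A n * (Gmat X A n)ᵀ * A n)

/-- A block-wise maximizer. -/
def BlockMax {N : ℕ} {I r : Fin N → ℕ} (X : ((n : Fin N) → Fin (I n)) → ℝ)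
    (A : (n : Fin N) → Matrix (Fin (I n)) (Fin (r n)) ℝ) : Prop :=
  ∀ n, ∀ B : Matrix (Fin (I n)) (Fin (r n)) ℝ, Bᵀ * B = 1 →
    froSq (Bᵀ * Gmat X A n) ≤ froSq ((A n)ᵀ * Gmat X A n)

/-- Block-nondegeneracy: `σ_{rₙ}(Gₙ(A)) > σ_{rₙ+1}(Gₙ(A))` for all `n`. -/
def NonDeg {N : ℕ} {I r : Fin N → ℕ} (X : ((n : Fin N) → Fin (I n)) → ℝ)
    (A : (n : Fin N) → Matrix (Fin (I n)) (Fin (r n)) ℝ) : Prop :=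
  ∀ n, sval (Gmat X A n) (r n + 1) < sval (Gmat X A n) (r n)

/-- The hybrid tuple used in HOOI: the already-updated blocks `i < n` come from
`Anew`, the rest from `Aold`. -/
def hyb {N : ℕ} {I r : Fin N → ℕ}
    (Aold Anew : (n : Fin N) → Matrix (Fin (I n)) (Fin (r n)) ℝ) (n : Fin N) :
    (i : Fin N) → Matrix (Fin (I i)) (Fin (r i)) ℝ :=
  fun i => if i < n then Anew i else Aold i

/-- `Gₙ^k = unfoldₙ(X ×₁ (A₁^{k+1})ᵀ ⋯ ×_{n−1} (A_{n−1}^{k+1})ᵀ ×_{n+1} (A_{n+1}^k)ᵀ ⋯ ×_N (A_N^k)ᵀ)`. -/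
noncomputable def Gseq {N : ℕ} {I r : Fin N → ℕ} (X : ((n : Fin N) → Fin (I n)) → ℝ)
    (A : ℕ → (n : Fin N) → Matrix (Fin (I n)) (Fin (r n)) ℝ) (k : ℕ) (n : Fin N) :
    Matrix (Fin (I n)) ((m : {m : Fin N // m ≠ n}) → Fin (r m.1)) ℝ :=
  Gmat X (hyb (A k) (A (k + 1)) n) n

/-- A HOOI sequence. -/
def IsHOOI {N : ℕ} {I r : Fin N → ℕ} (X : ((n : Fin N) → Fin (I n)) → ℝ)
    (A : ℕ → (n : Fin N) → Matrix (Fin (I n)) (Fin (r n)) ℝ) : Prop :=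
  (∀ k, TFeas (A k)) ∧
  ∀ k (n : Fin N), ∀ B : Matrix (Fin (I n)) (Fin (r n)) ℝ, Bᵀ * B = 1 →
    froSq (Bᵀ * Gseq X A k n) ≤ froSq ((A (k + 1) n)ᵀ * Gseq X A k n)

/-- A greedy HOOI sequence. -/
def IsGreedyHOOI {N : ℕ} {I r : Fin N → ℕ} (X : ((n : Fin N) → Fin (I n)) → ℝ)
    (A : ℕ → (n : Fin N) → Matrix (Fin (I n)) (Fin (r n)) ℝ) : Prop :=
  IsHOOI X A ∧
  ∀ k (n : Fin N), ∀ B : Matrix (Fin (I n)) (Fin (r n)) ℝ, Bᵀ * B = 1 →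
    (∀ C : Matrix (Fin (I n)) (Fin (r n)) ℝ, Cᵀ * C = 1 →
      froSq (Cᵀ * Gseq X A k n) ≤ froSq (Bᵀ * Gseq X A k n)) →
    fro (A (k + 1) n - A k n) ≤ fro (B - A k n)

/-- `Ā` is a limit point of the sequence `{A^k}` (blockwise in Frobenius norm). -/
def IsLimitPt {N : ℕ} {I r : Fin N → ℕ}
    (A : ℕ → (n : Fin N) → Matrix (Fin (I n)) (Fin (r n)) ℝ)
    (Abar : (n : Fin N) → Matrix (Fin (I n)) (Fin (r n)) ℝ) : Prop :=
  ∃ φ : ℕ → ℕ, StrictMono φ ∧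
    ∀ n, Tendsto (fun k => fro (A (φ k) n - Abar n)) atTop (nhds 0)

/-- `‖A − B‖_F = √(∑ₙ ‖Aₙ − Bₙ‖_F²)` on tuples. -/
noncomputable def tdist {N : ℕ} {I r : Fin N → ℕ}
    (A B : (n : Fin N) → Matrix (Fin (I n)) (Fin (r n)) ℝ) : ℝ :=
  Real.sqrt (∑ n, froSq (A n - B n))

/-- A local maximizer of `f` over the feasible set. -/
def LocalMax {N : ℕ} {I r : Fin N → ℕ} (X : ((n : Fin N) → Fin (I n)) → ℝ)
    (A : (n : Fin N) → Matrix (Fin (I n)) (Fin (r n)) ℝ) : Prop :=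
  TFeas A ∧ ∃ ε > (0 : ℝ), ∀ B : (n : Fin N) → Matrix (Fin (I n)) (Fin (r n)) ℝ,
    TFeas B → tdist B A ≤ ε → fval X B ≤ fval X A

/-- A globally optimal solution. -/
def GlobalMax {N : ℕ} {I r : Fin N → ℕ} (X : ((n : Fin N) → Fin (I n)) → ℝ)
    (A : (n : Fin N) → Matrix (Fin (I n)) (Fin (r n)) ℝ) : Prop :=
  TFeas A ∧ ∀ B : (n : Fin N) → Matrix (Fin (I n)) (Fin (r n)) ℝ,
    TFeas B → fval X B ≤ fval X A

open MvPolynomial in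
theorem kl_alg_dep {α β : Type} [Fintype α] [Fintype β] (hc : Fintype.card β < Fintype.card α)
    (e : α → MvPolynomial β ℝ) :
    ∃ Q : MvPolynomial α ℝ, Q ≠ 0 ∧ ∀ p : β → ℝ, eval (fun a => eval p (e a)) Q = 0 := by
  have h1 : ¬ AlgebraicIndependent ℝ e := by
    intro h
    have := h.cardinalMk_le_trdeg
    rw [MvPolynomial.trdeg_of_isDomain] at this
    simp at this
    omega
  rw [algebraicIndependent_iff] at h1
  push Not at h1
  obtain ⟨Q, hQ, hQ0⟩ := h1
  refine ⟨Q, hQ0, fun p => ?_⟩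
  have h2 := congrArg (eval p) hQ
  rw [map_zero, MvPolynomial.aeval_def, MvPolynomial.algebraMap_eq] at h2
  rw [← h2]
  rw [← MvPolynomial.coe_eval₂Hom, ← RingHom.comp_apply]
  congr 1
  apply MvPolynomial.ringHom_ext
  · intro r; simp
  · intro i; simp

open MvPolynomial in
theorem kl_continuous {τ : Type} (p : MvPolynomial τ ℝ) :
    Continuous (fun x : τ → ℝ => eval x p) := MvPolynomial.continuous_eval p

open MvPolynomial in
noncomputable def klD {τ : Type} [Fintype τ] (p : MvPolynomial τ ℝ) (x : τ → ℝ) : (τ → ℝ) →L[ℝ] ℝ :=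
  ∑ i, eval x (pderiv i p) • ContinuousLinearMap.proj (R := ℝ) (φ := fun _ : τ => ℝ) i

open MvPolynomial in
theorem klD_apply {τ : Type} [Fintype τ] (p : MvPolynomial τ ℝ) (x v : τ → ℝ) :
    klD p x v = ∑ i, eval x (pderiv i p) * v i := by
  simp [klD, ContinuousLinearMap.sum_apply]

open MvPolynomial in
theorem kl_hasFDerivAt {τ : Type} [Fintype τ] (p : MvPolynomial τ ℝ) (x : τ → ℝ) :
    HasFDerivAt (fun x : τ → ℝ => eval x p) (klD p x) x := by
  classical
  induction p using MvPolynomial.induction_on with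
  | C a => 
    have : klD (C a) x = 0 := by ext v; simp [klD_apply]
    rw [this]; simpa using hasFDerivAt_const a x
  | add p q hp hq =>
    have : klD (p + q) x = klD p x + klD q x := by
      ext v; simp [klD_apply, add_mul, Finset.sum_add_distrib]
    rw [this]; refine (hp.add hq).congr_of_eventuallyEq ?_
    exact Filter.Eventually.of_forall fun y => by simp
  | mul_X p i hp =>
    have h1 : HasFDerivAt (fun x : τ → ℝ => x i) (ContinuousLinearMap.proj (R := ℝ) (φ := fun _ : τ => ℝ) i) x :=
      hasFDerivAt_apply i x
    have h2 := hp.mul h1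
    have h3 : klD (p * X i) x = eval x p • (ContinuousLinearMap.proj (R := ℝ) (φ := fun _ : τ => ℝ) i) + x i • klD p x := by
      ext v
      simp only [klD_apply, Derivation.leibniz, pderiv_X, smul_eq_mul, map_add, map_mul, eval_X,
        _root_.add_apply, _root_.smul_apply, ContinuousLinearMap.proj_apply, add_mul, Finset.sum_add_distrib, Finset.mul_sum]
      congr 1
      · rw [Finset.sum_eq_single i]
        · simp
        · intro b _ hb; simp [Pi.single_apply, hb.symm]
        · simp
      · exact Finset.sum_congr rfl fun j _ => by ring
    rw [h3]
    refine h2.congr_of_eventuallyEq ?_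
    exact Filter.Eventually.of_forall fun y => by simp

open MvPolynomial in
theorem kl_pderiv_zero_of_min {τ : Type} [Fintype τ] (p : MvPolynomial τ ℝ) (x : τ → ℝ)
    (h : IsLocalMin (fun x : τ → ℝ => eval x p) x) (i : τ) : eval x (pderiv i p) = 0 := by
  classical
  have h1 := h.hasFDerivAt_eq_zero (kl_hasFDerivAt p x)
  have h2 := congrArg (fun L => L (Pi.single i 1)) h1
  simpa [klD_apply, Pi.single_apply] using h2

open MvPolynomial in
theorem kl_exists_ne {τ : Type} (p : MvPolynomial τ ℝ) (hp : p ≠ 0) : ∃ x, eval x p ≠ 0 := by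
  by_contra h
  push Not at h
  exact hp (MvPolynomial.funext (by simpa using h))

open MvPolynomial in
/-- evaluation of the Option-split polynomial -/
theorem kl_option_eval {S : Type} (Q : MvPolynomial (Option S) ℝ) (s : Option S → ℝ) :
    eval s Q = ∑ l ∈ Finset.range ((optionEquivLeft ℝ S Q).natDegree + 1),
      eval (fun i => s (some i)) ((optionEquivLeft ℝ S Q).coeff l) * (s none) ^ l := by
  have h := optionEquivLeft_elim_eval ℝ S (fun i => s (some i)) (s none) Q
  have h2 : (fun o : Option S => Option.elim o (s none) (fun i => s (some i))) = s := by
    funext o; cases o <;> rfl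
  rw [h2] at h
  rw [h, Polynomial.eval_map, Polynomial.eval₂_eq_sum_range]

/-- vector on a doubly optional index type -/
def klV {τ : Type} (y t : ℝ) (a : τ → ℝ) : Option (Option τ) → ℝ :=
  fun o => o.elim y (fun o => o.elim t a)

theorem klV_continuous {τ : Type} (t : ℝ) (a : τ → ℝ) : Continuous (fun y => klV y t a) := by
  apply continuous_pi
  intro o
  rcases o with _ | o
  · exact continuous_id
  · exact continuous_const

open MvPolynomial in
theorem kl_lead_limit {S : Type} (Q : MvPolynomial (Option S) ℝ) (s : ℕ → Option S → ℝ) (sb : S → ℝ)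
    (hs : Tendsto (fun m => fun i => s m (some i)) atTop (nhds sb))
    (hK : Tendsto (fun m => s m none) atTop atTop)
    (h0 : ∀ m, eval (s m) Q = 0) :
    eval sb (optionEquivLeft ℝ S Q).leadingCoeff = 0 := by
  set R := optionEquivLeft ℝ S Q with hR
  set L := R.natDegree with hL
  have hc : ∀ l, Tendsto (fun m => eval (fun i => s m (some i)) (R.coeff l)) atTop (nhds (eval sb (R.coeff l))) := by
    intro l
    exact ((kl_continuous (R.coeff l)).tendsto sb).comp hs
  have h1 : ∀ l ∈ Finset.range (L+1), Tendsto (fun m => eval (fun i => s m (some i)) (R.coeff l) * ((s m none) ^ l / (s m none)^L)) atTop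
      (nhds (if l = L then eval sb (R.coeff l) else 0)) := by
    intro l hl
    by_cases hlL : l = L
    · rw [hlL]
      simp only [if_true]
      have h2 : Tendsto (fun m => (s m none) ^ L / (s m none)^L) atTop (nhds 1) := by
        apply tendsto_const_nhds.congr'
        filter_upwards [hK.eventually_gt_atTop 0] with m hm
        rw [div_self (pow_pos hm _).ne']
      simpa using (hc L).mul h2
    · simp only [hlL, if_false]
      have hlt : l < L := by simp at hl; omega
      have h2 : Tendsto (fun m => (s m none) ^ l / (s m none)^L) atTop (nhds 0) :=
        (tendsto_pow_div_pow_atTop_zero hlt).comp hK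
      simpa using (hc l).mul h2
  have h2 := tendsto_finsetSum _ h1
  have h3 : ∀ m, ∑ l ∈ Finset.range (L+1), eval (fun i => s m (some i)) (R.coeff l) * ((s m none) ^ l / (s m none)^L) = 0 := by
    intro m
    have := h0 m
    rw [kl_option_eval] at this
    have h4 := congrArg (fun x => x / (s m none)^L) this
    simp only [Finset.sum_div, zero_div] at h4
    rw [← h4]
    exact Finset.sum_congr rfl fun l _ => by ring
  simp only [h3] at h2
  have h5 := tendsto_nhds_unique h2 tendsto_const_nhds
  rw [Finset.sum_ite_eq_of_mem' _ _ _ (by simp)] at h5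
  exact h5

open MvPolynomial in
theorem kl_sel_dep {τ : Type} [Fintype τ] (f g h : MvPolynomial τ ℝ) (j : τ) :
    ∃ q : MvPolynomial (Option (Option τ)) ℝ, q ≠ 0 ∧
      ∀ (a wb : τ → ℝ) (t : ℝ) (w : ℕ → τ → ℝ) (K : ℕ → ℝ), Tendsto K atTop atTop →
        Tendsto w atTop (nhds wb) →
        (∀ m i, a i = w m i + (K m * eval (w m) (pderiv i h) + (K m)^2 *
          (2 * (eval (w m) f - t) * eval (w m) (pderiv i f) + eval (w m) (pderiv i g))) / 2) →
        eval (klV (wb j) t a) q = 0 := by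
  classical
  let rn : MvPolynomial τ ℝ → MvPolynomial (Option (Option τ)) ℝ := fun p => rename (fun i => some (some i)) p
  let e : Option (Option (Option τ)) → MvPolynomial (Option (Option τ)) ℝ := fun o =>
    o.elim (X none) (fun o => o.elim (X (some (some j))) (fun o => o.elim (X (some none))
      (fun i => X (some (some i)) + (X none * rn (pderiv i h) + (X none)^2 *
        (C 2 * (rn f - X (some none)) * rn (pderiv i f) + rn (pderiv i g))) * C (1/2))))
  obtain ⟨Q, hQ0, hQ⟩ := kl_alg_dep (α := Option (Option (Option τ))) (β := Option (Option τ)) (by simp) e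
  refine ⟨(optionEquivLeft ℝ _ Q).leadingCoeff, ?_, ?_⟩
  · simpa using hQ0
  intro a wb t w K hK hw hcr
  refine kl_lead_limit Q (fun m o => o.elim (K m) (klV (w m j) t a)) _ ?_ hK ?_
  · exact ((klV_continuous t a).tendsto (wb j)).comp (((continuous_apply j).tendsto wb).comp hw)
  · intro m
    rw [← hQ (klV (K m) t (w m))]
    congr 1
    have hrn : ∀ p, eval (klV (K m) t (w m)) (rn p) = eval (w m) p := by
      intro p
      simp only [rn, eval_rename]
      rfl
    congr 1
    funext o
    rcases o with _ | o
    · simp [e, klV]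
    rcases o with _ | o
    · simp [e, klV]
    rcases o with _ | i
    · simp [e, klV]
    · simp only [e, Option.elim, map_add, map_mul, map_sub, map_pow, hrn, eval_X, eval_C]
      simp only [klV, Option.elim]
      rw [hcr m i]; ring

open MvPolynomial in
theorem kl_min_exists {τ : Type} [Fintype τ] (f g h : MvPolynomial τ ℝ)
    (hh : ∀ w, 0 ≤ eval w h) (hb : ∀ C, Bornology.IsBounded {w | eval w g ≤ C})
    (a : τ → ℝ) (t K : ℝ) (hK : 1 ≤ K) :
    ∃ w, (∀ w', ∑ i, (w i - a i)^2 + K * eval w h + K^2 * ((eval w f - t)^2 + eval w g) ≤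
      ∑ i, (w' i - a i)^2 + K * eval w' h + K^2 * ((eval w' f - t)^2 + eval w' g)) ∧
      ∀ i, a i = w i + (K * eval w (pderiv i h) + K^2 *
          (2 * (eval w f - t) * eval w (pderiv i f) + eval w (pderiv i g))) / 2 := by
  classical
  let Φ : MvPolynomial τ ℝ := ∑ i, (X i - C (a i))^2 + C K * h + C (K^2) * ((f - C t)^2 + g)
  have hΦ : ∀ w, eval w Φ = ∑ i, (w i - a i)^2 + K * eval w h + K^2 * ((eval w f - t)^2 + eval w g) := by
    intro w; simp [Φ]
  have hlow : ∀ w, K^2 * eval w g ≤ eval w Φ := by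
    intro w
    rw [hΦ]
    have h1 : 0 ≤ ∑ i, (w i - a i)^2 := Finset.sum_nonneg fun i _ => sq_nonneg _
    have h2 : 0 ≤ K * eval w h := mul_nonneg (by linarith) (hh w)
    have h3 : 0 ≤ K^2 * (eval w f - t)^2 := by positivity
    nlinarith
  set S := {w : τ → ℝ | eval w g ≤ eval 0 Φ / K^2} with hS
  have hK2 : 0 < K^2 := by positivity
  have hScomp : IsCompact S := by
    apply Metric.isCompact_of_isClosed_isBounded
    · exact isClosed_le (kl_continuous g) continuous_const
    · exact hb _
  have h0S : (0 : τ → ℝ) ∈ S := by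
    simp only [hS, Set.mem_setOf_eq]
    rw [le_div_iff₀ hK2]
    have := hlow 0
    linarith
  obtain ⟨w, hwS, hw⟩ := hScomp.exists_isMinOn ⟨0, h0S⟩ (kl_continuous Φ).continuousOn
  have hmin : ∀ w', eval w Φ ≤ eval w' Φ := by
    intro w'
    by_cases hw' : w' ∈ S
    · exact hw hw'
    · have h1 : eval w Φ ≤ eval 0 Φ := hw h0S
      simp only [hS, Set.mem_setOf_eq, not_le] at hw'
      rw [div_lt_iff₀ hK2] at hw'
      have := hlow w'
      linarith
  refine ⟨w, fun w' => by have := hmin w'; rwa [hΦ, hΦ] at this, fun i => ?_⟩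
  have hd := kl_pderiv_zero_of_min Φ w (Filter.Eventually.of_forall hmin) i
  have hsum : eval w (pderiv i (∑ i, (X i - C (a i))^2 : MvPolynomial τ ℝ)) = 2 * (w i - a i) := by
    rw [map_sum, map_sum, Finset.sum_eq_single i]
    · simp [pow_two]; ring
    · intro b _ hb
      simp [pow_two, pderiv_X, Pi.single_apply, hb]
    · simp
  simp only [Φ, map_add, hsum] at hd
  simp [pow_two] at hd
  linear_combination (-1/2) * hd

open MvPolynomial in
/-- Selection lemma. -/
theorem kl_selection {τ : Type} [Fintype τ] (f g h : MvPolynomial τ ℝ)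
    (hg : ∀ w, 0 ≤ eval w g)
    (hh : ∀ w, 0 ≤ eval w h) (hb : ∀ C, Bornology.IsBounded {w | eval w g ≤ C}) :
    ∃ P : MvPolynomial (Fin 2) ℝ, P ≠ 0 ∧ ∀ t, (∃ w, eval w g = 0 ∧ eval w f = t) →
      ∃ w, eval w g = 0 ∧ eval w f = t ∧ (∀ w', eval w' g = 0 → eval w' f = t → eval w h ≤ eval w' h) ∧
        ∀ i, eval ![t, w i] P = 0 := by
  classical
  choose q hq0 hq using fun j => kl_sel_dep f g h j
  have hprod : (∏ j, q j) ≠ 0 := Finset.prod_ne_zero_iff.mpr fun j _ => hq0 j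
  obtain ⟨s, hs⟩ := kl_exists_ne _ hprod
  let a : τ → ℝ := fun i => s (some (some i))
  let sub : Option (Option τ) → MvPolynomial (Fin 2) ℝ := fun o => o.elim (X 1) (fun o => o.elim (X 0) (fun i => C (a i)))
  have hsub : ∀ (t y : ℝ) (p : MvPolynomial (Option (Option τ)) ℝ), eval ![t, y] (bind₁ sub p) = eval (klV y t a) p := by
    intro t y p
    rw [← MvPolynomial.coe_aeval_eq_eval, ← MvPolynomial.coe_aeval_eq_eval]
    simp only [RingHom.coe_coe]
    rw [aeval_bind₁]
    congr 1
    congr 1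
    funext o
    rcases o with _ | o
    · simp [sub, klV]
    rcases o with _ | o
    · simp [sub, klV]
    · simp [sub, klV]
  refine ⟨bind₁ sub (∏ j, q j), ?_, ?_⟩
  · intro h0
    apply hs
    have := hsub (s (some none)) (s none) (∏ j, q j)
    rw [h0, map_zero] at this
    rw [this]
    congr 1
    congr 1
    funext o
    rcases o with _ | o
    · rfl
    rcases o with _ | o <;> rfl
  rintro t ⟨z0, hz0, hz0t⟩
  choose w hwmin hwcr using fun m : ℕ => kl_min_exists f g h hh hb a t (m + 1 : ℝ) (by linarith [Nat.cast_nonneg (α := ℝ) m])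
  set A := ∑ i, (z0 i - a i)^2 with hA
  have hA0 : 0 ≤ A := Finset.sum_nonneg fun i _ => sq_nonneg _
  -- key bound
  have hkey : ∀ (z : τ → ℝ) (m : ℕ), eval z g = 0 → eval z f = t → (m+1:ℝ) * eval (w m) h + (m+1:ℝ)^2 * ((eval (w m) f - t)^2 + eval (w m) g)
      ≤ ∑ i, (z i - a i)^2 + (m+1:ℝ) * eval z h := by
    intro z m hz hzt
    have h1 := hwmin m z
    rw [hz, hzt] at h1
    have h2 : 0 ≤ ∑ i, (w m i - a i)^2 := Finset.sum_nonneg fun i _ => sq_nonneg _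
    nlinarith
  have hG : ∀ m : ℕ, (eval (w m) f - t)^2 + eval (w m) g ≤ (A + eval z0 h) * (1 / (m+1:ℝ)) := by
    intro m
    have h1 := hkey z0 m hz0 hz0t
    have hm : (1:ℝ) ≤ m + 1 := by linarith [Nat.cast_nonneg (α := ℝ) m]
    have h2 : 0 ≤ (m+1:ℝ) * eval (w m) h := mul_nonneg (by linarith) (hh _)
    rw [mul_one_div, le_div_iff₀ (by linarith)]
    have h3 : (m+1:ℝ) * ((m+1:ℝ) * ((eval (w m) f - t)^2 + eval (w m) g)) ≤ (m+1:ℝ) * (A + eval z0 h) := by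
      have : A ≤ (m+1:ℝ) * A := by nlinarith
      nlinarith
    have := le_of_mul_le_mul_left h3 (by linarith)
    linarith
  have hlim0 : Tendsto (fun m : ℕ => (A + eval z0 h) * (1 / (m+1:ℝ))) atTop (nhds 0) := by
    simpa using tendsto_one_div_add_atTop_nhds_zero_nat.const_mul (A + eval z0 h)
  have hbd : ∀ m, w m ∈ {w | eval w g ≤ A + eval z0 h} := by
    intro m
    have h1 := hG m
    have h2 : (A + eval z0 h) * (1 / (m+1:ℝ)) ≤ A + eval z0 h := by
      apply mul_le_of_le_one_right (add_nonneg hA0 (hh z0))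
      rw [div_le_one (by positivity)]
      linarith [Nat.cast_nonneg (α := ℝ) m]
    have := sq_nonneg (eval (w m) f - t)
    simp only [Set.mem_setOf_eq]; linarith
  obtain ⟨wb, -, φ, hφ, hlim⟩ := tendsto_subseq_of_bounded (hb _) hbd
  have hGlim : Tendsto (fun m => (eval (w (φ m)) f - t)^2 + eval (w (φ m)) g) atTop (nhds ((eval wb f - t)^2 + eval wb g)) := by
    have hc : Continuous (fun w => (eval w f - t)^2 + eval w g) :=
      (((kl_continuous f).sub continuous_const).pow 2).add (kl_continuous g)
    exact (hc.tendsto wb).comp hlim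
  have hG0 : (eval wb f - t)^2 + eval wb g ≤ 0 :=
    le_of_tendsto_of_tendsto' hGlim (hlim0.comp hφ.tendsto_atTop) fun m => hG (φ m)
  have hwbg : eval wb g = 0 := le_antisymm (by linarith [sq_nonneg (eval wb f - t)]) (hg wb)
  have hwbf : eval wb f = t := by
    have h1 : (eval wb f - t)^2 = 0 := le_antisymm (by linarith [hg wb]) (sq_nonneg _)
    have := pow_eq_zero_iff (two_ne_zero) |>.mp h1
    linarith
  refine ⟨wb, hwbg, hwbf, ?_, ?_⟩
  · intro z hz hzt
    have h1 : ∀ m : ℕ, eval (w m) h ≤ (∑ i, (z i - a i)^2) * (1 / (m+1:ℝ)) + eval z h := by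
      intro m
      have h1 := hkey z m hz hzt
      have hm : (0:ℝ) < m + 1 := by positivity
      have h2 : 0 ≤ (m+1:ℝ)^2 * ((eval (w m) f - t)^2 + eval (w m) g) :=
        mul_nonneg (by positivity) (add_nonneg (sq_nonneg _) (hg _))
      have h3 : (m+1:ℝ) * eval (w m) h ≤ (m+1:ℝ) * ((∑ i, (z i - a i)^2) * (1 / (m+1:ℝ)) + eval z h) := by
        have : (m+1:ℝ) * ((∑ i, (z i - a i)^2) * (1 / (m+1:ℝ)) + eval z h) = ∑ i, (z i - a i)^2 + (m+1:ℝ) * eval z h := by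
          field_simp
        rw [this]; linarith
      exact le_of_mul_le_mul_left h3 hm
    have h2 : Tendsto (fun m : ℕ => (∑ i, (z i - a i)^2) * (1 / (m+1:ℝ)) + eval z h) atTop (nhds (eval z h)) := by
      have := (tendsto_one_div_add_atTop_nhds_zero_nat (𝕜 := ℝ)).const_mul (∑ i, (z i - a i)^2)
      simpa using this.add_const (eval z h)
    exact le_of_tendsto_of_tendsto' (((kl_continuous h).tendsto wb).comp hlim) (h2.comp hφ.tendsto_atTop) fun m => h1 (φ m)
  · intro i
    rw [hsub, map_prod]
    apply Finset.prod_eq_zero (Finset.mem_univ i)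
    refine hq i a wb t (fun m => w (φ m)) (fun m => (φ m : ℝ) + 1) ?_ hlim ?_
    · exact tendsto_atTop_add_const_right _ _ (tendsto_natCast_atTop_atTop.comp hφ.tendsto_atTop)
    · intro m i
      exact hwcr (φ m) i

open MeasureTheory in
theorem kl_uni (u : Polynomial ℝ) (D : ℕ) (hD : u.natDegree ≤ D) (η : ℝ) :
    ∫⁻ t in {t | |u.eval t| < η}, ENNReal.ofReal |u.derivative.eval t| ≤ (D + 1 : ℕ) * ENNReal.ofReal (2 * η) := by
  classical
  by_cases hu : u.derivative = 0
  · simp [hu]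
  set Z := u.derivative.roots.toFinset with hZ
  have hZcard : Z.card ≤ D := by
    calc Z.card ≤ Multiset.card u.derivative.roots := Multiset.toFinset_card_le _
      _ ≤ u.derivative.natDegree := Polynomial.card_roots' _
      _ ≤ u.natDegree - 1 := Polynomial.natDegree_derivative_le _
      _ ≤ D := by omega
  let cnt : ℝ → ℕ := fun t => ∑ z ∈ Z, if z < t then 1 else 0
  have hcntm : Measurable cnt := by
    apply Finset.measurable_sum
    intro z _
    exact Measurable.ite measurableSet_Ioi measurable_const measurable_const
  have hcntle : ∀ t, cnt t ≤ D := by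
    intro t
    refine le_trans ?_ hZcard
    calc cnt t ≤ ∑ z ∈ Z, 1 := Finset.sum_le_sum fun z _ => by split_ifs <;> omega
      _ = Z.card := by simp
  let E : ℕ → Set ℝ := fun k => {t | |u.eval t| < η} ∩ cnt ⁻¹' {k}
  have hEm : ∀ k, MeasurableSet (E k) := fun k =>
    ((isOpen_lt (u.continuous.abs) continuous_const).measurableSet).inter (hcntm (measurableSet_singleton k))
  have hlt : ∀ k x y, x ∈ E k → y ∈ E k → x < y → u.eval x ≠ u.eval y := by
    intro k x y hx hy hxy he
    obtain ⟨c, hc, hc'⟩ := exists_deriv_eq_zero hxy u.continuous.continuousOn he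
    rw [Polynomial.deriv] at hc'
    have hcZ : c ∈ Z := by
      rw [hZ, Multiset.mem_toFinset, Polynomial.mem_roots hu]; exact hc'
    have h1 : cnt x < cnt y := by
      apply Finset.sum_lt_sum
      · intro z _
        split_ifs with h1 h2
        · exact le_rfl
        · exact absurd (h1.trans hxy) h2
        · omega
        · exact le_rfl
      · refine ⟨c, hcZ, ?_⟩
        rw [if_neg (not_lt.mpr hc.1.le), if_pos hc.2]; omega
    have h2 : cnt x = k := hx.2
    have h3 : cnt y = k := hy.2
    omega
  have hinj : ∀ k, Set.InjOn (fun t => u.eval t) (E k) := by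
    intro k x hx y hy he
    rcases lt_trichotomy x y with h | h | h
    · exact absurd he (hlt k x y hx hy h)
    · exact h
    · exact absurd he.symm (hlt k y x hy hx h)
  have hpiece : ∀ k, ∫⁻ t in E k, ENNReal.ofReal |u.derivative.eval t| ≤ ENNReal.ofReal (2 * η) := by
    intro k
    have h1 := lintegral_image_eq_lintegral_abs_deriv_mul (hEm k)
      (fun x _ => (u.hasDerivAt x).hasDerivWithinAt) (hinj k) (fun _ => 1)
    simp only [mul_one] at h1
    rw [← h1, lintegral_one, Measure.restrict_apply_univ]
    calc volume ((fun t => u.eval t) '' E k) ≤ volume (Set.Ioo (-η) η) := by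
          apply measure_mono
          rintro _ ⟨t, ht, rfl⟩
          exact abs_lt.mp ht.1
      _ = ENNReal.ofReal (2 * η) := by rw [Real.volume_Ioo]; congr 1; ring
  have hcov : {t | |u.eval t| < η} ⊆ ⋃ k ∈ Finset.range (D+1), E k := by
    intro t ht
    simp only [Set.mem_iUnion]
    exact ⟨cnt t, by simpa using Nat.lt_succ_of_le (hcntle t), ht, rfl⟩
  calc ∫⁻ t in {t | |u.eval t| < η}, ENNReal.ofReal |u.derivative.eval t|
      ≤ ∫⁻ t in ⋃ k ∈ Finset.range (D+1), E k, ENNReal.ofReal |u.derivative.eval t| := lintegral_mono_set hcov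
    _ ≤ ∑ k ∈ Finset.range (D+1), ∫⁻ t in E k, ENNReal.ofReal |u.derivative.eval t| := by
        generalize Finset.range (D+1) = s
        induction s using Finset.induction_on with
        | empty => simp
        | insert a s ha ih =>
          rw [Finset.set_biUnion_insert, Finset.sum_insert ha]
          exact (lintegral_union_le _ _ _).trans (by gcongr)
    _ ≤ ∑ k ∈ Finset.range (D+1), ENNReal.ofReal (2 * η) := Finset.sum_le_sum fun k _ => hpiece k
    _ = _ := by simp

open MvPolynomial in
theorem kl_cont2 (p : MvPolynomial (Fin 2) ℝ) : Continuous (fun z : ℝ × ℝ => eval ![z.1, z.2] p) := by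
  apply (kl_continuous p).comp
  apply continuous_pi
  intro i
  fin_cases i
  · exact continuous_fst
  · exact continuous_snd

open MvPolynomial in
theorem kl_hasFDeriv2 (p : MvPolynomial (Fin 2) ℝ) (t y : ℝ) :
    HasFDerivAt (fun z : ℝ × ℝ => eval ![z.1, z.2] p)
      (eval ![t,y] (pderiv 0 p) • ContinuousLinearMap.fst ℝ ℝ ℝ + eval ![t,y] (pderiv 1 p) • ContinuousLinearMap.snd ℝ ℝ ℝ) (t, y) := by
  have h1 : HasFDerivAt (fun z : ℝ × ℝ => ![z.1, z.2])
      (ContinuousLinearMap.pi ![ContinuousLinearMap.fst ℝ ℝ ℝ, ContinuousLinearMap.snd ℝ ℝ ℝ]) (t, y) := by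
    rw [hasFDerivAt_pi']
    intro i
    fin_cases i
    · exact hasFDerivAt_fst
    · exact hasFDerivAt_snd
  have h2 := (kl_hasFDerivAt p ![t,y]).comp (t,y) h1
  have h3 : (eval ![t,y] (pderiv 0 p) • ContinuousLinearMap.fst ℝ ℝ ℝ + eval ![t,y] (pderiv 1 p) • ContinuousLinearMap.snd ℝ ℝ ℝ)
      = (klD p ![t, y]).comp (ContinuousLinearMap.pi ![ContinuousLinearMap.fst ℝ ℝ ℝ, ContinuousLinearMap.snd ℝ ℝ ℝ]) := by
    ext <;> simp [klD_apply, Fin.sum_univ_two]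
  rw [h3]
  exact h2

open MvPolynomial in
theorem kl_deriv_t (p : MvPolynomial (Fin 2) ℝ) (t y : ℝ) :
    HasDerivAt (fun t => eval ![t, y] p) (eval ![t,y] (pderiv 0 p)) t := by
  have h1 : HasDerivAt (fun t : ℝ => (t, y)) ((1:ℝ), (0:ℝ)) t := (hasDerivAt_id t).prodMk (hasDerivAt_const t y)
  have h2 := (kl_hasFDeriv2 p t y).comp_hasDerivAt t h1
  refine HasDerivAt.congr_deriv (f := fun t => eval ![t, y] p) h2 ?_
  simp

open MvPolynomial in
theorem kl_deriv_y (p : MvPolynomial (Fin 2) ℝ) (t y : ℝ) :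
    HasDerivAt (fun y => eval ![t, y] p) (eval ![t,y] (pderiv 1 p)) y := by
  have h1 : HasDerivAt (fun y : ℝ => (t, y)) ((0:ℝ), (1:ℝ)) y := (hasDerivAt_const y t).prodMk (hasDerivAt_id y)
  have h2 := (kl_hasFDeriv2 p t y).comp_hasDerivAt y h1
  refine HasDerivAt.congr_deriv (f := fun y => eval ![t, y] p) h2 ?_
  simp

open MvPolynomial in
/-- smoothed density -/
noncomputable def klJ (p : MvPolynomial (Fin 2) ℝ) (m : ℕ) (t y : ℝ) : ENNReal :=
  {z : ℝ × ℝ | |eval ![z.1, z.2] p| < 1 / (m + 1 : ℝ)}.indicator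
    (fun z => ENNReal.ofReal ((m + 1 : ℝ)) * ENNReal.ofReal |eval ![z.1, z.2] (pderiv 0 p)|) (t, y)

open MeasureTheory in
noncomputable def klM (p : MvPolynomial (Fin 2) ℝ) (R : ℝ) (t : ℝ) : ENNReal :=
  liminf (fun m : ℕ => ∫⁻ y in Set.Icc (-(R+1)) (R+1), klJ p m t y) atTop

open MvPolynomial in
theorem klJ_meas (p : MvPolynomial (Fin 2) ℝ) (m : ℕ) : Measurable (Function.uncurry (klJ p m)) := by
  have : Function.uncurry (klJ p m) = {z : ℝ × ℝ | |eval ![z.1, z.2] p| < 1 / (m + 1 : ℝ)}.indicator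
    (fun z => ENNReal.ofReal ((m + 1 : ℝ)) * ENNReal.ofReal |eval ![z.1, z.2] (pderiv 0 p)|) := by
    funext z; rfl
  rw [this]
  apply Measurable.indicator
  · exact ((kl_cont2 (pderiv 0 p)).abs.measurable.ennreal_ofReal).const_mul _
  · exact (isOpen_lt (kl_cont2 p).abs continuous_const).measurableSet

open MeasureTheory in
theorem klM_meas (p : MvPolynomial (Fin 2) ℝ) (R : ℝ) : Measurable (klM p R) := by
  apply Measurable.liminf
  intro m
  exact (klJ_meas p m).lintegral_prod_right'

open MvPolynomial MeasureTheory in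
theorem klJ_int (p : MvPolynomial (Fin 2) ℝ) (m : ℕ) (y : ℝ) :
    ∫⁻ t, klJ p m t y ≤ (p.totalDegree + 1 : ℕ) * 2 := by
  let u : Polynomial ℝ := aeval ![Polynomial.X, Polynomial.C y] p
  have hu : ∀ t, u.eval t = eval ![t, y] p := by
    intro t
    rw [← Polynomial.coe_evalRingHom, ← MvPolynomial.coe_aeval_eq_eval]
    simp only [u, RingHom.coe_coe]
    rw [MvPolynomial.aeval_def, MvPolynomial.aeval_def, ← MvPolynomial.coe_eval₂Hom, ← MvPolynomial.coe_eval₂Hom, ← RingHom.comp_apply]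
    congr 1
    apply MvPolynomial.ringHom_ext
    · intro r; simp
    · intro i; fin_cases i <;> simp
  have hdeg : u.natDegree ≤ p.totalDegree := by
    have := MvPolynomial.aeval_natDegree_le (m := p.totalDegree) (n := 1) p le_rfl ![Polynomial.X, Polynomial.C y] (by
      intro i; fin_cases i <;> simp)
    simpa using this
  have hud : ∀ t, u.derivative.eval t = eval ![t,y] (pderiv 0 p) := by
    intro t
    have h1 := u.hasDerivAt t
    have h2 := kl_deriv_t p t y
    have h3 : (fun t => u.eval t) = fun t => eval ![t, y] p := funext hu
    rw [h3] at h1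
    exact h1.unique h2
  have h1 := kl_uni u _ hdeg (1 / (m+1:ℝ))
  have hm : (0:ℝ) < m + 1 := by positivity
  have h2 : ∀ t, klJ p m t y = ENNReal.ofReal (m+1:ℝ) * {t | |u.eval t| < 1 / (m+1:ℝ)}.indicator (fun t => ENNReal.ofReal |u.derivative.eval t|) t := by
    intro t
    unfold klJ
    by_cases h : |eval ![t, y] p| < 1 / (m+1:ℝ)
    · rw [Set.indicator_of_mem (by exact h), Set.indicator_of_mem (by simpa [hu] using h), hud]
    · rw [Set.indicator_of_notMem (by exact h), Set.indicator_of_notMem (by simpa [hu] using h), mul_zero]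
  simp only [h2]
  rw [lintegral_const_mul']
  swap
  · exact ENNReal.ofReal_ne_top
  rw [lintegral_indicator (isOpen_lt (u.continuous.abs) continuous_const).measurableSet]
  calc _ ≤ ENNReal.ofReal (m+1:ℝ) * ((p.totalDegree + 1 : ℕ) * ENNReal.ofReal (2 * (1 / (m+1:ℝ)))) := by gcongr
    _ = (p.totalDegree + 1 : ℕ) * (ENNReal.ofReal (m+1:ℝ) * ENNReal.ofReal (2 * (1 / (m+1:ℝ)))) := by ring
    _ = _ := by
      rw [← ENNReal.ofReal_mul hm.le]
      congr 1
      have : (m+1:ℝ) * (2 * (1 / (m+1:ℝ))) = 2 := by field_simp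
      rw [this]; simp

open MvPolynomial MeasureTheory in
theorem klM_int (p : MvPolynomial (Fin 2) ℝ) (R : ℝ) : ∫⁻ t, klM p R t < ⊤ := by
  have h1 : ∫⁻ t, klM p R t ≤ liminf (fun m : ℕ => ∫⁻ t, ∫⁻ y in Set.Icc (-(R+1)) (R+1), klJ p m t y) atTop := by
    apply lintegral_liminf_le
    intro m
    exact (klJ_meas p m).lintegral_prod_right'
  have h2 : ∀ m, ∫⁻ t, ∫⁻ y in Set.Icc (-(R+1)) (R+1), klJ p m t y ≤
      ∫⁻ y in Set.Icc (-(R+1)) (R+1), ((p.totalDegree + 1 : ℕ) * 2 : ENNReal) := by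
    intro m
    rw [lintegral_lintegral_swap (klJ_meas p m).aemeasurable]
    exact lintegral_mono fun y => klJ_int p m y
  refine lt_of_le_of_lt h1 (lt_of_le_of_lt (liminf_le_liminf (Eventually.of_forall h2)) ?_)
  rw [liminf_const, lintegral_const]
  simp only [MeasurableSet.univ, Measure.restrict_apply, Set.univ_inter, Real.volume_Icc]
  exact ENNReal.mul_lt_top (ENNReal.mul_lt_top (ENNReal.natCast_lt_top _) (by simp)) ENNReal.ofReal_lt_top

open MvPolynomial MeasureTheory in
theorem klM_lower (p : MvPolynomial (Fin 2) ℝ) (R t y0 : ℝ) (h0 : eval ![t, y0] p = 0)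
    (hb : eval ![t,y0] (pderiv 1 p) ≠ 0) (hy : |y0| ≤ R) :
    ENNReal.ofReal |eval ![t,y0] (pderiv 0 p) / eval ![t,y0] (pderiv 1 p)| ≤ 2 * klM p R t := by
  set a := eval ![t,y0] (pderiv 0 p) with ha
  set b := eval ![t,y0] (pderiv 1 p) with hb'
  by_cases ha0 : a = 0
  · simp [ha0]
  have hbp : 0 < |b| := abs_pos.mpr hb
  have hap : 0 < |a| := abs_pos.mpr ha0
  have e1 : ∀ᶠ y in nhds y0, |eval ![t,y] p| ≤ 2 * |b| * |y - y0| := by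
    have h1 := (hasDerivAt_iff_isLittleO.mp (kl_deriv_y p t y0)).def hbp
    filter_upwards [h1] with y hy
    rw [h0, ← hb', Real.norm_eq_abs, Real.norm_eq_abs, smul_eq_mul, sub_zero] at hy
    calc |eval ![t,y] p| = |(eval ![t,y] p - (y-y0)*b) + (y-y0)*b| := by ring_nf
      _ ≤ |eval ![t,y] p - (y-y0)*b| + |(y-y0)*b| := abs_add_le _ _
      _ ≤ |b| * |y-y0| + |y-y0| * |b| := by rw [abs_mul (y-y0)]; gcongr
      _ = _ := by ring
  have e2 : ∀ᶠ y in nhds y0, |a| / 2 < |eval ![t,y] (pderiv 0 p)| := by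
    have hc : Continuous (fun y => |eval ![t,y] (pderiv 0 p)|) :=
      ((kl_cont2 (pderiv 0 p)).comp (Continuous.prodMk continuous_const continuous_id)).abs
    exact hc.continuousAt.eventually (lt_mem_nhds (show |a| / 2 < |a| by linarith))
  obtain ⟨ε, hε, hε'⟩ := Metric.eventually_nhds_iff.mp (e1.and e2)
  have hkey : ∀ᶠ m : ℕ in atTop, ENNReal.ofReal (|a / b| / 2) ≤ ∫⁻ y in Set.Icc (-(R+1)) (R+1), klJ p m t y := by
    have hlim : Tendsto (fun m : ℕ => 1 / (m + 1 : ℝ) * (1 / (2 * |b|))) atTop (nhds 0) := by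
      simpa using (tendsto_one_div_add_atTop_nhds_zero_nat (𝕜 := ℝ)).mul_const (1 / (2*|b|))
    filter_upwards [hlim.eventually (gt_mem_nhds (lt_min hε one_pos))] with m hm
    have hm0 : (0:ℝ) < m + 1 := by positivity
    set ρ := 1 / (m + 1 : ℝ) * (1 / (2 * |b|)) with hρ
    have hρ0 : 0 < ρ := by positivity
    have hsub : Metric.ball y0 ρ ⊆ Set.Icc (-(R+1)) (R+1) := by
      intro y hy'
      rw [Metric.mem_ball, Real.dist_eq] at hy'
      have h1 : ρ < 1 := hm.trans_le (min_le_right _ _)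
      have h2 := abs_lt.mp hy'
      have h3 := abs_le.mp hy
      constructor <;> linarith
    calc ENNReal.ofReal (|a / b| / 2) = ∫⁻ y in Metric.ball y0 ρ, ENNReal.ofReal ((m+1:ℝ) * (|a| / 2)) := by
          rw [setLIntegral_const, Real.volume_ball, ← ENNReal.ofReal_mul (by positivity)]
          congr 1
          rw [hρ, abs_div]
          field_simp
      _ ≤ ∫⁻ y in Metric.ball y0 ρ, klJ p m t y := by
          apply setLIntegral_mono
          · exact Measurable.of_uncurry_left (klJ_meas p m)
          intro y hy'
          have hd : dist y y0 < ε := (Metric.mem_ball.mp hy').trans (hm.trans_le (min_le_left _ _))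
          obtain ⟨h1, h2⟩ := hε' hd
          rw [Metric.mem_ball, Real.dist_eq] at hy'
          have h3 : |eval ![t, y] p| < 1 / (m+1:ℝ) := by
            calc _ ≤ _ := h1
              _ < 2 * |b| * ρ := by gcongr
              _ = _ := by rw [hρ]; field_simp
          unfold klJ
          rw [Set.indicator_of_mem (by exact h3), ← ENNReal.ofReal_mul hm0.le]
          apply ENNReal.ofReal_le_ofReal
          gcongr
      _ ≤ _ := lintegral_mono_set hsub
  have hfin : ENNReal.ofReal (|a / b| / 2) ≤ klM p R t := le_liminf_of_le (by isBoundedDefault) hkey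
  calc ENNReal.ofReal |a / b| = 2 * ENNReal.ofReal (|a / b| / 2) := by
        rw [show (2:ENNReal) = ENNReal.ofReal 2 by simp, ← ENNReal.ofReal_mul (by norm_num)]
        congr 1; ring
    _ ≤ _ := by gcongr

open Asymptotics in
theorem kl_slope {α : Type} (l : Filter α) (x y : α → ℝ) (hx : ∀ᶠ z in l, x z ≠ 0) (a b : ℝ) (hb : b ≠ 0)
    (ho : (fun z => a * x z + b * y z) =o[l] (fun z => (x z, y z))) :
    y =O[l] x ∧ Tendsto (fun z => y z / x z) l (nhds (-(a / b))) := by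
  have hbp : 0 < |b| := abs_pos.mpr hb
  have h1 : y =O[l] x := by
    apply IsBigO.of_bound ((|a| + |b| / 2) / (|b| / 2))
    filter_upwards [ho.def (show 0 < |b| / 2 by positivity)] with z hz
    simp only [Real.norm_eq_abs, Prod.norm_def] at hz ⊢
    have h2 : max |x z| |y z| ≤ |x z| + |y z| := max_le (by linarith [abs_nonneg (y z)]) (by linarith [abs_nonneg (x z)])
    have h3 : |b| * |y z| ≤ |a * x z + b * y z| + |a| * |x z| := by
      rw [← abs_mul, ← abs_mul]
      calc |b * y z| = |(a * x z + b * y z) - a * x z| := by ring_nf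
        _ ≤ _ := abs_sub _ _
    have h4 : |b| / 2 * max |x z| |y z| ≤ |b| / 2 * (|x z| + |y z|) := by gcongr
    rw [div_mul_eq_mul_div, le_div_iff₀ (by positivity)]
    nlinarith
  refine ⟨h1, ?_⟩
  have h2 : (fun z => a * x z + b * y z) =o[l] x :=
    ho.trans_isBigO ((isBigO_refl x l).prod_left h1)
  have h3 := h2.tendsto_div_nhds_zero
  have h4 := (h3.mul_const (1 / b)).sub_const (a / b)
  rw [zero_mul, zero_sub] at h4
  refine h4.congr' ?_
  filter_upwards [hx] with z hz
  field_simp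
  ring

open MvPolynomial in
theorem kl_type (P : MvPolynomial (Fin 2) ℝ) (t y : ℝ) (hne : ∃ y', eval ![t, y'] P ≠ 0) (h0 : eval ![t, y] P = 0) :
    ∃ k < P.totalDegree, eval ![t, y] ((pderiv 1)^[k] P) = 0 ∧ eval ![t, y] (pderiv 1 ((pderiv 1)^[k] P)) ≠ 0 := by
  let U : MvPolynomial (Fin 2) ℝ → Polynomial ℝ := fun p => aeval ![Polynomial.C t, Polynomial.X] p
  have hu : ∀ p s, (U p).eval s = eval ![t, s] p := by
    intro p s
    rw [← Polynomial.coe_evalRingHom, ← MvPolynomial.coe_aeval_eq_eval]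
    simp only [U, RingHom.coe_coe]
    rw [MvPolynomial.aeval_def, MvPolynomial.aeval_def, ← MvPolynomial.coe_eval₂Hom, ← MvPolynomial.coe_eval₂Hom, ← RingHom.comp_apply]
    congr 1
    apply MvPolynomial.ringHom_ext
    · intro r; simp
    · intro i; fin_cases i <;> simp
  have hd : ∀ p, (U p).derivative = U (pderiv 1 p) := by
    intro p
    apply Polynomial.funext
    intro s
    rw [hu]
    have h1 := (U p).hasDerivAt s
    have h3 : (fun s => (U p).eval s) = fun s => eval ![t, s] p := funext (hu p)
    rw [h3] at h1
    exact h1.unique (kl_deriv_y p t s)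
  have hdk : ∀ k p, Polynomial.derivative^[k] (U p) = U ((pderiv 1)^[k] p) := by
    intro k
    induction k with
    | zero => intro p; rfl
    | succ k ih => intro p; rw [Function.iterate_succ_apply, Function.iterate_succ_apply, hd, ih]
  have hU0 : U P ≠ 0 := by
    intro h
    obtain ⟨y', hy'⟩ := hne
    apply hy'
    rw [← hu, h]; simp
  set m := (U P).rootMultiplicity y with hm
  have hroot : (U P).IsRoot y := by rw [Polynomial.IsRoot, hu]; exact h0
  have hm1 : 0 < m := (Polynomial.rootMultiplicity_pos hU0).mpr hroot
  have hdeg : m ≤ P.totalDegree := by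
    have h1 := MvPolynomial.aeval_natDegree_le (m := P.totalDegree) (n := 1) P le_rfl ![Polynomial.C t, Polynomial.X] (by
      intro i; fin_cases i <;> simp)
    have h2 : m ≤ (U P).natDegree := by
      have h3 := Polynomial.count_roots (U P) (a := y)
      rw [hm, ← h3]
      exact (Multiset.count_le_card _ _).trans (Polynomial.card_roots' _)
    have h4 : (U P).natDegree ≤ P.totalDegree * 1 := h1
    omega
  refine ⟨m - 1, by omega, ?_, ?_⟩
  · rw [← hu, ← hdk]
    exact Polynomial.isRoot_iterate_derivative_of_lt_rootMultiplicity (by omega)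
  · rw [← Function.iterate_succ_apply' (f := fun p => pderiv 1 p), ← hu]
    have : (m - 1).succ = m := by omega
    rw [this]
    have h5 := hdk m P
    have h6 : U ((fun p => (pderiv 1) p)^[m] P) = U ((⇑(pderiv 1))^[m] P) := rfl
    rw [h6, ← h5, hm, Polynomial.eval_iterate_derivative_rootMultiplicity]
    simp only [nsmul_eq_mul]
    apply mul_ne_zero
    · exact_mod_cast Nat.factorial_ne_zero _
    · exact Polynomial.eval_divByMonic_pow_rootMultiplicity_ne_zero y hU0

theorem kl_iso_countable {E : Type} [TopologicalSpace E] [SecondCountableTopology E] (G : Set E) :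
    {x ∈ G | ¬ AccPt x (𝓟 G)}.Countable := by
  set I := {x ∈ G | ¬ AccPt x (𝓟 G)} with hI
  have hd : DiscreteTopology I := by
    rw [discreteTopology_subtype_iff]
    intro x hx
    have h1 := hx.2
    rw [AccPt, neBot_iff, not_not] at h1
    rw [eq_bot_iff, ← h1]
    exact inf_le_inf_left _ (principal_mono.mpr fun y hy => hy.1)
  have : Countable I := TopologicalSpace.separableSpace_iff_countable.mp inferInstance
  exact this

open MvPolynomial in
theorem kl_S0_countable (P : MvPolynomial (Fin 2) ℝ) (hP : P ≠ 0) : {t | ∀ y, eval ![t, y] P = 0}.Countable := by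
  obtain ⟨s, hs⟩ := kl_exists_ne P hP
  let u : Polynomial ℝ := aeval ![Polynomial.X, Polynomial.C (s 1)] P
  have hu : ∀ t, u.eval t = eval ![t, s 1] P := by
    intro t
    rw [← Polynomial.coe_evalRingHom, ← MvPolynomial.coe_aeval_eq_eval]
    simp only [u, RingHom.coe_coe]
    rw [MvPolynomial.aeval_def, MvPolynomial.aeval_def, ← MvPolynomial.coe_eval₂Hom, ← MvPolynomial.coe_eval₂Hom, ← RingHom.comp_apply]
    congr 1
    apply MvPolynomial.ringHom_ext
    · intro r; simp
    · intro i; fin_cases i <;> simp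
  have hu0 : u ≠ 0 := by
    intro h
    apply hs
    have h1 := hu (s 0)
    rw [h, Polynomial.eval_zero] at h1
    rw [h1]
    congr 2
    funext i; fin_cases i <;> rfl
  refine Set.Countable.mono ?_ (u.roots.toFinset.countable_toSet)
  intro t ht
  simp only [Finset.mem_coe, Multiset.mem_toFinset]
  rw [Polynomial.mem_roots hu0, Polynomial.IsRoot, hu]
  exact ht _

open MvPolynomial Asymptotics in
/-- differentiation along the selected curve -/
theorem kl_curve {τ : Type} [Fintype τ] (f : MvPolynomial τ ℝ) (p : τ → MvPolynomial (Fin 2) ℝ)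
    (G : Set (ℝ × (τ → ℝ))) (hGf : ∀ z ∈ G, eval z.2 f = z.1) (hGp : ∀ z ∈ G, ∀ i, eval ![z.1, z.2 i] (p i) = 0)
    (hGinj : ∀ z ∈ G, ∀ z' ∈ G, z.1 = z'.1 → z = z')
    (x : ℝ × (τ → ℝ)) (hx : x ∈ G) (hb : ∀ i, eval ![x.1, x.2 i] (pderiv 1 (p i)) ≠ 0)
    (hacc : AccPt x (𝓟 G)) :
    ∑ i, eval x.2 (pderiv i f) * (-(eval ![x.1, x.2 i] (pderiv 0 (p i)) / eval ![x.1, x.2 i] (pderiv 1 (p i)))) = 1 := by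
  have hne : NeBot (nhdsWithin x {x}ᶜ ⊓ 𝓟 G) := hacc
  set l := nhdsWithin x {x}ᶜ ⊓ 𝓟 G with hl
  have hlx : l ≤ nhds x := inf_le_left.trans nhdsWithin_le_nhds
  have hlG : ∀ᶠ z in l, z ∈ G := by
    have : G ∈ l := mem_inf_of_right (mem_principal_self G)
    exact this
  have hlne : ∀ᶠ z in l, z ≠ x := by
    have : {x}ᶜ ∈ l := mem_inf_of_left self_mem_nhdsWithin
    exact this
  have hdt : ∀ᶠ z in l, z.1 - x.1 ≠ 0 := by
    filter_upwards [hlG, hlne] with z hz hzx h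
    exact hzx (hGinj z hz x hx (by linarith))
  have hsl : ∀ i, (fun z : ℝ × (τ → ℝ) => z.2 i - x.2 i) =O[l] (fun z => z.1 - x.1) ∧
      Tendsto (fun z : ℝ × (τ → ℝ) => (z.2 i - x.2 i) / (z.1 - x.1)) l
        (nhds (-(eval ![x.1, x.2 i] (pderiv 0 (p i)) / eval ![x.1, x.2 i] (pderiv 1 (p i))))) := by
    intro i
    apply kl_slope l _ _ hdt _ _ (hb i)
    have h1 := (kl_hasFDeriv2 (p i) x.1 (x.2 i)).isLittleO
    have h2 : Tendsto (fun z : ℝ × (τ → ℝ) => (z.1, z.2 i)) l (nhds (x.1, x.2 i)) := by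
      have hc : Continuous (fun z : ℝ × (τ → ℝ) => (z.1, z.2 i)) := by fun_prop
      exact (hc.tendsto x).mono_left hlx
    have h3 := (h1.comp_tendsto h2).neg_left
    refine h3.congr' ?_ ?_
    · filter_upwards [hlG] with z hz
      simp [hGp z hz i, hGp x hx i]
    · exact Eventually.of_forall fun z => by simp
  have hO : (fun z : ℝ × (τ → ℝ) => z.2 - x.2) =O[l] (fun z => z.1 - x.1) := by
    rw [isBigO_pi]
    exact fun i => (hsl i).1
  have h1 := (kl_hasFDerivAt f x.2).isLittleO
  have h2 : Tendsto (fun z : ℝ × (τ → ℝ) => z.2) l (nhds x.2) :=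
    (continuous_snd.tendsto x).mono_left hlx
  have h3 := ((h1.comp_tendsto h2).trans_isBigO hO).tendsto_div_nhds_zero
  have h4 : Tendsto (fun z : ℝ × (τ → ℝ) => 1 - ∑ i, eval x.2 (pderiv i f) * ((z.2 i - x.2 i) / (z.1 - x.1))) l
      (nhds (1 - ∑ i, eval x.2 (pderiv i f) * (-(eval ![x.1, x.2 i] (pderiv 0 (p i)) / eval ![x.1, x.2 i] (pderiv 1 (p i)))))) := by
    apply tendsto_const_nhds.sub
    apply tendsto_finsetSum
    intro i _
    exact ((hsl i).2).const_mul _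
  have h5 : Tendsto (fun z : ℝ × (τ → ℝ) => 1 - ∑ i, eval x.2 (pderiv i f) * ((z.2 i - x.2 i) / (z.1 - x.1))) l (nhds 0) := by
    refine h3.congr' ?_
    filter_upwards [hlG, hdt] with z hz hzt
    simp only [Function.comp, klD_apply, hGf z hz, hGf x hx, Pi.sub_apply]
    rw [sub_div, div_self hzt, Finset.sum_div]
    congr 1
    exact Finset.sum_congr rfl fun i _ => by ring
  have := tendsto_nhds_unique h4 h5
  linarith

open MvPolynomial MeasureTheory in
/-- Core KL statement. -/
theorem kl_core {τ : Type} [Fintype τ] (f g : MvPolynomial τ ℝ)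
    (hg : ∀ w, 0 ≤ eval w g) (hb : ∀ C, Bornology.IsBounded {w | eval w g ≤ C}) :
    ∃ (ρ : ℝ → ENNReal) (S : Set ℝ), Measurable ρ ∧ ∫⁻ t, ρ t < ⊤ ∧ S.Countable ∧
      ∀ w, eval w g = 0 → eval w f ∉ S →
        1 ≤ ρ (eval w f) * ENNReal.ofReal (Real.sqrt (∑ i, (eval w (pderiv i f))^2)) := by
  classical
  let h : MvPolynomial τ ℝ := ∑ i, (pderiv i f)^2
  have hev : ∀ w, eval w h = ∑ i, (eval w (pderiv i f))^2 := fun w => by simp [h]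
  have hh : ∀ w, 0 ≤ eval w h := fun w => by rw [hev]; exact Finset.sum_nonneg fun i _ => sq_nonneg _
  obtain ⟨P, hP0, hP⟩ := kl_selection f g h hg hh hb
  obtain ⟨R, hR⟩ := (hb 0).exists_norm_le
  have hRi : ∀ w, eval w g = 0 → ∀ i, |w i| ≤ R := fun w hw i => (norm_le_pi_norm w i).trans (hR w hw.le)
  -- selection function
  have hsel : ∀ t, ∃ w, (∃ w, eval w g = 0 ∧ eval w f = t) → eval w g = 0 ∧ eval w f = t ∧
      (∀ w', eval w' g = 0 → eval w' f = t → eval w h ≤ eval w' h) ∧ ∀ i, eval ![t, w i] P = 0 := by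
    intro t
    by_cases ht : ∃ w, eval w g = 0 ∧ eval w f = t
    · obtain ⟨w, hw⟩ := hP t ht
      exact ⟨w, fun _ => hw⟩
    · exact ⟨0, fun h => absurd h ht⟩
  choose w hw using hsel
  set D := P.totalDegree with hD
  let G : (τ → Fin D) → Set (ℝ × (τ → ℝ)) := fun κ =>
    {z | (∃ w, eval w g = 0 ∧ eval w f = z.1) ∧ z.2 = w z.1 ∧ ∀ i, eval ![z.1, z.2 i] ((pderiv 1)^[(κ i : ℕ)] P) = 0 ∧
      eval ![z.1, z.2 i] (pderiv 1 ((pderiv 1)^[(κ i : ℕ)] P)) ≠ 0}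
  let S : Set ℝ := {t | ∀ y, eval ![t, y] P = 0} ∪ ⋃ κ, Prod.fst '' {x ∈ G κ | ¬ AccPt x (𝓟 (G κ))}
  let ρ : ℝ → ENNReal := fun t => ∑ _i : τ, ∑ k ∈ Finset.range D, 2 * klM ((pderiv 1)^[k] P) R t
  refine ⟨ρ, S, ?_, ?_, ?_, ?_⟩
  · refine Finset.measurable_sum _ fun i _ => Finset.measurable_sum _ fun k _ => (klM_meas _ R).const_mul _
  · have hm : ∀ k ∈ Finset.range D, Measurable (fun t => 2 * klM ((pderiv 1)^[k] P) R t) := fun k _ => (klM_meas _ R).const_mul _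
    simp only [ρ]
    rw [lintegral_finsetSum _ (fun i _ => Finset.measurable_sum _ hm)]
    refine ENNReal.sum_lt_top.mpr fun i _ => ?_
    rw [lintegral_finsetSum _ hm]
    refine ENNReal.sum_lt_top.mpr fun k _ => ?_
    rw [lintegral_const_mul _ (klM_meas _ R)]
    exact ENNReal.mul_lt_top (by simp) (klM_int _ R)
  · apply (kl_S0_countable P hP0).union
    apply Set.countable_iUnion
    intro κ
    exact (kl_iso_countable _).image _
  intro w0 hw0 hS
  set t := eval w0 f with ht
  have hatt : ∃ w, eval w g = 0 ∧ eval w f = t := ⟨w0, hw0, rfl⟩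
  obtain ⟨hwg, hwf, hwmin, hwP⟩ := hw t hatt
  simp only [S, Set.mem_union, not_or, Set.mem_setOf_eq, not_forall, Set.mem_iUnion, not_exists] at hS
  obtain ⟨⟨y', hy'⟩, hS2⟩ := hS
  have htype := fun i => kl_type P t (w t i) ⟨y', hy'⟩ (hwP i)
  choose k hkD hk0 hk1 using htype
  let κ : τ → Fin D := fun i => ⟨k i, hkD i⟩
  have hxG : (t, w t) ∈ G κ := ⟨hatt, rfl, fun i => ⟨hk0 i, hk1 i⟩⟩
  have hacc : AccPt (t, w t) (𝓟 (G κ)) := by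
    by_contra hcon
    exact hS2 κ ⟨(t, w t), ⟨hxG, hcon⟩, rfl⟩
  have hsum := kl_curve f (fun i => (pderiv 1)^[k i] P) (G κ)
    (fun z hz => by rw [hz.2.1]; exact (hw z.1 hz.1).2.1)
    (fun z hz i => (hz.2.2 i).1)
    (fun z hz z' hz' he => Prod.ext he (by rw [hz.2.1, hz'.2.1, he])) (t, w t) hxG hk1 hacc
  simp only at hsum
  set v : τ → ℝ := fun i => eval ![t, w t i] (pderiv 0 ((pderiv 1)^[k i] P)) / eval ![t, w t i] (pderiv 1 ((pderiv 1)^[k i] P)) with hv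
  set s := Real.sqrt (∑ i, (eval (w t) (pderiv i f))^2) with hs
  have hs0 : 0 ≤ s := Real.sqrt_nonneg _
  have hle : ∀ i, |eval (w t) (pderiv i f)| ≤ s := by
    intro i
    apply Real.abs_le_sqrt
    exact Finset.single_le_sum (f := fun i => (eval (w t) (pderiv i f))^2) (fun j _ => sq_nonneg _) (Finset.mem_univ i)
  have h1 : (1:ℝ) ≤ (∑ i, |v i|) * s := by
    rw [← hsum, Finset.sum_mul]
    apply Finset.sum_le_sum
    intro i _
    calc _ ≤ |eval (w t) (pderiv i f) * (-(v i))| := le_abs_self _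
      _ = |v i| * |eval (w t) (pderiv i f)| := by rw [abs_mul, abs_neg, mul_comm]
      _ ≤ _ := by gcongr; exact hle i
  have h2 : ENNReal.ofReal (∑ i, |v i|) ≤ ρ t := by
    rw [ENNReal.ofReal_sum_of_nonneg fun i _ => abs_nonneg _]
    apply Finset.sum_le_sum
    intro i _
    refine (klM_lower _ R t (w t i) (hk0 i) (hk1 i) (hRi _ hwg i)).trans ?_
    exact Finset.single_le_sum (f := fun k => 2 * klM ((pderiv 1)^[k] P) R t) (fun j _ => zero_le) (Finset.mem_range.mpr (hkD i))
  have h3 : s ≤ Real.sqrt (∑ i, (eval w0 (pderiv i f))^2) := by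
    apply Real.sqrt_le_sqrt
    have := hwmin w0 hw0 rfl
    rwa [hev, hev] at this
  calc (1:ENNReal) = ENNReal.ofReal 1 := by simp
    _ ≤ ENNReal.ofReal ((∑ i, |v i|) * s) := ENNReal.ofReal_le_ofReal h1
    _ = ENNReal.ofReal (∑ i, |v i|) * ENNReal.ofReal s := ENNReal.ofReal_mul (Finset.sum_nonneg fun i _ => abs_nonneg _)
    _ ≤ _ := by gcongr

open MvPolynomial in
theorem kl_slab {τ : Type} [Fintype τ] (f q : MvPolynomial τ ℝ) (hq : ∀ w, 0 ≤ eval w q)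
    (hb : ∀ C, Bornology.IsBounded {w | eval w q ≤ C}) (a : τ → ℝ) (l u : ℝ)
    (hl : ∀ w, eval w q = 0 → eval w f ≠ l) (hu : ∀ w, eval w q = 0 → eval w f ≠ u)
    (z0 : τ → ℝ) (hz0 : eval z0 q = 0) (hz1 : l < eval z0 f) (hz2 : eval z0 f < u) :
    ∃ K0 : ℝ, ∀ K ≥ K0, ∃ w, l < eval w f ∧ eval w f < u ∧ ∀ i, a i = w i + K * eval w (pderiv i q) * (1/2) := by
  classical
  set Bd := {w : τ → ℝ | eval w q ≤ 1} ∩ ({w | eval w f = l} ∪ {w | eval w f = u}) with hBd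
  have hBc : IsCompact Bd := by
    apply Metric.isCompact_of_isClosed_isBounded
    · exact (isClosed_le (kl_continuous q) continuous_const).inter
        ((isClosed_eq (kl_continuous f) continuous_const).union (isClosed_eq (kl_continuous f) continuous_const))
    · exact (hb 1).subset Set.inter_subset_left
  have hδ : ∃ δ > 0, ∀ w, (eval w f = l ∨ eval w f = u) → δ ≤ eval w q := by
    rcases Bd.eq_empty_or_nonempty with he | hne
    · refine ⟨1, one_pos, fun w hw => ?_⟩
      by_contra hcon
      have : w ∈ Bd := ⟨(not_le.mp hcon).le, hw⟩
      rw [he] at this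
      exact this
    · obtain ⟨w0, hw0, hmin⟩ := hBc.exists_isMinOn hne (kl_continuous q).continuousOn
      have hpos : 0 < eval w0 q := by
        refine lt_of_le_of_ne (hq w0) fun h => ?_
        rcases hw0.2 with h' | h'
        · exact hl w0 h.symm h'
        · exact hu w0 h.symm h'
      refine ⟨min 1 (eval w0 q), lt_min one_pos hpos, fun w hw => ?_⟩
      by_cases h1 : eval w q ≤ 1
      · exact (min_le_right _ _).trans (hmin ⟨h1, hw⟩)
      · exact (min_le_left _ _).trans (not_le.mp h1).le
  obtain ⟨δ, hδ0, hδ⟩ := hδ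
  set A := ∑ i, (z0 i - a i)^2 with hA
  have hA0 : 0 ≤ A := Finset.sum_nonneg fun i _ => sq_nonneg _
  refine ⟨max 1 ((A + 1) / δ), fun K hK => ?_⟩
  have hK1 : 1 ≤ K := (le_max_left _ _).trans hK
  have hK2 : A + 1 ≤ K * δ := by
    have := (le_max_right _ _).trans hK
    rwa [div_le_iff₀ hδ0] at this
  let Φ : MvPolynomial τ ℝ := ∑ i, (X i - C (a i))^2 + C K * q
  have hΦ : ∀ w, eval w Φ = ∑ i, (w i - a i)^2 + K * eval w q := by
    intro w; simp [Φ]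
  set S := {w : τ → ℝ | eval w q ≤ A + 1} ∩ ({w | l ≤ eval w f} ∩ {w | eval w f ≤ u}) with hS
  have hSc : IsCompact S := by
    apply Metric.isCompact_of_isClosed_isBounded
    · exact (isClosed_le (kl_continuous q) continuous_const).inter
        ((isClosed_le continuous_const (kl_continuous f)).inter (isClosed_le (kl_continuous f) continuous_const))
    · exact (hb _).subset Set.inter_subset_left
  have hzS : z0 ∈ S := ⟨by simp only [Set.mem_setOf_eq, hz0]; linarith, hz1.le, hz2.le⟩
  obtain ⟨w, hwS, hw⟩ := hSc.exists_isMinOn ⟨z0, hzS⟩ (kl_continuous Φ).continuousOn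
  have h1 : eval w Φ ≤ eval z0 Φ := hw hzS
  rw [hΦ, hΦ, hz0, mul_zero, add_zero, ← hA] at h1
  have h2 : 0 ≤ ∑ i, (w i - a i)^2 := Finset.sum_nonneg fun i _ => sq_nonneg _
  have h3 : K * eval w q ≤ A := by linarith
  have h4 : eval w q ≤ A := by nlinarith [hq w]
  have h5 : eval w q < δ := by
    by_contra hcon
    push Not at hcon
    nlinarith
  have h6 : l < eval w f := lt_of_le_of_ne hwS.2.1 fun h => absurd (hδ w (Or.inl h.symm)) (not_le.mpr h5)
  have h7 : eval w f < u := lt_of_le_of_ne hwS.2.2 fun h => absurd (hδ w (Or.inr h)) (not_le.mpr h5)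
  refine ⟨w, h6, h7, fun i => ?_⟩
  have hloc : IsLocalMin (fun x : τ → ℝ => eval x Φ) w := by
    have e1 : ∀ᶠ x in nhds w, eval x q < A + 1 := (kl_continuous q).continuousAt.eventually (gt_mem_nhds (show eval w q < A + 1 by linarith))
    have e2 : ∀ᶠ x in nhds w, eval x f < u := (kl_continuous f).continuousAt.eventually (gt_mem_nhds h7)
    have e3 : ∀ᶠ x in nhds w, l < eval x f := (kl_continuous f).continuousAt.eventually (lt_mem_nhds h6)
    filter_upwards [e1, e2, e3] with x h1 h2 h3
    exact hw ⟨h1.le, h3.le, h2.le⟩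
  have hd := kl_pderiv_zero_of_min Φ w hloc i
  have hsum : eval w (pderiv i (∑ i, (X i - C (a i))^2 : MvPolynomial τ ℝ)) = 2 * (w i - a i) := by
    rw [map_sum, map_sum, Finset.sum_eq_single i]
    · simp [pow_two]; ring
    · intro b _ hb
      simp [pow_two, pderiv_X, Pi.single_apply, hb]
    · simp
  simp only [Φ, map_add, hsum] at hd
  simp at hd
  linear_combination (-1/2) * hd

open MvPolynomial in
theorem kl_finite {τ : Type} [Fintype τ] (f q : MvPolynomial τ ℝ) (hq : ∀ w, 0 ≤ eval w q)
    (hb : ∀ C, Bornology.IsBounded {w | eval w q ≤ C})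
    (hT : {t | ∃ w, eval w q = 0 ∧ eval w f = t}.Countable) :
    {t | ∃ w, eval w q = 0 ∧ eval w f = t}.Finite := by
  classical
  set T := {t | ∃ w, eval w q = 0 ∧ eval w f = t} with hTdef
  let e : Option (Option τ) → MvPolynomial (Option τ) ℝ := fun o =>
    o.elim (rename some f) (fun o => o.elim (X none) (fun i => X (some i) + X none * rename some (pderiv i q) * C (1/2)))
  obtain ⟨Q, hQ0, hQ⟩ := kl_alg_dep (α := Option (Option τ)) (β := Option τ) (by simp) e
  set QQ := optionEquivLeft ℝ _ Q with hQQ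
  have hQQ0 : QQ ≠ 0 := by simpa [hQQ] using hQ0
  set c := QQ.leadingCoeff with hc
  have hc0 : c ≠ 0 := by simpa [hc] using hQQ0
  set cc := optionEquivLeft ℝ _ c with hcc
  have hcc0 : cc ≠ 0 := by simpa [hcc] using hc0
  obtain ⟨a, ha⟩ := kl_exists_ne cc.leadingCoeff (by simpa using hcc0)
  let u : Polynomial ℝ := cc.map (eval a)
  have hu0 : u ≠ 0 := by
    intro h
    apply ha
    have := congrArg (fun p => p.coeff cc.natDegree) h
    simpa [u] using this
  have huK : ∀ K, eval (fun o : Option τ => o.elim K a) c = u.eval K := by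
    intro K
    have := optionEquivLeft_elim_eval ℝ τ a K c
    rw [this]
  by_contra hinf
  obtain ⟨Fs, hFsT, hcard⟩ := Set.Infinite.exists_subset_card_eq hinf (QQ.natDegree + 1)
  obtain ⟨U, hU, hdisj⟩ := Fs.finite_toSet.t2_separation
  have hstep : ∀ t ∈ Fs, ∃ K0 : ℝ, ∀ K ≥ K0, ∃ w, eval w f ∈ U t ∧ ∀ i, a i = w i + K * eval w (pderiv i q) * (1/2) := by
    intro t ht
    obtain ⟨z0, hz0, hz0t⟩ := hFsT ht
    obtain ⟨l', u', htlu, hsub⟩ := mem_nhds_iff_exists_Ioo_subset.mp ((hU t).2.mem_nhds (hU t).1)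
    have hd := hT.dense_compl ℝ
    obtain ⟨l, hlT, hl1, hl2⟩ := hd.exists_between htlu.1
    obtain ⟨v, hvT, hv1, hv2⟩ := hd.exists_between htlu.2
    obtain ⟨K0, hK0⟩ := kl_slab f q hq hb a l v (fun w hw he => hlT ⟨w, hw, he⟩) (fun w hw he => hvT ⟨w, hw, he⟩) z0 hz0
      (by rw [hz0t]; exact hl2) (by rw [hz0t]; exact hv1)
    refine ⟨K0, fun K hK => ?_⟩
    obtain ⟨w, h1, h2, h3⟩ := hK0 K hK
    exact ⟨w, hsub ⟨hl1.trans h1, h2.trans hv2⟩, h3⟩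
  choose! K0 hK0 using hstep
  obtain ⟨M, hM⟩ := (Fs.image K0).bddAbove
  obtain ⟨K, hKM, hKroot⟩ := (Set.Ici_infinite M).exists_notMem_finset u.roots.toFinset
  have hKu : u.eval K ≠ 0 := by
    intro h
    apply hKroot
    rw [Multiset.mem_toFinset, Polynomial.mem_roots hu0]; exact h
  have hex : ∀ t ∈ Fs, ∃ w, eval w f ∈ U t ∧ ∀ i, a i = w i + K * eval w (pderiv i q) * (1/2) := by
    intro t ht
    exact hK0 t ht K (le_trans (hM (Finset.mem_coe.mpr (Finset.mem_image_of_mem K0 ht))) hKM)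
  choose! w hwU hwcr using hex
  let p : Polynomial ℝ := QQ.map (eval (fun o : Option τ => o.elim K a))
  have hp0 : p ≠ 0 := by
    intro h
    apply hKu
    rw [← huK]
    have := congrArg (fun p => p.coeff QQ.natDegree) h
    simpa [p] using this
  have hroot : ∀ t ∈ Fs, p.eval (eval (w t) f) = 0 := by
    intro t ht
    have h1 := optionEquivLeft_elim_eval ℝ (Option τ) (fun o : Option τ => o.elim K a) (eval (w t) f) Q
    have h2 := hQ (fun o : Option τ => o.elim K (w t))
    have h3 : p.eval (eval (w t) f) = eval (fun a_1 => eval (fun o : Option τ => o.elim K (w t)) (e a_1)) Q := by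
      rw [← h1]
      congr 2
      have hrn : ∀ p : MvPolynomial τ ℝ, eval (fun o : Option τ => o.elim K (w t)) (rename some p) = eval (w t) p := by
        intro p; rw [eval_rename]; rfl
      funext o
      rcases o with _ | o
      · simp only [e, Option.elim_none, hrn]
      rcases o with _ | i
      · simp [e]
      · simp only [e, Option.elim_some, Option.elim_none, map_add, map_mul, eval_X, eval_C, hrn]
        exact hwcr t ht i
    rw [h3, h2]
  have hinj : Set.InjOn (fun t => eval (w t) f) Fs := by
    intro s hs t ht he
    by_contra hne
    have := hdisj hs ht hne
    simp only at he
    exact Set.disjoint_left.mp this (hwU s hs) (he ▸ hwU t ht)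
  have h1 : (Fs.image (fun t => eval (w t) f)) ⊆ p.roots.toFinset := by
    intro y hy
    obtain ⟨t, ht, rfl⟩ := Finset.mem_image.mp hy
    rw [Multiset.mem_toFinset, Polynomial.mem_roots hp0]
    exact hroot t ht
  have h2 := Finset.card_le_card h1
  rw [Finset.card_image_of_injOn hinj, hcard] at h2
  have h3 : p.roots.toFinset.card ≤ p.natDegree := (Multiset.toFinset_card_le _).trans (Polynomial.card_roots' _)
  have h4 : p.natDegree ≤ QQ.natDegree := Polynomial.natDegree_map_le
  omega

open MvPolynomial in
theorem kl_pderiv_rename_some {σ : Type} (F : MvPolynomial σ ℝ) (i : σ) :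
    pderiv (some i) (rename some F) = rename some (pderiv i F) :=
  pderiv_rename (Option.some_injective σ) i F

open MvPolynomial in
theorem kl_pderiv_rename_none {σ : Type} (F : MvPolynomial σ ℝ) :
    pderiv none (rename some F) = 0 := by
  classical
  apply pderiv_eq_zero_of_notMem_vars
  intro h
  have := vars_rename some F h
  simp at this

open MvPolynomial MeasureTheory in
theorem kl_ball {σ : Type} [Fintype σ] (F : MvPolynomial σ ℝ) (R : ℝ) :
    ∃ Ω : ℝ → ℝ, Monotone Ω ∧ Continuous Ω ∧
      (∀ a b η : ℝ, a ≤ b → 0 ≤ η → (∀ t ∈ Set.Ioo a b, ∃ y : σ → ℝ, ∑ i, y i ^ 2 ≤ R^2 ∧ eval y F = t ∧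
        Real.sqrt (∑ i, (eval y (pderiv i F))^2) ≤ η) → b - a ≤ η * (Ω b - Ω a)) ∧
      {t | ∃ y : σ → ℝ, ∑ i, y i ^ 2 ≤ R^2 ∧ (∀ i, eval y (pderiv i F) = 0) ∧ eval y F = t}.Finite := by
  classical
  let f : MvPolynomial (Option σ) ℝ := rename some F
  let g : MvPolynomial (Option σ) ℝ := ((∑ o : Option σ, (X o)^2) - C (R^2))^2
  have hgev : ∀ w, eval w g = ((∑ o, w o ^ 2) - R^2)^2 := fun w => by simp [g]
  have hg : ∀ w, 0 ≤ eval w g := fun w => by rw [hgev]; positivity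
  have hb : ∀ C, Bornology.IsBounded {w | eval w g ≤ C} := by
    intro C
    rw [isBounded_iff_forall_norm_le]
    refine ⟨2 + C + R^2, fun w hw => ?_⟩
    simp only [Set.mem_setOf_eq, hgev] at hw
    have hC : 0 ≤ C := le_trans (by positivity) hw
    rw [pi_norm_le_iff_of_nonneg (by positivity)]
    intro o
    have h1 : w o ^ 2 ≤ ∑ o, w o ^ 2 := Finset.single_le_sum (f := fun o => w o ^ 2) (fun j _ => sq_nonneg _) (Finset.mem_univ o)
    have h2 : |w o| ^ 2 = w o ^ 2 := sq_abs _
    rw [Real.norm_eq_abs]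
    nlinarith [sq_nonneg ((∑ o, w o ^ 2) - R^2 - 1), sq_nonneg (|w o| - 1)]
  have hfev : ∀ w : Option σ → ℝ, eval w f = eval (fun i => w (some i)) F := by
    intro w; simp only [f, eval_rename]; rfl
  have hgrad : ∀ w : Option σ → ℝ, ∑ o, (eval w (pderiv o f))^2 = ∑ i, (eval (fun i => w (some i)) (pderiv i F))^2 := by
    intro w
    rw [Fintype.sum_option]
    simp only [f, kl_pderiv_rename_none, kl_pderiv_rename_some, map_zero, eval_rename]
    simp [Function.comp_def]
  -- lifting
  let lift : (σ → ℝ) → Option σ → ℝ := fun y o => o.elim (Real.sqrt (R^2 - ∑ i, y i ^ 2)) y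
  have hliftg : ∀ y, ∑ i, y i ^ 2 ≤ R^2 → eval (lift y) g = 0 := by
    intro y hy
    rw [hgev, Fintype.sum_option]
    simp only [lift, Option.elim_none, Option.elim_some]
    rw [Real.sq_sqrt (by linarith)]
    ring
  have hliftf : ∀ y, eval (lift y) f = eval y F := fun y => by rw [hfev]; rfl
  obtain ⟨ρ, S, hρm, hρi, hSc, hρ⟩ := kl_core f g hg hb
  have hintg : Integrable (fun t => (ρ t).toReal) := integrable_toReal_of_lintegral_ne_top hρm.aemeasurable hρi.ne
  have hii : ∀ a b, IntervalIntegrable (fun t => (ρ t).toReal) volume a b := fun a b => hintg.intervalIntegrable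
  refine ⟨fun s => ∫ t in (0:ℝ)..s, (ρ t).toReal, ?_, ?_, ?_, ?_⟩
  · intro a b hab
    have h1 := intervalIntegral.integral_interval_sub_left (hii 0 b) (hii 0 a)
    have h2 : 0 ≤ ∫ t in a..b, (ρ t).toReal := intervalIntegral.integral_nonneg hab fun t _ => ENNReal.toReal_nonneg
    simp only
    linarith
  · exact intervalIntegral.continuous_primitive hii 0
  · intro a b η hab hη hy
    simp only
    rw [intervalIntegral.integral_interval_sub_left (hii 0 b) (hii 0 a), ← intervalIntegral.integral_const_mul]
    have h1 : b - a = ∫ t in a..b, (1:ℝ) := by simp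
    rw [h1]
    apply intervalIntegral.integral_mono_ae_restrict hab
    · exact intervalIntegrable_const
    · exact (hii a b).const_mul η
    · have e1 : ∀ᵐ t, ρ t < ⊤ := ae_lt_top hρm hρi.ne
      have e2 : ∀ᵐ t : ℝ, t ∉ S := by
        rw [ae_iff]; simpa using hSc.measure_zero volume
      have e3 : ∀ᵐ t : ℝ, t ∉ ({a, b} : Set ℝ) := by
        rw [ae_iff]; simp only [not_not, Set.setOf_mem_eq]; exact (Set.toFinite ({a, b} : Set ℝ)).measure_zero volume
      filter_upwards [ae_restrict_of_ae e1, ae_restrict_of_ae e2, ae_restrict_of_ae e3, ae_restrict_mem measurableSet_Icc] with t h1 h2 h3 h4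
      have ht : t ∈ Set.Ioo a b := by
        simp at h3
        exact ⟨lt_of_le_of_ne h4.1 (Ne.symm h3.1), lt_of_le_of_ne h4.2 h3.2⟩
      obtain ⟨y, hyR, hyt, hyη⟩ := hy t ht
      have h5 := hρ (lift y) (hliftg y hyR) (by rw [hliftf, hyt]; exact h2)
      rw [hgrad, hliftf, hyt] at h5
      have h6 : (1:ENNReal) ≤ ρ t * ENNReal.ofReal η := h5.trans (by gcongr; exact hyη)
      have h7 := ENNReal.toReal_mono (ENNReal.mul_ne_top h1.ne ENNReal.ofReal_ne_top) h6
      rw [ENNReal.toReal_mul, ENNReal.toReal_ofReal hη, ENNReal.toReal_one] at h7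
      linarith
  · let q : MvPolynomial (Option σ) ℝ := g + ∑ o, (pderiv o f)^2
    have hqev : ∀ w, eval w q = eval w g + ∑ o, (eval w (pderiv o f))^2 := fun w => by simp [q]
    have hs0 : ∀ w, 0 ≤ ∑ o, (eval w (pderiv o f))^2 := fun w => Finset.sum_nonneg fun i _ => sq_nonneg _
    have hq : ∀ w, 0 ≤ eval w q := fun w => by rw [hqev]; exact add_nonneg (hg w) (hs0 w)
    have hfin := kl_finite f q hq (fun C => (hb C).subset fun w hw => by
        simp only [Set.mem_setOf_eq] at hw ⊢
        rw [hqev] at hw; linarith [hs0 w]) (hSc.mono (by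
        rintro t ⟨w, hw, rfl⟩
        by_contra hcon
        rw [hqev] at hw
        have h1 : eval w g = 0 := le_antisymm (by linarith [hs0 w]) (hg w)
        have h2 : ∑ o, (eval w (pderiv o f))^2 = 0 := by linarith
        have h3 := hρ w h1 hcon
        rw [h2] at h3
        simp at h3))
    refine hfin.subset ?_
    rintro t ⟨y, hyR, hy0, rfl⟩
    refine ⟨lift y, ?_, hliftf y⟩
    rw [hqev, hliftg y hyR, hgrad]
    simp only [zero_add]
    apply Finset.sum_eq_zero
    intro i _
    have : eval (fun i => lift y (some i)) (pderiv i F) = eval y (pderiv i F) := rfl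
    rw [this, hy0 i]; simp

open MvPolynomial in
theorem kl_conv {σ : Type} [Fintype σ] (F : MvPolynomial σ ℝ) (R c C η ε : ℝ) (hc : 0 < c) (hC : 0 < C)
    (hη : 0 < η) (xs : σ → ℝ) (Feas : Set (σ → ℝ)) (hcl : IsClosed Feas)
    (Step : (σ → ℝ) → (σ → ℝ) → Prop)
    (H : ∀ x x', x ∈ Feas → ‖x - xs‖ ≤ η → Step x x' → x' ∈ Feas ∧ ‖x' - xs‖ ≤ ε ∧
      c * ‖x' - x‖^2 ≤ eval x' F - eval x F ∧ ∀ s ∈ Set.Icc (0:ℝ) 1,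
        ∑ i, ((x + s • (x' - x)) i)^2 ≤ R^2 ∧
        Real.sqrt (∑ i, (eval (x + s • (x' - x)) (pderiv i F))^2) ≤ C * ‖x' - x‖)
    (hmax : ∀ x ∈ Feas, ‖x - xs‖ ≤ ε → eval x F ≤ eval xs F) (hηε : η ≤ ε) :
    ∃ δ > 0, ∀ x : ℕ → σ → ℝ, x 0 ∈ Feas → ‖x 0 - xs‖ ≤ δ → (∀ k, Step (x k) (x (k+1))) →
      ∃ xb ∈ Feas, Tendsto x atTop (nhds xb) ∧ ‖xb - xs‖ ≤ η ∧ eval xb F = eval xs F := by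
  obtain ⟨Ω, hΩm, hΩc, hΩ, hfin⟩ := kl_ball F R
  set Cr := {t | ∃ y : σ → ℝ, ∑ i, y i ^ 2 ≤ R^2 ∧ (∀ i, eval y (pderiv i F) = 0) ∧ eval y F = t} with hCr
  set fs := eval xs F with hfs
  -- neighbourhood free of critical values
  have hnb : ∀ᶠ t in nhds fs, t ∈ Cr → t = fs := by
    have h1 : (Cr \ {fs}).Finite := hfin.subset Set.diff_subset
    have h2 : (Cr \ {fs})ᶜ ∈ nhds fs := h1.isClosed.isOpen_compl.mem_nhds (by simp)
    filter_upwards [h2] with t ht htC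
    by_contra hne
    exact ht ⟨htC, hne⟩
  obtain ⟨t1, ht1, hnb⟩ := Metric.eventually_nhds_iff.mp hnb
  -- choice of delta
  have hcont : Continuous (fun x : σ → ℝ => (C / c) * (Ω fs - Ω (eval x F))) :=
    continuous_const.mul (continuous_const.sub (hΩc.comp (kl_continuous F)))
  have e1 : ∀ᶠ x in nhds xs, (C / c) * (Ω fs - Ω (eval x F)) < η / 2 :=
    hcont.continuousAt.eventually (gt_mem_nhds (by simp [hfs]; linarith))
  have e2 : ∀ᶠ x in nhds xs, fs - t1 < eval x F :=
    (kl_continuous F).continuousAt.eventually (lt_mem_nhds (by linarith))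
  obtain ⟨δ0, hδ0, hδ⟩ := Metric.eventually_nhds_iff.mp (e1.and e2)
  refine ⟨min (δ0 / 2) (η / 2), by positivity, fun x hx0 hxd hstep => ?_⟩
  obtain ⟨hd1, hd2⟩ := hδ (y := x 0) (by
    rw [dist_eq_norm]; exact lt_of_le_of_lt (hxd.trans (min_le_left _ _)) (by linarith))
  have hxd2 : ‖x 0 - xs‖ ≤ η / 2 := hxd.trans (min_le_right _ _)
  -- main induction
  have hone : ∀ k, x k ∈ Feas → ‖x k - xs‖ ≤ η →
      ‖x (k+1) - x k‖ ≤ (C / c) * (Ω (eval (x (k+1)) F) - Ω (eval (x k) F)) ∧ eval (x k) F ≤ eval (x (k+1)) F := by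
    intro k hk1 hk2
    obtain ⟨h1, h2, h3, h4⟩ := H _ _ hk1 hk2 (hstep k)
    set d := ‖x (k+1) - x k‖ with hd
    have hd0 : 0 ≤ d := norm_nonneg _
    have hmono : eval (x k) F ≤ eval (x (k+1)) F := by nlinarith [sq_nonneg d]
    refine ⟨?_, hmono⟩
    have hΩ1 := hΩm hmono
    rcases hd0.eq_or_lt with h0 | hpos
    · rw [← h0]; exact mul_nonneg (by positivity) (by linarith)
    have h5 := hΩ (eval (x k) F) (eval (x (k+1)) F) (C * d) hmono (by positivity) (by
      intro t ht
      have hc1 : Continuous (fun s : ℝ => eval (x k + s • (x (k+1) - x k)) F) := by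
        apply (kl_continuous F).comp
        fun_prop
      have hiv := intermediate_value_Icc (zero_le_one (α := ℝ)) hc1.continuousOn
      simp only [zero_smul, add_zero, one_smul, add_sub_cancel] at hiv
      obtain ⟨s, hs, hst⟩ := hiv ⟨ht.1.le, ht.2.le⟩
      exact ⟨_, (h4 s hs).1, hst, (h4 s hs).2⟩)
    have h6 : c * d ≤ C * (Ω (eval (x (k+1)) F) - Ω (eval (x k) F)) := by
      have : d * (c * d) ≤ d * (C * (Ω (eval (x (k+1)) F) - Ω (eval (x k) F))) := by nlinarith
      exact le_of_mul_le_mul_left this hpos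
    rw [div_mul_eq_mul_div, le_div_iff₀ hc]
    linarith
  have hmain : ∀ k, x k ∈ Feas ∧ ‖x k - xs‖ ≤ η ∧ eval (x 0) F ≤ eval (x k) F ∧
      ∑ j ∈ Finset.range k, ‖x (j+1) - x j‖ ≤ (C / c) * (Ω (eval (x k) F) - Ω (eval (x 0) F)) ∧
      ‖x k - xs‖ ≤ ‖x 0 - xs‖ + ∑ j ∈ Finset.range k, ‖x (j+1) - x j‖ := by
    intro k
    induction k with
    | zero => exact ⟨hx0, by linarith, le_rfl, by simp, by simp⟩
    | succ k ih =>
      obtain ⟨i1, i2, i3, i4, i5⟩ := ih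
      obtain ⟨h1, h2, h3, h4⟩ := H _ _ i1 i2 (hstep k)
      obtain ⟨g1, g2⟩ := hone k i1 i2
      have j4 : ∑ j ∈ Finset.range (k+1), ‖x (j+1) - x j‖ ≤ (C / c) * (Ω (eval (x (k+1)) F) - Ω (eval (x 0) F)) := by
        rw [Finset.sum_range_succ]
        have : (C / c) * (Ω (eval (x (k+1)) F) - Ω (eval (x 0) F)) = (C / c) * (Ω (eval (x k) F) - Ω (eval (x 0) F)) + (C / c) * (Ω (eval (x (k+1)) F) - Ω (eval (x k) F)) := by ring
        rw [this]; exact add_le_add i4 g1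
      have j5 : ‖x (k+1) - xs‖ ≤ ‖x 0 - xs‖ + ∑ j ∈ Finset.range (k+1), ‖x (j+1) - x j‖ := by
        rw [Finset.sum_range_succ]
        calc ‖x (k+1) - xs‖ = ‖(x k - xs) + (x (k+1) - x k)‖ := by congr 1; abel
          _ ≤ ‖x k - xs‖ + ‖x (k+1) - x k‖ := norm_add_le _ _
          _ ≤ _ := by linarith
      have hle := hmax _ h1 h2
      have hle2 : (C / c) * (Ω (eval (x (k+1)) F) - Ω (eval (x 0) F)) ≤ (C / c) * (Ω fs - Ω (eval (x 0) F)) := by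
        have := hΩm hle
        gcongr
      exact ⟨h1, by linarith, i3.trans g2, j4, j5⟩
  have hsum : Summable (fun j => ‖x (j+1) - x j‖) := by
    apply summable_of_sum_range_le (c := η / 2) (fun j => norm_nonneg _)
    intro k
    have h1 := (hmain k)
    have hle := hmax _ h1.1 (h1.2.1.trans hηε)
    have hle2 : (C / c) * (Ω (eval (x k) F) - Ω (eval (x 0) F)) ≤ (C / c) * (Ω fs - Ω (eval (x 0) F)) := by
      have := hΩm hle
      gcongr
    linarith [h1.2.2.2.1]
  have hcau : CauchySeq x := by
    apply cauchySeq_of_summable_dist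
    refine hsum.congr fun j => ?_
    rw [dist_comm, dist_eq_norm]
  obtain ⟨xb, hxb⟩ := cauchySeq_tendsto_of_complete hcau
  have hxbF : xb ∈ Feas := hcl.mem_of_tendsto hxb (Eventually.of_forall fun k => (hmain k).1)
  have hxbη : ‖xb - xs‖ ≤ η :=
    le_of_tendsto' ((hxb.sub_const xs).norm) fun k => (hmain k).2.1
  refine ⟨xb, hxbF, hxb, hxbη, ?_⟩
  have hstepk : ∀ k, ∑ i, (x k i)^2 ≤ R^2 ∧ Real.sqrt (∑ i, (eval (x k) (pderiv i F))^2) ≤ C * ‖x (k+1) - x k‖ := by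
    intro k
    obtain ⟨h1, h2, h3, h4⟩ := H _ _ (hmain k).1 (hmain k).2.1 (hstep k)
    simpa using h4 0 ⟨le_rfl, zero_le_one⟩
  have hR : ∑ i, xb i ^ 2 ≤ R^2 := by
    have hc1 : Continuous (fun y : σ → ℝ => ∑ i, y i ^ 2) := by fun_prop
    exact le_of_tendsto' ((hc1.tendsto xb).comp hxb) fun k => (hstepk k).1
  have hgr : Real.sqrt (∑ i, (eval xb (pderiv i F))^2) ≤ 0 := by
    have hc1 : Continuous (fun y : σ → ℝ => Real.sqrt (∑ i, (eval y (pderiv i F))^2)) := by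
      apply Real.continuous_sqrt.comp
      exact continuous_finset_sum _ fun i _ => (kl_continuous _).pow 2
    have h1 : Tendsto (fun k => C * ‖x (k+1) - x k‖) atTop (nhds 0) := by
      simpa using hsum.tendsto_atTop_zero.const_mul C
    exact le_of_tendsto_of_tendsto' ((hc1.tendsto xb).comp hxb) h1 fun k => (hstepk k).2
  have hz : ∀ i, eval xb (pderiv i F) = 0 := by
    intro i
    have h1 : |eval xb (pderiv i F)| ≤ Real.sqrt (∑ i, (eval xb (pderiv i F))^2) := by
      apply Real.abs_le_sqrt
      exact Finset.single_le_sum (f := fun i => (eval xb (pderiv i F))^2) (fun j _ => sq_nonneg _) (Finset.mem_univ i)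
    exact abs_nonpos_iff.mp (h1.trans hgr)
  have hup := hmax xb hxbF (hxbη.trans hηε)
  have hlo : eval (x 0) F ≤ eval xb F :=
    ge_of_tendsto' (((kl_continuous F).tendsto xb).comp hxb) fun k => (hmain k).2.2.1
  refine hnb ?_ ⟨xb, hR, hz, rfl⟩
  rw [Real.dist_eq, abs_lt]
  constructor <;> linarith

section la
variable {m ρ κ : Type} [Fintype m] [DecidableEq m] [Fintype ρ] [DecidableEq ρ] [Fintype κ]

theorem la_froSq_trace (A : Matrix m ρ ℝ) : froSq A = trace (Aᵀ * A) := by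
  unfold froSq
  rw [Finset.sum_comm]
  simp [trace, mul_apply, pow_two]

theorem la_froSq_nonneg (A : Matrix m ρ ℝ) : 0 ≤ froSq A := by
  unfold froSq; positivity

theorem la_froSq_entry (A : Matrix m ρ ℝ) (i : m) (j : ρ) : (A i j)^2 ≤ froSq A := by
  unfold froSq
  refine le_trans ?_ (Finset.single_le_sum (f := fun i => ∑ j, (A i j)^2) (fun i _ => by positivity) (Finset.mem_univ i))
  exact Finset.single_le_sum (f := fun j => (A i j)^2) (fun i _ => by positivity) (Finset.mem_univ j)

theorem la_froSq_eq_zero (A : Matrix m ρ ℝ) (h : froSq A = 0) : A = 0 := by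
  ext i j
  have := la_froSq_entry A i j
  rw [h] at this
  have : (A i j)^2 = 0 := le_antisymm this (sq_nonneg _)
  simpa using this

theorem la_froSq_transpose (A : Matrix m ρ ℝ) : froSq Aᵀ = froSq A := by
  unfold froSq; rw [Finset.sum_comm]; rfl

theorem la_froSq_TG (U : Matrix m ρ ℝ) (G : Matrix m κ ℝ) :
    froSq (Uᵀ * G) = trace (Uᵀ * (G * Gᵀ) * U) := by
  classical
  rw [← la_froSq_transpose, la_froSq_trace]
  simp [Matrix.transpose_mul, Matrix.mul_assoc]

theorem la_froSq_add_le (A B : Matrix m ρ ℝ) : froSq (A + B) ≤ 2 * froSq A + 2 * froSq B := by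
  unfold froSq
  simp only [Finset.mul_sum, ← Finset.sum_add_distrib]
  refine Finset.sum_le_sum fun i _ => Finset.sum_le_sum fun j _ => ?_
  rw [Matrix.add_apply]
  nlinarith [sq_nonneg (A i j - B i j)]

/-- spectral theorem in real form -/
theorem la_spec (M : Matrix m m ℝ) (hM : M.IsHermitian) :
    ∃ V : Matrix m m ℝ, Vᵀ * V = 1 ∧ V * Vᵀ = 1 ∧ M = V * diagonal hM.eigenvalues * Vᵀ := by
  refine ⟨(hM.eigenvectorUnitary : Matrix m m ℝ), ?_, ?_, ?_⟩
  · have := (Matrix.mem_unitaryGroup_iff').1 hM.eigenvectorUnitary.2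
    simpa [star_eq_conjTranspose] using this
  · have := (Matrix.mem_unitaryGroup_iff).1 hM.eigenvectorUnitary.2
    simpa [star_eq_conjTranspose] using this
  · have := hM.spectral_theorem
    rw [Unitary.conjStarAlgAut_apply] at this
    simpa [star_eq_conjTranspose, Function.comp_def] using this

/-- quadratic form -/
theorem la_quad_diag (V : Matrix m m ℝ) (hV : V * Vᵀ = 1) (d : m → ℝ) (g : ℝ) (hd : ∀ i, g ≤ d i)
    (x : m → ℝ) : g * (x ⬝ᵥ x) ≤ x ⬝ᵥ ((V * diagonal d * Vᵀ) *ᵥ x) := by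
  have e1 : x ⬝ᵥ ((V * diagonal d * Vᵀ) *ᵥ x) = (Vᵀ *ᵥ x) ⬝ᵥ (diagonal d *ᵥ (Vᵀ *ᵥ x)) := by
    rw [← mulVec_mulVec, ← mulVec_mulVec, dotProduct_mulVec, ← mulVec_transpose]
  have e2 : x ⬝ᵥ x = (Vᵀ *ᵥ x) ⬝ᵥ (Vᵀ *ᵥ x) := by
    rw [mulVec_transpose V x, ← dotProduct_mulVec, ← mulVec_transpose, mulVec_mulVec, hV, one_mulVec]
  rw [e1, e2]
  simp only [dotProduct, mulVec_diagonal, Finset.mul_sum]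
  refine Finset.sum_le_sum fun i _ => ?_
  nlinarith [hd i, mul_self_nonneg ((Vᵀ *ᵥ x) i)]

structure LaGap (M P : Matrix m m ℝ) (ν γ : ℝ) : Prop where
  sym : Pᵀ = P
  idem : P * P = P
  comm : P * M = M * P
  pos : ∀ x : m → ℝ, γ * (x ⬝ᵥ x) ≤ x ⬝ᵥ (((2:ℝ) • P - 1) * (M - ν • 1)) *ᵥ x

theorem la_gap_exists (M : Matrix m m ℝ) (hM : M.IsHermitian) (ν : ℝ) (hν : ∀ i, hM.eigenvalues i ≠ ν) :
    ∃ P γ, 0 < γ ∧ LaGap M P ν γ ∧ trace P = ((Finset.univ.filter fun i => ν < hM.eigenvalues i).card : ℝ) ∧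
      ∀ Q : Matrix m m ℝ, Q * M = M * Q → Q * P = P * Q := by
  obtain ⟨V, h1, h2, h3⟩ := la_spec M hM
  set l := hM.eigenvalues with hl
  set d : m → ℝ := fun i => if ν < l i then 1 else 0 with hd
  obtain ⟨γ, hγ, hγ2⟩ : ∃ γ : ℝ, 0 < γ ∧ ∀ i, γ ≤ |l i - ν| := by
    rcases isEmpty_or_nonempty m with h | h
    · exact ⟨1, one_pos, fun i => h.elim i⟩
    · obtain ⟨i, hi⟩ := Finite.exists_min (fun i => |l i - ν|)
      exact ⟨_, abs_pos.2 (sub_ne_zero.2 (hν i)), hi⟩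
  have key : ∀ a b : m → ℝ, (V * diagonal a * Vᵀ) * (V * diagonal b * Vᵀ) = V * diagonal (fun i => a i * b i) * Vᵀ := by
    intro a b
    calc _ = V * diagonal a * (Vᵀ * V) * diagonal b * Vᵀ := by simp only [Matrix.mul_assoc]
      _ = _ := by rw [h1, Matrix.mul_one, Matrix.mul_assoc V, diagonal_mul_diagonal]
  have hone : ∀ a : ℝ, V * diagonal (fun _ => a) * Vᵀ = a • (1 : Matrix m m ℝ) := by
    intro a
    rw [← smul_one_eq_diagonal]; simp [h2]
  refine ⟨V * diagonal d * Vᵀ, γ, hγ, ⟨?_, ?_, ?_, ?_⟩, ?_, ?_⟩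
  · simp [Matrix.transpose_mul, Matrix.mul_assoc]
  · rw [key]; congr; ext i; simp [hd]
  · rw [h3, key, key]; congr; ext i; ring
  · intro x
    have e : ((2:ℝ) • (V * diagonal d * Vᵀ) - 1) * (M - ν • 1) = V * diagonal (fun i => |l i - ν|) * Vᵀ := by
      have a1 : (2:ℝ) • (V * diagonal d * Vᵀ) - 1 = V * diagonal (fun i => 2 * d i - 1) * Vᵀ := by
        have : (fun i => 2 * d i - 1) = (fun i => ((2:ℝ) • d) i - (fun _ => (1:ℝ)) i) := by ext; simp
        rw [this, ← diagonal_sub, Matrix.mul_sub, Matrix.sub_mul, hone, diagonal_smul]; simp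
      have a2 : M - ν • 1 = V * diagonal (fun i => l i - ν) * Vᵀ := by
        have : (fun i => l i - ν) = (fun i => l i - (fun _ => ν) i) := rfl
        rw [this, ← diagonal_sub, Matrix.mul_sub, Matrix.sub_mul, hone, ← h3]
      rw [a1, a2, key]
      congr; ext i
      by_cases h : ν < l i
      · simp only [hd, h, if_true]; rw [abs_of_pos (by linarith)]; ring
      · simp only [hd, h, if_false]; rw [abs_of_nonpos (by linarith)]; ring
    rw [e]
    exact la_quad_diag V h2 _ γ hγ2 x
  · rw [Matrix.mul_assoc, trace_mul_comm, Matrix.mul_assoc, h1, Matrix.mul_one, trace_diagonal]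
    simp [hd]
  · intro Q hQ
    set Q' := Vᵀ * Q * V with hQ'
    have q1 : Q = V * Q' * Vᵀ := by
      calc Q = (V * Vᵀ) * Q * (V * Vᵀ) := by simp [h2]
        _ = _ := by simp only [hQ', Matrix.mul_assoc]
    have q2 : Q' * diagonal l = diagonal l * Q' := by
      calc Q' * diagonal l = Vᵀ * (Q * (V * diagonal l * Vᵀ)) * V := by
            simp only [hQ', Matrix.mul_assoc, h1, Matrix.mul_one]
        _ = Vᵀ * ((V * diagonal l * Vᵀ) * Q) * V := by rw [← h3, hQ]
        _ = (Vᵀ * V) * diagonal l * Q' := by simp only [hQ', Matrix.mul_assoc]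
        _ = _ := by rw [h1, Matrix.one_mul]
    have q3 : Q' * diagonal d = diagonal d * Q' := by
      ext i j
      have := congrFun (congrFun q2 i) j
      rw [mul_diagonal, diagonal_mul] at this ⊢
      by_cases h : Q' i j = 0
      · simp [h]
      · have : l i = l j := by
          have : Q' i j * (l j - l i) = 0 := by linarith
          rcases mul_eq_zero.1 this with h' | h'
          · exact absurd h' h
          · linarith
        simp only [hd, this]; ring
    calc Q * (V * diagonal d * Vᵀ) = V * Q' * (Vᵀ * V) * diagonal d * Vᵀ := by
          rw [q1]; simp only [Matrix.mul_assoc]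
      _ = V * (Q' * diagonal d) * Vᵀ := by rw [h1]; simp only [Matrix.mul_assoc, Matrix.one_mul]
      _ = V * (diagonal d * Q') * Vᵀ := by rw [q3]
      _ = V * diagonal d * (Vᵀ * V) * Q' * Vᵀ := by rw [h1]; simp only [Matrix.mul_assoc, Matrix.one_mul]
      _ = _ := by rw [q1]; simp only [Matrix.mul_assoc]

theorem la_trace_quad (H : Matrix m m ℝ) (γ : ℝ) (h : ∀ x : m → ℝ, γ * (x ⬝ᵥ x) ≤ x ⬝ᵥ H *ᵥ x)
    (S : Matrix m ρ ℝ) : γ * froSq S ≤ trace (Sᵀ * (H * S)) := by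
  have : trace (Sᵀ * (H * S)) = ∑ j, (S.col j) ⬝ᵥ H *ᵥ (S.col j) := by
    simp only [trace, diag, mul_apply, dotProduct, mulVec, transpose_apply, col]
  rw [this, la_froSq_trace]
  simp only [trace, diag, mul_apply, transpose_apply, Finset.mul_sum]
  refine Finset.sum_le_sum fun j _ => ?_
  have := h (S.col j)
  simpa [dotProduct, Finset.mul_sum] using this

theorem LaGap.trace_ineq {M P : Matrix m m ℝ} {ν γ : ℝ} (hg : LaGap M P ν γ) (Q : Matrix m m ℝ)
    (hQs : Qᵀ = Q) (hQ : Q * Q = Q) (ht : trace Q = trace P) :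
    γ * froSq (P - Q) ≤ trace (M * P) - trace (M * Q) := by
  have h := la_trace_quad _ γ hg.pos (P - Q)
  refine h.trans (le_of_eq ?_)
  obtain ⟨K, hK⟩ : ∃ K, K = M - ν • (1 : Matrix m m ℝ) := ⟨_, rfl⟩
  rw [← hK]
  have hPK : P * K = K * P := by
    rw [hK, Matrix.mul_sub, Matrix.sub_mul, hg.comm]; simp
  have e0 : trace (M * P) - trace (M * Q) = trace (K * P) - trace (K * Q) := by
    simp [hK, Matrix.sub_mul, trace_sub, ht]
  rw [e0, transpose_sub, hg.sym, hQs]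
  have i1 := hg.idem
  rw [trace_mul_comm]
  have e1 : ((2:ℝ) • P - 1) * K = K * ((2:ℝ) • P - 1) := by
    rw [Matrix.sub_mul, Matrix.mul_sub, smul_mul_assoc, hPK]; simp
  rw [e1]
  have e2 : ((2:ℝ) • P - 1) * (P - Q) * (P - Q) = P - (2:ℝ) • (P * Q * P) + P * Q + Q * P - Q := by
    have t1 : P * (P * Q) = P * Q := by rw [← Matrix.mul_assoc, i1]
    simp only [Matrix.sub_mul, Matrix.mul_sub, smul_mul_assoc, Matrix.one_mul, i1, hQ, Matrix.mul_assoc, t1]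
    module
  rw [Matrix.mul_assoc, Matrix.mul_assoc, ← Matrix.mul_assoc _ (P-Q), e2]
  have e3 : trace (K * (P * Q * P)) = trace (K * (P * Q)) := by
    rw [← Matrix.mul_assoc, trace_mul_comm, ← Matrix.mul_assoc, ← Matrix.mul_assoc, hPK, Matrix.mul_assoc K P P, i1, Matrix.mul_assoc]
  have e4 : trace (K * (Q * P)) = trace (K * (P * Q)) := by
    rw [← Matrix.mul_assoc, trace_mul_comm, ← Matrix.mul_assoc, hPK, Matrix.mul_assoc]
  simp only [Matrix.mul_sub, Matrix.mul_add, trace_sub, trace_add, mul_smul_comm, trace_smul, e3, e4, smul_eq_mul]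
  ring

end la

section lb
variable {m ρ κ : Type} [Fintype m] [DecidableEq m] [Fintype ρ] [DecidableEq ρ] [Fintype κ]

theorem lb_trig (a b : ℝ) (e : ℝ) (he : 0 < e) (C : ℝ)
    (h : ∀ θ : ℝ, C * (Real.cos θ - 1)^2 + C * (Real.sin θ)^2 ≤ e →
      (Real.sin θ)^2 * a + 2 * Real.sin θ * Real.cos θ * b ≤ 0) : b = 0 ∧ a ≤ 0 := by
  have hev : ∀ᶠ θ in nhds (0:ℝ), C * (Real.cos θ - 1)^2 + C * (Real.sin θ)^2 < e := by
    have hc : Continuous fun θ : ℝ => C * (Real.cos θ - 1)^2 + C * (Real.sin θ)^2 := by fun_prop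
    exact hc.tendsto' 0 0 (by simp) (Iio_mem_nhds he)
  have hb : b = 0 := by
    have hm : IsLocalMax (fun θ => (Real.sin θ)^2 * a + 2 * Real.sin θ * Real.cos θ * b) 0 := by
      filter_upwards [hev] with θ hθ
      simpa using h θ hθ.le
    have hd : HasDerivAt (fun θ => (Real.sin θ)^2 * a + 2 * Real.sin θ * Real.cos θ * b) (2 * b) 0 := by
      have hs := Real.hasDerivAt_sin 0
      have hc := Real.hasDerivAt_cos 0
      have := ((hs.pow 2).mul_const a).add ((((hs.const_mul 2).mul hc)).mul_const b)
      refine (this.congr_deriv ?_)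
      simp
    have := hm.hasDerivAt_eq_zero hd
    linarith
  refine ⟨hb, ?_⟩
  obtain ⟨θ, hθ, h0, h1⟩ : ∃ θ : ℝ, C * (Real.cos θ - 1)^2 + C * (Real.sin θ)^2 < e ∧ 0 < θ ∧ θ < 1 := by
    have h2 : ∀ᶠ θ in nhdsWithin (0:ℝ) (Set.Ioi 0), 0 < θ ∧ θ < 1 := by
      filter_upwards [Ioo_mem_nhdsGT (show (0:ℝ) < 1 by norm_num)] with θ hθ using hθ
    obtain ⟨θ, h3, h4⟩ := ((hev.filter_mono nhdsWithin_le_nhds).and h2).exists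
    exact ⟨θ, h3, h4⟩
  have h3 := h θ hθ.le
  have h4 : 0 < Real.sin θ := Real.sin_pos_of_pos_of_lt_pi h0 (by linarith [Real.pi_gt_three])
  rw [hb] at h3
  by_contra hh
  push Not at hh
  have : 0 < (Real.sin θ)^2 * a := by positivity
  linarith

def LbLocMax (M : Matrix m m ℝ) (U : Matrix m ρ ℝ) : Prop :=
  Uᵀ * U = 1 ∧ ∃ e > (0:ℝ), ∀ V : Matrix m ρ ℝ, Vᵀ * V = 1 → froSq (V - U) ≤ e →
    trace (Vᵀ * M * V) ≤ trace (Uᵀ * M * U)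

theorem lb_rot_unit (M : Matrix m m ℝ) (hM : Mᵀ = M) (U : Matrix m ρ ℝ) (hU : LbLocMax M U)
    (c : ρ → ℝ) (v : m → ℝ) (hc : c ⬝ᵥ c = 1) (hv : v ⬝ᵥ v = 1) (hUv : v ᵥ* U = 0) :
    (U *ᵥ c) ⬝ᵥ (M *ᵥ v) = 0 ∧ v ⬝ᵥ (M *ᵥ v) ≤ (U *ᵥ c) ⬝ᵥ (M *ᵥ (U *ᵥ c)) := by
  obtain ⟨hU1, e, he, hmax⟩ := hU
  set u := U *ᵥ c with hu
  have hUu : u ᵥ* U = c := by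
    rw [← mulVec_transpose, hu, mulVec_mulVec, hU1, one_mulVec]
  have huu : u ⬝ᵥ u = 1 := by
    have : u ⬝ᵥ (U *ᵥ c) = 1 := by rw [dotProduct_mulVec, hUu, hc]
    exact this
  have huv : u ⬝ᵥ v = 0 := by
    rw [dotProduct_comm]
    have : v ⬝ᵥ (U *ᵥ c) = 0 := by rw [dotProduct_mulVec, hUv, zero_dotProduct]
    exact this
  have hsym : ∀ x y : m → ℝ, x ⬝ᵥ (M *ᵥ y) = y ⬝ᵥ (M *ᵥ x) := by
    intro x y
    rw [dotProduct_mulVec, dotProduct_comm, ← mulVec_transpose, hM]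
  have key := lb_trig (v ⬝ᵥ (M *ᵥ v) - u ⬝ᵥ (M *ᵥ u)) (u ⬝ᵥ (M *ᵥ v)) e he 1 ?_
  · exact ⟨key.1, by linarith [key.2]⟩
  intro θ hθ
  set s := Real.sin θ
  set k := Real.cos θ
  have hsk : s^2 + k^2 = 1 := Real.sin_sq_add_cos_sq θ
  set w : m → ℝ := (k - 1) • u + s • v with hw
  have hwU : w ᵥ* U = (k-1) • c := by
    rw [hw, add_vecMul, smul_vecMul, smul_vecMul, hUu, hUv, smul_zero, add_zero]
  have hww : w ⬝ᵥ w = (k-1)^2 + s^2 := by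
    simp only [hw, dotProduct_add, add_dotProduct, smul_dotProduct, dotProduct_smul, huu, hv, huv, dotProduct_comm v u, smul_eq_mul]
    ring
  have hT : ∀ a b : m → ℝ, (vecMulVec a c)ᵀ = vecMulVec c a := fun a b => by
    ext i j; simp [vecMulVec_apply, mul_comm]
  have h1 : (U + vecMulVec w c)ᵀ * (U + vecMulVec w c) = 1 := by
    rw [transpose_add, hT w w, Matrix.add_mul, Matrix.mul_add, Matrix.mul_add, hU1, mul_vecMulVec, vecMulVec_mul, vecMulVec_mul_vecMulVec,
      mulVec_transpose, hwU, hww]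
    ext i j
    simp only [Matrix.add_apply, vecMulVec_apply, Pi.smul_apply, smul_eq_mul]
    have : 2 * (k-1) + ((k-1)^2 + s^2) = 0 := by nlinarith
    linear_combination (c i * c j) * this
  have h2 : froSq (U + vecMulVec w c - U) ≤ e := by
    rw [add_sub_cancel_left]
    refine le_trans (le_of_eq ?_) hθ
    rw [la_froSq_trace, hT w w, vecMulVec_mul_vecMulVec, hww, trace_vecMulVec, dotProduct_smul, hc, smul_eq_mul]
    ring
  have h3 := hmax _ h1 h2
  have h4 : trace ((U + vecMulVec w c)ᵀ * M * (U + vecMulVec w c)) =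
      trace (Uᵀ * M * U) + 2 * (u ⬝ᵥ (M *ᵥ w)) + w ⬝ᵥ (M *ᵥ w) := by
    have t1 : trace (Uᵀ * M * vecMulVec w c) = u ⬝ᵥ (M *ᵥ w) := by
      rw [mul_vecMulVec, trace_vecMulVec, ← mulVec_mulVec, mulVec_transpose, ← dotProduct_mulVec, ← hu, dotProduct_comm]
    have t2 : trace (vecMulVec c w * M * U) = u ⬝ᵥ (M *ᵥ w) := by
      rw [vecMulVec_mul, vecMulVec_mul, trace_vecMulVec, dotProduct_comm, ← dotProduct_mulVec, ← hu, ← dotProduct_mulVec, hsym]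
    have t3 : trace (vecMulVec c w * M * vecMulVec w c) = w ⬝ᵥ (M *ᵥ w) := by
      rw [vecMulVec_mul, vecMulVec_mul_vecMulVec, trace_vecMulVec, dotProduct_smul, hc, ← dotProduct_mulVec, smul_eq_mul, mul_one]
    rw [transpose_add, hT w w, Matrix.add_mul, Matrix.add_mul, Matrix.mul_add, Matrix.mul_add, trace_add, trace_add, trace_add, t1, t2, t3]
    ring
  rw [h4] at h3
  have h5 : 2 * (u ⬝ᵥ (M *ᵥ w)) + w ⬝ᵥ (M *ᵥ w) = s^2 * (v ⬝ᵥ (M *ᵥ v) - u ⬝ᵥ (M *ᵥ u)) + 2 * s * k * (u ⬝ᵥ (M *ᵥ v)) := by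
    simp only [hw, mulVec_add, mulVec_smul, dotProduct_add, add_dotProduct, smul_dotProduct, dotProduct_smul, hsym v u, smul_eq_mul]
    linear_combination (u ⬝ᵥ (M *ᵥ u)) * hsk
  linarith

theorem lb_unit {n : Type} [Fintype n] (c : n → ℝ) (hc : c ≠ 0) :
    ∃ t : ℝ, 0 < t ∧ (t • c) ⬝ᵥ (t • c) = 1 := by
  have h : 0 < c ⬝ᵥ c := lt_of_le_of_ne (by
    simp only [dotProduct]; exact Finset.sum_nonneg fun i _ => mul_self_nonneg _) (fun h => hc (dotProduct_self_eq_zero.1 h.symm))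
  refine ⟨(Real.sqrt (c ⬝ᵥ c))⁻¹, by positivity, ?_⟩
  rw [smul_dotProduct, dotProduct_smul, smul_eq_mul, smul_eq_mul, ← mul_assoc, ← mul_inv, Real.mul_self_sqrt h.le, inv_mul_cancel₀ h.ne']

theorem lb_rot (M : Matrix m m ℝ) (hM : Mᵀ = M) (U : Matrix m ρ ℝ) (hU : LbLocMax M U)
    (c : ρ → ℝ) (v : m → ℝ) (hc : c ≠ 0) (hv : v ≠ 0) (hUv : v ᵥ* U = 0) :
    (U *ᵥ c) ⬝ᵥ (M *ᵥ v) = 0 ∧ ∃ a b : ℝ, 0 < a ∧ 0 < b ∧ (a • v) ⬝ᵥ (a • v) = 1 ∧ (b • (U *ᵥ c)) ⬝ᵥ (b • (U *ᵥ c)) = 1 ∧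
     (a • v) ⬝ᵥ (M *ᵥ (a • v)) ≤ (b • (U *ᵥ c)) ⬝ᵥ (M *ᵥ (b • (U *ᵥ c))) := by
  obtain ⟨b, hb, hb1⟩ := lb_unit c hc
  obtain ⟨a, ha, ha1⟩ := lb_unit v hv
  have h := lb_rot_unit M hM U hU (b • c) (a • v) hb1 ha1 (by rw [smul_vecMul, hUv, smul_zero])
  rw [mulVec_smul] at h
  refine ⟨?_, a, b, ha, hb, ha1, ?_, h.2⟩
  · have := h.1
    rw [mulVec_smul, smul_dotProduct, dotProduct_smul, smul_eq_mul, smul_eq_mul] at this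
    have := (mul_eq_zero.1 this).resolve_left hb.ne'
    exact (mul_eq_zero.1 this).resolve_left ha.ne'
  · rw [← mulVec_smul, dotProduct_mulVec, ← mulVec_transpose, mulVec_mulVec, hU.1, one_mulVec, hb1]

theorem lb_MU (M : Matrix m m ℝ) (hM : Mᵀ = M) (U : Matrix m ρ ℝ) (hU : LbLocMax M U) :
    M * U = U * (Uᵀ * M * U) := by
  rw [← sub_eq_zero]
  set D := M * U - U * (Uᵀ * M * U) with hD
  have h0 : Uᵀ * D = 0 := by
    rw [hD, Matrix.mul_sub, ← Matrix.mul_assoc Uᵀ U, hU.1, Matrix.one_mul, Matrix.mul_assoc, sub_self]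
  ext i j
  have h1 : D.col j ᵥ* U = 0 := by
    rw [← mulVec_transpose]
    ext l
    have := congrFun (congrFun h0 l) j
    simpa [mul_apply, mulVec, dotProduct] using this
  by_cases hz : D.col j = 0
  · exact congrFun hz i
  exfalso
  have h2 := (lb_rot M hM U hU (Pi.single j 1) (D.col j) (by simp) hz h1).1
  rw [dotProduct_mulVec, dotProduct_comm, ← mulVec_transpose, hM, mulVec_mulVec] at h2
  have h3 : (M * U) *ᵥ Pi.single j 1 = D.col j + U *ᵥ ((Uᵀ * M * U).col j) := by
    have : M * U = D + U * (Uᵀ * M * U) := by rw [hD]; abel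
    rw [this, add_mulVec, ← mulVec_mulVec]; simp
  rw [h3, dotProduct_add, dotProduct_mulVec, h1, zero_dotProduct, add_zero, dotProduct_self_eq_zero] at h2
  exact hz h2

theorem lb_comm (M : Matrix m m ℝ) (hM : Mᵀ = M) (U : Matrix m ρ ℝ) (hU : LbLocMax M U) :
    (U * Uᵀ) * M = M * (U * Uᵀ) := by
  have h := lb_MU M hM U hU
  have h2 : M * (U * Uᵀ) = U * (Uᵀ * M * U) * Uᵀ := by rw [← Matrix.mul_assoc, h]
  have h3 := congrArg transpose h2
  simp only [transpose_mul, transpose_transpose, hM, Matrix.mul_assoc] at h3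
  rw [h2]; simp only [Matrix.mul_assoc]; exact h3

/-- A local maximizer spans the dominant eigenspace. -/
theorem lb_proj (M : Matrix m m ℝ) (hM : Mᵀ = M) (U : Matrix m ρ ℝ) (hU : LbLocMax M U)
    (P : Matrix m m ℝ) (ν γ : ℝ) (hγ : 0 < γ) (hP : LaGap M P ν γ) (ht : trace P = Fintype.card ρ)
    (hcm : ∀ Q : Matrix m m ℝ, Q * M = M * Q → Q * P = P * Q) : U * Uᵀ = P := by
  obtain ⟨Q, hQ⟩ : ∃ Q, Q = U * Uᵀ := ⟨_, rfl⟩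
  have hQP := hcm Q (by rw [hQ]; exact lb_comm M hM U hU)
  rw [← hQ]
  have hQQ : Q * Q = Q := by
    rw [hQ, Matrix.mul_assoc, ← Matrix.mul_assoc Uᵀ, hU.1, Matrix.one_mul]
  have hQs : Qᵀ = Q := by rw [hQ]; simp
  have htQ : trace Q = Fintype.card ρ := by rw [hQ, trace_mul_comm, hU.1, trace_one]
  have f1 : froSq (Q - Q * P) = trace Q - trace (Q * P) := by
    rw [la_froSq_trace, transpose_sub, transpose_mul, hQs, hP.sym, ← hQP, ← trace_sub]
    congr 1
    rw [Matrix.sub_mul, Matrix.mul_sub, Matrix.mul_sub, hQQ, ← Matrix.mul_assoc Q Q P, hQQ, Matrix.mul_assoc Q P Q, ← hQP, ← Matrix.mul_assoc Q Q, hQQ,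
      Matrix.mul_assoc Q P (Q*P), hQP, ← Matrix.mul_assoc P P Q, hP.idem, ← hQP, ← Matrix.mul_assoc Q Q, hQQ]
    abel
  have f2 : froSq (P - Q * P) = trace P - trace (Q * P) := by
    rw [la_froSq_trace, transpose_sub, transpose_mul, hQs, hP.sym, ← hQP, ← trace_sub]
    congr 1
    rw [Matrix.sub_mul, Matrix.mul_sub, Matrix.mul_sub, hP.idem, hQP, ← Matrix.mul_assoc P P Q, hP.idem, ← hQP, Matrix.mul_assoc Q P P, hP.idem, hQP,
       Matrix.mul_assoc P Q (P * Q), ← hQP, ← Matrix.mul_assoc Q Q P, hQQ, hQP, ← Matrix.mul_assoc P P Q, hP.idem]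
    abel
  by_cases h0 : Q - Q * P = 0
  · have h1 : P - Q * P = 0 := by
      apply la_froSq_eq_zero
      rw [f2, ht, ← htQ, ← f1, h0]; simp [froSq]
    rw [sub_eq_zero] at h0 h1
    rw [h0, ← h1]
  exfalso
  have h1 : P - Q * P ≠ 0 := by
    intro h1
    apply h0
    apply la_froSq_eq_zero
    rw [f1, htQ, ← ht, ← f2, h1]; simp [froSq]
  obtain ⟨j, hj⟩ : ∃ j, (Q - Q*P).col j ≠ 0 := by
    by_contra hh; push Not at hh
    apply h0; ext i j; exact congrFun (hh j) i
  obtain ⟨l, hl⟩ : ∃ j, (P - Q*P).col j ≠ 0 := by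
    by_contra hh; push Not at hh
    apply h1; ext i j; exact congrFun (hh j) i
  -- u = (Q - QP) e_j = U c , P u = 0
  have colmul : ∀ (A B : Matrix m m ℝ) (j : m), A *ᵥ B.col j = (A * B).col j := by
    intro A B j; ext i; simp [mulVec, mul_apply, dotProduct]
  obtain ⟨u, hu⟩ : ∃ u, u = (Q - Q*P).col j := ⟨_, rfl⟩
  obtain ⟨v, hv⟩ : ∃ v, v = (P - Q*P).col l := ⟨_, rfl⟩
  rw [← hu] at hj
  rw [← hv] at hl
  have hQu : Q *ᵥ u = u := by
    rw [hu, colmul, Matrix.mul_sub, ← Matrix.mul_assoc, hQQ]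
  have hPu : P *ᵥ u = 0 := by
    rw [hu, colmul, Matrix.mul_sub, hQP, ← Matrix.mul_assoc, hP.idem, sub_self]; rfl
  have hQv : Q *ᵥ v = 0 := by
    rw [hv, colmul, Matrix.mul_sub, ← Matrix.mul_assoc, hQQ, sub_self]; rfl
  have hPv : P *ᵥ v = v := by
    rw [hv, colmul, Matrix.mul_sub, hQP, ← Matrix.mul_assoc, hP.idem]
  have hUc : U *ᵥ (Uᵀ *ᵥ u) = u := by rw [mulVec_mulVec, ← hQ]; exact hQu
  have hvU : v ᵥ* U = 0 := by
    rw [← mulVec_transpose]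
    have : Uᵀ *ᵥ (Q *ᵥ v) = Uᵀ *ᵥ v := by
      rw [hQ, mulVec_mulVec, ← Matrix.mul_assoc, hU.1, Matrix.one_mul]
    rw [← this, hQv, mulVec_zero]
  have hc0 : Uᵀ *ᵥ u ≠ 0 := by
    intro h; rw [h, mulVec_zero] at hUc; exact hj hUc.symm
  obtain ⟨-, a, b, ha, hb, ha1, hb1, hle⟩ := lb_rot M hM U hU _ v hc0 hl hvU
  rw [hUc] at hb1 hle
  have pv := hP.pos (a • v)
  have pu := hP.pos (b • u)
  have cK : ((2:ℝ) • P - 1) * (M - ν • 1) = (M - ν • 1) * ((2:ℝ) • P - 1) := by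
    simp only [Matrix.sub_mul, Matrix.mul_sub, smul_mul_assoc, mul_smul_comm, hP.comm, Matrix.one_mul, Matrix.mul_one]
    module
  have e1 : ((2:ℝ) • P - 1) *ᵥ (a • v) = a • v := by
    rw [sub_mulVec, one_mulVec, smul_mulVec, mulVec_smul, hPv]; module
  have e2 : ((2:ℝ) • P - 1) *ᵥ (b • u) = - (b • u) := by
    rw [sub_mulVec, one_mulVec, smul_mulVec, mulVec_smul, hPu]; simp
  rw [cK, ← mulVec_mulVec, ha1] at pv
  rw [cK, ← mulVec_mulVec, hb1] at pu
  rw [e1, sub_mulVec, smul_mulVec, one_mulVec, dotProduct_sub, dotProduct_smul, ha1] at pv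
  rw [e2, mulVec_neg, dotProduct_neg, sub_mulVec, smul_mulVec, one_mulVec, dotProduct_sub, dotProduct_smul, hb1] at pu
  simp only [smul_eq_mul] at pu pv
  linarith

/-- trace bound for symmetric PSD contraction -/
theorem lb_tr_sq (C : Matrix ρ ρ ℝ) (hC : Cᵀ = C) (hpos : ∀ x : ρ → ℝ, 0 ≤ x ⬝ᵥ (C *ᵥ x))
    (hcon : ∀ x : ρ → ℝ, (C *ᵥ x) ⬝ᵥ (C *ᵥ x) ≤ x ⬝ᵥ x) : froSq C ≤ trace C := by
  have hH : C.IsHermitian := by rw [IsHermitian, conjTranspose_eq_transpose_of_trivial, hC]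
  obtain ⟨V, h1, h2, h3⟩ := la_spec C hH
  obtain ⟨l, hl⟩ : ∃ l, l = hH.eigenvalues := ⟨_, rfl⟩
  rw [← hl] at h3
  have hv : ∀ i, (V.col i) ⬝ᵥ (V.col i) = 1 := by
    intro i
    have := congrFun (congrFun h1 i) i
    simpa [mul_apply, dotProduct] using this
  have hCv : ∀ i, C *ᵥ (V.col i) = l i • V.col i := by
    intro i
    have : C * V = V * diagonal l := by rw [h3, Matrix.mul_assoc, h1, Matrix.mul_one]
    ext j
    have := congrFun (congrFun this j) i
    rw [mul_diagonal, mul_apply] at this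
    simpa [mulVec, dotProduct, mul_comm] using this
  have l0 : ∀ i, 0 ≤ l i := by
    intro i
    have := hpos (V.col i)
    rwa [hCv, dotProduct_smul, hv, smul_eq_mul, mul_one] at this
  have l1 : ∀ i, l i * l i ≤ 1 := by
    intro i
    have := hcon (V.col i)
    rwa [hCv, dotProduct_smul, smul_dotProduct, hv, smul_eq_mul, smul_eq_mul, mul_one] at this
  have t1 : trace C = ∑ i, l i := by
    rw [h3, Matrix.mul_assoc, trace_mul_comm, Matrix.mul_assoc, h1, Matrix.mul_one, trace_diagonal]
  have t2 : froSq C = ∑ i, l i * l i := by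
    rw [la_froSq_trace, hC]
    have : C * C = V * diagonal (fun i => l i * l i) * Vᵀ := by
      calc C * C = V * diagonal l * (Vᵀ * V) * diagonal l * Vᵀ := by
            conv_lhs => rw [h3]
            simp only [Matrix.mul_assoc]
        _ = _ := by rw [h1, Matrix.mul_one, Matrix.mul_assoc V, diagonal_mul_diagonal]
    rw [this, Matrix.mul_assoc, trace_mul_comm, Matrix.mul_assoc, h1, Matrix.mul_one, trace_diagonal]
  rw [t1, t2]
  refine Finset.sum_le_sum fun i _ => ?_
  nlinarith [l0 i, l1 i]

theorem lb_greedy_tr (C : Matrix ρ ρ ℝ) (hcon : ∀ x : ρ → ℝ, (C *ᵥ x) ⬝ᵥ (C *ᵥ x) ≤ x ⬝ᵥ x)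
    (hQ : ∀ Q : Matrix ρ ρ ℝ, Qᵀ * Q = 1 → trace (Qᵀ * C) ≤ trace C) : froSq C ≤ trace C := by
  have hsym : Cᵀ = C := by
    ext i j
    rw [transpose_apply]
    by_cases hij : i = j
    · rw [hij]
    have key : ∀ θ : ℝ, (Real.cos θ - 1) * (C i i + C j j) + Real.sin θ * (C i j - C j i) ≤ 0 := by
      intro θ
      set s := Real.sin θ
      set k := Real.cos θ
      have hsk : s^2 + k^2 = 1 := Real.sin_sq_add_cos_sq θ
      obtain ⟨Z, hZ⟩ : ∃ Z : Matrix ρ ρ ℝ, Z = (k - 1) • (single i i 1 + single j j 1) + s • (single i j 1 - single j i 1) := ⟨_, rfl⟩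
      have hji : j ≠ i := fun h => hij h.symm
      have hZt : Zᵀ = (k - 1) • (single i i 1 + single j j 1) - s • (single i j 1 - single j i 1) := by
        rw [hZ]; simp only [transpose_add, transpose_smul, transpose_sub, transpose_single]; module
      have hZZ : Zᵀ * Z + Zᵀ + Z = 0 := by
        rw [hZt, hZ]
        simp only [Matrix.add_mul, Matrix.mul_add, Matrix.sub_mul, Matrix.mul_sub, smul_mul_assoc, mul_smul_comm, single_mul_single_same, mul_one,
          single_mul_single_of_ne _ _ _ _ hij, single_mul_single_of_ne _ _ _ _ hji, smul_add, smul_sub, smul_zero]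
        have e1 : s * s = 1 - k * k := by nlinarith
        ext a b
        simp only [Matrix.add_apply, Matrix.sub_apply, Matrix.smul_apply, Matrix.zero_apply, smul_eq_mul]
        linear_combination (single i i (1:ℝ) a b + single j j (1:ℝ) a b) * hsk
      have h1 : (1 + Z)ᵀ * (1 + Z) = 1 := by
        rw [transpose_add, transpose_one, Matrix.add_mul, Matrix.mul_add, Matrix.mul_add, Matrix.one_mul, Matrix.one_mul, Matrix.mul_one]
        have : (1 + Z + (Zᵀ + Zᵀ * Z)) = 1 + (Zᵀ * Z + Zᵀ + Z) := by abel
        rw [this, hZZ, add_zero]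
      have h2 := hQ _ h1
      rw [transpose_add, transpose_one, Matrix.add_mul, Matrix.one_mul, trace_add, hZt] at h2
      simp only [Matrix.add_mul, Matrix.sub_mul, smul_mul_assoc, trace_add, trace_sub, trace_smul, trace_single_mul, smul_eq_mul, one_mul] at h2
      linarith
    have hm : IsLocalMax (fun θ => (Real.cos θ - 1) * (C i i + C j j) + Real.sin θ * (C i j - C j i)) 0 := by
      refine Eventually.of_forall fun θ => ?_
      simpa using key θ
    have hd : HasDerivAt (fun θ => (Real.cos θ - 1) * (C i i + C j j) + Real.sin θ * (C i j - C j i)) (C i j - C j i) 0 := by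
      have := (((Real.hasDerivAt_cos 0).sub_const 1).mul_const (C i i + C j j)).add ((Real.hasDerivAt_sin 0).mul_const (C i j - C j i))
      exact this.congr_deriv (by simp)
    have := hm.hasDerivAt_eq_zero hd
    linarith
  have hpos : ∀ x : ρ → ℝ, 0 ≤ x ⬝ᵥ (C *ᵥ x) := by
    intro x
    by_cases hx : x = 0
    · simp [hx]
    obtain ⟨t, ht, ht1⟩ := lb_unit x hx
    set w := t • x with hw
    have hT : ((1 : Matrix ρ ρ ℝ) - (2:ℝ) • vecMulVec w w)ᵀ = 1 - (2:ℝ) • vecMulVec w w := by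
      ext i j; simp [vecMulVec_apply, mul_comm, Matrix.one_apply, eq_comm]
    have h1 : ((1 : Matrix ρ ρ ℝ) - (2:ℝ) • vecMulVec w w)ᵀ * (1 - (2:ℝ) • vecMulVec w w) = 1 := by
      rw [hT]
      simp only [Matrix.sub_mul, Matrix.mul_sub, smul_mul_assoc, mul_smul_comm, vecMulVec_mul_vecMulVec, ht1, one_smul, Matrix.one_mul, Matrix.mul_one]
      module
    have h2 := hQ _ h1
    rw [hT, Matrix.sub_mul, Matrix.one_mul, trace_sub, smul_mul_assoc, vecMulVec_mul, trace_smul, trace_vecMulVec, dotProduct_comm, ← dotProduct_mulVec,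
      hw, mulVec_smul, dotProduct_smul, smul_dotProduct, smul_eq_mul, smul_eq_mul, smul_eq_mul] at h2
    have h3 : 0 ≤ t * (t * x ⬝ᵥ C *ᵥ x) := by linarith
    by_contra hh
    push Not at hh
    have : t * (t * x ⬝ᵥ C *ᵥ x) < 0 := mul_neg_of_pos_of_neg ht (mul_neg_of_pos_of_neg ht hh)
    linarith
  exact lb_tr_sq C hsym hpos hcon

theorem lb_contr (U : Matrix m ρ ℝ) (hU : Uᵀ * U = 1) (y : m → ℝ) : (Uᵀ *ᵥ y) ⬝ᵥ (Uᵀ *ᵥ y) ≤ y ⬝ᵥ y := by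
  have h : 0 ≤ (y - U *ᵥ (Uᵀ *ᵥ y)) ⬝ᵥ (y - U *ᵥ (Uᵀ *ᵥ y)) := by
    simp only [dotProduct]; exact Finset.sum_nonneg fun i _ => mul_self_nonneg _
  have e1 : y ⬝ᵥ (U *ᵥ (Uᵀ *ᵥ y)) = (Uᵀ *ᵥ y) ⬝ᵥ (Uᵀ *ᵥ y) := by
    rw [dotProduct_mulVec, ← mulVec_transpose]
  have e2 : (U *ᵥ (Uᵀ *ᵥ y)) ⬝ᵥ (U *ᵥ (Uᵀ *ᵥ y)) = (Uᵀ *ᵥ y) ⬝ᵥ (Uᵀ *ᵥ y) := by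
    rw [dotProduct_mulVec, ← mulVec_transpose, mulVec_mulVec (Uᵀ *ᵥ y), hU, one_mulVec]
  rw [dotProduct_sub, sub_dotProduct, sub_dotProduct, dotProduct_comm (U *ᵥ (Uᵀ *ᵥ y)) y, e1, e2] at h
  linarith

theorem lb_isom (U : Matrix m ρ ℝ) (hU : Uᵀ * U = 1) (x : ρ → ℝ) : (U *ᵥ x) ⬝ᵥ (U *ᵥ x) = x ⬝ᵥ x := by
  rw [dotProduct_mulVec, ← mulVec_transpose, mulVec_mulVec, hU, one_mulVec]

theorem lb_trace_one (U : Matrix m ρ ℝ) (hU : Uᵀ * U = 1) : trace (U * Uᵀ) = Fintype.card ρ := by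
  rw [trace_mul_comm, hU, trace_one]

/-- greedy selection -/
theorem lb_greedy (U' U : Matrix m ρ ℝ) (hU' : U'ᵀ * U' = 1) (hU : Uᵀ * U = 1)
    (h : ∀ Q : Matrix ρ ρ ℝ, Qᵀ * Q = 1 → froSq (U' - U) ≤ froSq (U' * Q - U)) :
    froSq (U' - U) ≤ froSq (U' * U'ᵀ - U * Uᵀ) := by
  have gen : ∀ W : Matrix m ρ ℝ, Wᵀ * W = 1 → froSq (W - U) = 2 * Fintype.card ρ - 2 * trace (Wᵀ * U) := by
    intro W hW
    rw [la_froSq_trace, transpose_sub, Matrix.sub_mul, Matrix.mul_sub, Matrix.mul_sub, hW, hU, trace_sub, trace_sub, trace_sub, trace_one]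
    have : trace (Uᵀ * W) = trace (Wᵀ * U) := by rw [← trace_transpose]; simp
    rw [this]; ring
  have h1 := lb_greedy_tr (U'ᵀ * U) (fun x => by
    rw [← mulVec_mulVec]
    exact (lb_contr U' hU' _).trans (lb_isom U hU x).le) (fun Q hQ => by
      have hh := h Q hQ
      rw [gen U' hU', gen (U' * Q) (by
        rw [transpose_mul, Matrix.mul_assoc, ← Matrix.mul_assoc _ U' Q, hU', Matrix.one_mul, hQ])] at hh
      rw [transpose_mul, Matrix.mul_assoc] at hh
      linarith)
  rw [gen U' hU']
  have e : froSq (U' * U'ᵀ - U * Uᵀ) = 2 * Fintype.card ρ - 2 * froSq (U'ᵀ * U) := by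
    have i1 : ∀ W : Matrix m ρ ℝ, Wᵀ * W = 1 → (W * Wᵀ) * (W * Wᵀ) = W * Wᵀ := by
      intro W hW; rw [Matrix.mul_assoc, ← Matrix.mul_assoc Wᵀ, hW, Matrix.one_mul]
    have i2 : trace ((U' * U'ᵀ) * (U * Uᵀ)) = froSq (U'ᵀ * U) := by
      rw [la_froSq_trace, transpose_mul, transpose_transpose, trace_mul_comm]
      calc _ = trace (U * (Uᵀ * (U' * U'ᵀ))) := by simp only [Matrix.mul_assoc]
        _ = _ := by rw [trace_mul_comm]; simp only [Matrix.mul_assoc]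
    have i3 : trace ((U * Uᵀ) * (U' * U'ᵀ)) = froSq (U'ᵀ * U) := by rw [trace_mul_comm, i2]
    rw [la_froSq_trace, transpose_sub, transpose_mul, transpose_mul, transpose_transpose, transpose_transpose, Matrix.sub_mul, Matrix.mul_sub, Matrix.mul_sub,
      i1 U' hU', i1 U hU, trace_sub, trace_sub, trace_sub, i2, i3, lb_trace_one U hU, lb_trace_one U' hU']
    ring
  rw [e]; linarith

end lb

section lc
variable {m ρ κ : Type} [Fintype m] [DecidableEq m] [Fintype ρ] [DecidableEq ρ] [Fintype κ]

theorem lc_froSq_mul (A : Matrix m ρ ℝ) (B : Matrix ρ κ ℝ) : froSq (A * B) ≤ froSq A * froSq B := by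
  unfold froSq
  rw [Finset.sum_mul]
  refine Finset.sum_le_sum fun i _ => ?_
  rw [Finset.sum_comm (s := (Finset.univ : Finset ρ)), Finset.mul_sum]
  refine Finset.sum_le_sum fun j _ => ?_
  rw [mul_apply]
  exact Finset.sum_mul_sq_le_sq_mul_sq _ _ _

theorem lc_froSq_smul (a : ℝ) (A : Matrix m ρ ℝ) : froSq (a • A) = a^2 * froSq A := by
  unfold froSq
  simp only [Finset.mul_sum, Matrix.smul_apply, smul_eq_mul, mul_pow]

theorem lc_froSq_neg (A B : Matrix m ρ ℝ) : froSq (A - B) = froSq (B - A) := by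
  unfold froSq
  refine Finset.sum_congr rfl fun i _ => Finset.sum_congr rfl fun j _ => ?_
  simp only [Matrix.sub_apply]; ring

theorem lc_quad (D : Matrix m m ℝ) (t : ℝ) (ht : 0 ≤ t) (h : froSq D ≤ t^2) (x : m → ℝ) :
    -(t * (x ⬝ᵥ x)) ≤ x ⬝ᵥ (D *ᵥ x) := by
  have hx : 0 ≤ x ⬝ᵥ x := by
    simp only [dotProduct]; exact Finset.sum_nonneg fun i _ => mul_self_nonneg _
  have h1 : (x ⬝ᵥ (D *ᵥ x))^2 ≤ (t * (x ⬝ᵥ x))^2 := by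
    have a1 : (x ⬝ᵥ (D *ᵥ x))^2 ≤ (∑ i, (x i)^2) * ∑ i, ((D *ᵥ x) i)^2 := by
      simp only [dotProduct]; exact Finset.sum_mul_sq_le_sq_mul_sq _ _ _
    have a2 : ∑ i, ((D *ᵥ x) i)^2 ≤ froSq D * ∑ i, (x i)^2 := by
      unfold froSq
      rw [Finset.sum_mul]
      refine Finset.sum_le_sum fun i _ => ?_
      simp only [mulVec, dotProduct]
      exact Finset.sum_mul_sq_le_sq_mul_sq _ _ _
    have e : x ⬝ᵥ x = ∑ i, (x i)^2 := by simp [dotProduct, pow_two]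
    rw [e] at hx ⊢
    calc _ ≤ _ := a1
      _ ≤ (∑ i, (x i)^2) * (froSq D * ∑ i, (x i)^2) := by gcongr
      _ ≤ (∑ i, (x i)^2) * (t^2 * ∑ i, (x i)^2) := by gcongr
      _ = _ := by ring
  exact (abs_le_of_sq_le_sq' h1 (by positivity)).1

theorem lc_trace_amgm (A B : Matrix m m ℝ) (hA : Aᵀ = A) (g : ℝ) (hg : 0 < g) :
    trace (A * B) ≤ froSq A / (2 * g) + g / 2 * froSq B := by
  have e : trace (A * B) = ∑ i, ∑ j, A i j * B i j := by
    simp only [trace, diag, mul_apply]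
    rw [Finset.sum_comm]
    refine Finset.sum_congr rfl fun i _ => Finset.sum_congr rfl fun j _ => ?_
    rw [← hA]; rw [transpose_apply, transpose_apply, ← transpose_apply A i j, hA]
  rw [e]
  unfold froSq
  rw [Finset.sum_div, Finset.mul_sum, ← Finset.sum_add_distrib]
  refine Finset.sum_le_sum fun i _ => ?_
  rw [Finset.sum_div, Finset.mul_sum, ← Finset.sum_add_distrib]
  refine Finset.sum_le_sum fun j _ => ?_
  have : A i j ^ 2 / (2 * g) + g / 2 * B i j ^ 2 - A i j * B i j = (A i j - g * B i j)^2 / (2 * g) := by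
    field_simp; ring
  have h2 : 0 ≤ (A i j - g * B i j)^2 / (2 * g) := by positivity
  linarith

def LcMax (M : Matrix m m ℝ) (U : Matrix m ρ ℝ) : Prop :=
  Uᵀ * U = 1 ∧ ∀ V : Matrix m ρ ℝ, Vᵀ * V = 1 → trace (Vᵀ * M * V) ≤ trace (Uᵀ * M * U)

theorem LcMax.loc {M : Matrix m m ℝ} {U : Matrix m ρ ℝ} (h : LcMax M U) : LbLocMax M U :=
  ⟨h.1, 1, one_pos, fun V hV _ => h.2 V hV⟩

theorem lc_tr_cyc (M : Matrix m m ℝ) (U : Matrix m ρ ℝ) : trace (Uᵀ * M * U) = trace (M * (U * Uᵀ)) := by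
  rw [Matrix.mul_assoc, trace_mul_comm, Matrix.mul_assoc]

theorem lc_pert (M : Matrix m m ℝ) (hM : Mᵀ = M) (Us : Matrix m ρ ℝ) (hUs : Usᵀ * Us = 1) (ν γ : ℝ) (hγ : 0 < γ)
    (hg : LaGap M (Us * Usᵀ) ν γ) : ∃ e > (0:ℝ), ∀ (M' : Matrix m m ℝ) (U' : Matrix m ρ ℝ), M'ᵀ = M' → LcMax M' U' →
      froSq (M' - M) ≤ e → LaGap M' (U' * U'ᵀ) ν (γ/2) ∧ froSq (U' * U'ᵀ - Us * Usᵀ) ≤ froSq (M' - M) / γ^2 := by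
  have idem : ∀ W : Matrix m ρ ℝ, Wᵀ * W = 1 → (W * Wᵀ) * (W * Wᵀ) = W * Wᵀ := by
    intro W hW; rw [Matrix.mul_assoc, ← Matrix.mul_assoc Wᵀ, hW, Matrix.one_mul]
  have symm : ∀ W : Matrix m ρ ℝ, (W * Wᵀ)ᵀ = W * Wᵀ := by intro W; simp
  set P := Us * Usᵀ with hP
  set K := froSq (M - ν • (1 : Matrix m m ℝ)) with hK
  set L := froSq ((2:ℝ) • P - 1) with hL
  have hK0 : 0 ≤ K := la_froSq_nonneg _
  have hL0 : 0 ≤ L := la_froSq_nonneg _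
  set Z := 8 * (2 + 2 * K) / γ^2 + 2 * L with hZ
  have hZ0 : 0 < Z := by positivity
  refine ⟨min 1 ((γ/2)^2 / Z), by positivity, ?_⟩
  intro M' U' hM' hU' hle
  have hle1 := hle.trans (min_le_left _ _)
  have hle2 := hle.trans (min_le_right _ _)
  rw [le_div_iff₀ hZ0] at hle2
  have hn := la_froSq_nonneg (M' - M)
  have hb : froSq (U' * U'ᵀ - P) ≤ froSq (M' - M) / γ^2 := by
    have h1 := hg.trace_ineq (U' * U'ᵀ) (symm _) (idem _ hU'.1) (by rw [lb_trace_one U' hU'.1, hP, lb_trace_one Us hUs])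
    have h2 := hU'.2 Us hUs
    rw [lc_tr_cyc, lc_tr_cyc, ← hP] at h2
    have h3 := lc_trace_amgm (M - M') (P - U' * U'ᵀ) (by rw [transpose_sub, hM, hM']) γ hγ
    rw [Matrix.sub_mul, Matrix.mul_sub, Matrix.mul_sub, trace_sub, trace_sub, trace_sub] at h3
    rw [lc_froSq_neg M M'] at h3
    rw [lc_froSq_neg]
    have h4 : γ / 2 * froSq (P - U' * U'ᵀ) ≤ froSq (M' - M) / (2 * γ) := by linarith
    rw [le_div_iff₀ (by positivity)] at h4 ⊢
    nlinarith
  refine ⟨⟨symm _, idem _ hU'.1, lb_comm M' hM' U' hU'.loc, ?_⟩, hb⟩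
  intro x
  set P' := U' * U'ᵀ with hP'
  have hD : ((2:ℝ) • P' - 1) * (M' - ν • 1) = ((2:ℝ) • P - 1) * (M - ν • 1) +
      ((2:ℝ) • (P' - P) * (M' - ν • 1) + ((2:ℝ) • P - 1) * (M' - M)) := by
    simp only [Matrix.sub_mul, Matrix.mul_sub, smul_mul_assoc, smul_sub]
    abel
  have hDn : froSq ((2:ℝ) • (P' - P) * (M' - ν • 1) + ((2:ℝ) • P - 1) * (M' - M)) ≤ (γ/2)^2 := by
    have a1 := la_froSq_add_le ((2:ℝ) • (P' - P) * (M' - ν • 1)) (((2:ℝ) • P - 1) * (M' - M))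
    have a2 := lc_froSq_mul ((2:ℝ) • (P' - P)) (M' - ν • 1)
    have a3 := lc_froSq_mul ((2:ℝ) • P - 1) (M' - M)
    rw [lc_froSq_smul] at a2
    have a4 : froSq (M' - ν • 1) ≤ 2 + 2 * K := by
      have := la_froSq_add_le (M' - M) (M - ν • 1)
      rw [sub_add_sub_cancel] at this
      linarith
    have a5 : 2^2 * froSq (P' - P) * froSq (M' - ν • 1) ≤ 2^2 * (froSq (M' - M) / γ^2) * (2 + 2 * K) := by
      have := la_froSq_nonneg (M' - ν • 1)
      have := la_froSq_nonneg (P' - P)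
      gcongr
    have a6 : 2 * (2^2 * (froSq (M' - M) / γ^2) * (2 + 2 * K)) + 2 * (L * froSq (M' - M)) = froSq (M' - M) * Z := by
      rw [hZ]; ring
    linarith
  rw [hD, add_mulVec, dotProduct_add]
  have h1 := hg.pos x
  have h2 := lc_quad _ (γ/2) (by positivity) hDn x
  linarith

theorem lc_block (G : Matrix m κ ℝ) (U U' : Matrix m ρ ℝ) (hU : Uᵀ * U = 1) (hU' : LcMax (G * Gᵀ) U')
   (hgr : ∀ V : Matrix m ρ ℝ, LcMax (G * Gᵀ) V → froSq (U' - U) ≤ froSq (V - U)) (ν γ : ℝ) (hγ : 0 < γ)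
   (hg : LaGap (G * Gᵀ) (U' * U'ᵀ) ν γ) :
   froSq (U' - U) ≤ froSq (U' * U'ᵀ - U * Uᵀ) ∧ γ * froSq (U' - U) ≤ froSq (U'ᵀ * G) - froSq (Uᵀ * G) := by
  have h1 : froSq (U' - U) ≤ froSq (U' * U'ᵀ - U * Uᵀ) := by
    apply lb_greedy U' U hU'.1 hU
    intro Q hQ
    apply hgr
    have hQQ : Q * Qᵀ = 1 := mul_eq_one_comm.1 hQ
    refine ⟨?_, ?_⟩
    · rw [transpose_mul, Matrix.mul_assoc, ← Matrix.mul_assoc _ U' Q, hU'.1, Matrix.one_mul, hQ]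
    · intro V hV
      refine (hU'.2 V hV).trans (le_of_eq ?_)
      rw [lc_tr_cyc, lc_tr_cyc]
      congr 2
      rw [transpose_mul, Matrix.mul_assoc, ← Matrix.mul_assoc Q, hQQ, Matrix.one_mul]
  refine ⟨h1, ?_⟩
  rw [la_froSq_TG, la_froSq_TG, lc_tr_cyc, lc_tr_cyc]
  have h2 := hg.trace_ineq (U * Uᵀ) (by simp) (by rw [Matrix.mul_assoc, ← Matrix.mul_assoc Uᵀ, hU, Matrix.one_mul])
    (by rw [lb_trace_one U hU, lb_trace_one U' hU'.1])
  refine le_trans ?_ h2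
  gcongr

noncomputable def NS (A : Matrix m ρ ℝ) : Matrix m ρ ℝ := (3/2:ℝ) • A - (1/2:ℝ) • (A * Aᵀ * A)

theorem NS_feas (U : Matrix m ρ ℝ) (h : Uᵀ * U = 1) : NS U = U := by
  unfold NS
  rw [Matrix.mul_assoc, h, Matrix.mul_one]; module

theorem lc_skew (S K : Matrix ρ ρ ℝ) (hS : Sᵀ = S) (hK : Kᵀ = -K) : trace (S * K) = 0 := by
  have h : trace (S * K) = - trace (S * K) := by
    conv_lhs => rw [← trace_transpose, transpose_mul, hS, hK, Matrix.neg_mul, trace_neg, trace_mul_comm]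
  linarith

theorem lc_deriv (M : Matrix m m ℝ) (hM : Mᵀ = M) (U : Matrix m ρ ℝ) (hU : Uᵀ * U = 1)
    (hMU : M * U = U * (Uᵀ * M * U)) (E : Matrix m ρ ℝ) :
    HasDerivAt (fun t : ℝ => trace ((NS (U + t • E))ᵀ * M * NS (U + t • E))) 0 0 := by
  obtain ⟨S, hS⟩ : ∃ S, S = Uᵀ * M * U := ⟨_, rfl⟩
  have hSs : Sᵀ = S := by rw [hS]; simp [hM, Matrix.mul_assoc]
  rw [← hS] at hMU
  obtain ⟨W, hW⟩ : ∃ W, W = E - (1/2:ℝ) • (U * Eᵀ * U + U * Uᵀ * E) := ⟨_, rfl⟩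
  obtain ⟨W2, hW2⟩ : ∃ W2, W2 = (-(1/2):ℝ) • (E * Eᵀ * U + E * Uᵀ * E + U * Eᵀ * E) := ⟨_, rfl⟩
  obtain ⟨W3, hW3⟩ : ∃ W3, W3 = (-(1/2):ℝ) • (E * Eᵀ * E) := ⟨_, rfl⟩
  have hT : ∀ t : ℝ, NS (U + t • E) = U + t • W + t^2 • W2 + t^3 • W3 := by
    intro t
    unfold NS
    rw [hW, hW2, hW3]
    have u1 : U * Uᵀ * U = U := by rw [Matrix.mul_assoc, hU, Matrix.mul_one]
    have u2 : E * Uᵀ * U = E := by rw [Matrix.mul_assoc, hU, Matrix.mul_one]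
    simp only [transpose_add, transpose_smul, Matrix.add_mul, Matrix.mul_add, Matrix.smul_mul, Matrix.mul_smul, u1, u2]
    module
  have hUW : trace (Uᵀ * M * W) = 0 := by
    have e1 : Uᵀ * M = S * Uᵀ := by
      have := congrArg transpose hMU
      rwa [transpose_mul, transpose_mul, hM, hSs] at this
    rw [e1, Matrix.mul_assoc]
    apply lc_skew _ _ hSs
    have e2 : Uᵀ * W = (1/2:ℝ) • (Uᵀ * E - Eᵀ * U) := by
      rw [hW, Matrix.mul_sub, Matrix.mul_smul, Matrix.mul_add, ← Matrix.mul_assoc, ← Matrix.mul_assoc, hU, Matrix.one_mul, ← Matrix.mul_assoc, ← Matrix.mul_assoc, hU, Matrix.one_mul]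
      module
    rw [e2]; simp only [transpose_smul, transpose_sub, transpose_mul, transpose_transpose]; module
  have hWU : trace (Wᵀ * M * U) = 0 := by
    rw [← hUW, ← trace_transpose]; simp [hM, Matrix.mul_assoc]
  have hexp : ∃ a2 a3 a4 a5 a6 : ℝ, ∀ t : ℝ, trace ((NS (U + t • E))ᵀ * M * NS (U + t • E)) =
      trace (Uᵀ * M * U) + t^2 * (a2 + a3 * t + a4 * t^2 + a5 * t^3 + a6 * t^4) := by
    refine ⟨trace (Wᵀ * M * W) + trace (Uᵀ * M * W2) + trace (W2ᵀ * M * U),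
      trace (Uᵀ * M * W3) + trace (W3ᵀ * M * U) + trace (Wᵀ * M * W2) + trace (W2ᵀ * M * W),
      trace (Wᵀ * M * W3) + trace (W3ᵀ * M * W) + trace (W2ᵀ * M * W2),
      trace (W2ᵀ * M * W3) + trace (W3ᵀ * M * W2), trace (W3ᵀ * M * W3), fun t => ?_⟩
    rw [hT]
    simp only [transpose_add, transpose_smul, Matrix.add_mul, Matrix.mul_add, Matrix.smul_mul, Matrix.mul_smul, trace_add, trace_smul, smul_eq_mul, hUW, hWU]
    ring
  obtain ⟨a2, a3, a4, a5, a6, h⟩ := hexp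
  have hf : (fun t : ℝ => trace ((NS (U + t • E))ᵀ * M * NS (U + t • E))) = fun t => trace (Uᵀ * M * U) + t^2 * (a2 + a3 * t + a4 * t^2 + a5 * t^3 + a6 * t^4) := funext h
  rw [hf]
  have hq : DifferentiableAt ℝ (fun t : ℝ => a2 + a3 * t + a4 * t^2 + a5 * t^3 + a6 * t^4) 0 := by fun_prop
  have := (((hasDerivAt_id (0:ℝ)).pow 2).mul hq.hasDerivAt).const_add (trace (Uᵀ * M * U))
  exact this.congr_deriv (by simp)

end lc

theorem ld_list_count (l : List ℝ) (hl : l.Pairwise (· ≥ ·)) (r : ℕ) (h1 : 1 ≤ r) (hr : r ≤ l.length) (h : l.getD r 0 < l.getD (r-1) 0)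
    (ν : ℝ) (hν1 : l.getD r 0 < ν) (hν2 : ν < l.getD (r-1) 0) :
    l.countP (fun x => decide (ν < x)) = r ∧ ∀ x ∈ l, x ≠ ν := by
  have hlt : r - 1 < l.length := by omega
  have hA : ∀ x ∈ l.take r, ν < x := by
    intro x hx
    obtain ⟨i, hi, rfl⟩ := List.getElem_of_mem hx
    rw [List.getElem_take]
    rw [List.length_take] at hi
    rw [List.getD_eq_getElem _ _ hlt] at hν2
    rcases Nat.lt_or_ge i (r-1) with h' | h'
    · have := List.pairwise_iff_getElem.1 hl i (r-1) (by omega) hlt h'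
      exact lt_of_lt_of_le hν2 this
    · have : i = r - 1 := by omega
      subst this; exact hν2
  have hB : ∀ x ∈ l.drop r, x < ν := by
    intro x hx
    obtain ⟨i, hi, rfl⟩ := List.getElem_of_mem hx
    rw [List.getElem_drop]
    rw [List.length_drop] at hi
    have hrl : r < l.length := by omega
    rw [List.getD_eq_getElem _ _ hrl] at hν1
    rcases Nat.eq_zero_or_pos i with h' | h'
    · subst h'; simpa using hν1
    · have := List.pairwise_iff_getElem.1 hl r (r+i) hrl (by omega) (by omega)
      exact lt_of_le_of_lt this hν1
  constructor
  · rw [← List.take_append_drop r l, List.countP_append]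
    have e1 : (l.take r).countP (fun x => decide (ν < x)) = (l.take r).length := by
      rw [List.countP_eq_length]; intro x hx; simpa using hA x hx
    have e2 : (l.drop r).countP (fun x => decide (ν < x)) = 0 := by
      rw [List.countP_eq_zero]; intro x hx; simpa using (hB x hx).le
    rw [e1, e2, List.length_take]; omega
  · intro x hx
    rw [← List.take_append_drop r l, List.mem_append] at hx
    rcases hx with hx | hx
    · exact (hA x hx).ne'
    · exact (hB x hx).ne

theorem ld_eig_gap {m : ℕ} {κ : Type} [Fintype κ] (Y : Matrix (Fin m) κ ℝ) (r : ℕ) (hr : r ≤ m) (h : sval Y (r+1) < sval Y r) :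
    ∃ ν, (∀ i, (Matrix.isHermitian_mul_conjTranspose_self Y).eigenvalues i ≠ ν) ∧
      (Finset.univ.filter fun i => ν < (Matrix.isHermitian_mul_conjTranspose_self Y).eigenvalues i).card = r := by
  have h1 : 1 ≤ r := by
    rcases Nat.eq_zero_or_pos r with h0 | h0
    · subst h0; simp [sval] at h
    · exact h0
  unfold sval at h
  have h2 : (eigList Y).getD r 0 < (eigList Y).getD (r-1) 0 := by
    by_contra hh
    push Not at hh
    have := Real.sqrt_le_sqrt hh
    rw [Nat.add_sub_cancel] at h
    linarith
  obtain ⟨ν, hν1, hν2⟩ := exists_between h2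
  obtain ⟨l, hl⟩ : ∃ l, l = (Matrix.isHermitian_mul_conjTranspose_self Y).eigenvalues := ⟨_, rfl⟩
  have hlist : ((eigList Y : List ℝ) : Multiset ℝ) = (Finset.univ : Finset (Fin m)).val.map l := by
    rw [eigList, ← hl, Multiset.coe_reverse, Multiset.sort_eq]
  have hpw : (eigList Y).Pairwise (· ≥ ·) := by
    rw [eigList, List.pairwise_reverse]
    exact Multiset.pairwise_sort _ _
  have hlen : (eigList Y).length = m := by
    rw [← Multiset.coe_card, hlist]; simp
  obtain ⟨h3, h4⟩ := ld_list_count (eigList Y) hpw r h1 (by omega) h2 ν hν1 hν2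
  refine ⟨ν, ?_, ?_⟩
  · intro i
    apply h4
    rw [← Multiset.mem_coe, hlist, ← hl]
    simp
  · rw [← hl, ← h3, ← Multiset.coe_countP, hlist, Multiset.countP_map]
    simp [Finset.card_def]

theorem ld_gap {m : ℕ} {κ : Type} [Fintype κ] (Y : Matrix (Fin m) κ ℝ) (r : ℕ) (hr : r ≤ m) (h : sval Y (r+1) < sval Y r)
    (U : Matrix (Fin m) (Fin r) ℝ) (hU : LbLocMax (Y * Yᵀ) U) :
    ∃ ν γ, 0 < γ ∧ LaGap (Y * Yᵀ) (U * Uᵀ) ν γ := by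
  obtain ⟨ν, h1, h2⟩ := ld_eig_gap Y r hr h
  obtain ⟨P, γ, hγ, hg, ht, hc⟩ := la_gap_exists _ (Matrix.isHermitian_mul_conjTranspose_self Y) ν h1
  rw [h2] at ht
  rw [conjTranspose_eq_transpose_of_trivial] at hg hc
  have := lb_proj (Y * Yᵀ) (by simp) U hU P ν γ hγ hg (by simpa using ht) hc
  exact ⟨ν, γ, hγ, by rw [this]; exact hg⟩

section tensor
variable {N : ℕ} {I r : Fin N → ℕ}

theorem le_sum_split (β : Fin N → ℕ) (n : Fin N) (f : ((i : Fin N) → Fin (β i)) → ℝ) :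
    ∑ c, f c = ∑ a : Fin (β n), ∑ c' : ((m : {m : Fin N // m ≠ n}) → Fin (β m.1)),
      f (fun i => if h : i = n then Fin.cast (by rw [h]) a else c' ⟨i, h⟩) := by
  rw [← Fintype.sum_prod_type']
  refine Fintype.sum_equiv (Equiv.piSplitAt n (fun i => Fin (β i))) _ _ fun c => ?_
  congr 1
  ext i
  by_cases h : i = n
  · subst h; simp
  · simp [h]

theorem le_Gmat_congr (X : ((n : Fin N) → Fin (I n)) → ℝ) (A B : (n : Fin N) → Matrix (Fin (I n)) (Fin (r n)) ℝ) (n : Fin N)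
    (h : ∀ i, i ≠ n → A i = B i) : Gmat X A n = Gmat X B n := by
  unfold Gmat
  funext j c
  refine Finset.sum_congr rfl fun idx _ => ?_
  congr 1
  refine Finset.prod_congr rfl fun m _ => ?_
  rw [h m.1 m.2]

theorem le_fval (X : ((n : Fin N) → Fin (I n)) → ℝ) (A : (n : Fin N) → Matrix (Fin (I n)) (Fin (r n)) ℝ) (n : Fin N) :
    fval X A = froSq ((A n)ᵀ * Gmat X A n) := by
  unfold fval froSq
  rw [le_sum_split r n]
  refine Finset.sum_congr rfl fun a _ => Finset.sum_congr rfl fun c' _ => ?_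
  congr 1
  rw [le_sum_split I n, mul_apply]
  refine Finset.sum_congr rfl fun j _ => ?_
  rw [transpose_apply, Gmat, Finset.mul_sum]
  refine Finset.sum_congr rfl fun idx _ => ?_
  rw [Fintype.prod_eq_mul_prod_subtype_ne _ n]
  have e1 : A n (if h : n = n then Fin.cast (by rw [h]) j else idx ⟨n, h⟩) (if h : n = n then Fin.cast (by rw [h]) a else c' ⟨n, h⟩) = A n j a := by
    simp
  rw [e1]
  have e2 : ∀ m : {m : Fin N // m ≠ n}, A m.1 (if h : m.1 = n then Fin.cast (by rw [h]) j else idx ⟨m.1, h⟩) (if h : m.1 = n then Fin.cast (by rw [h]) a else c' ⟨m.1, h⟩) = A m.1 (idx m) (c' m) := by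
    intro m; simp [m.2]
  simp only [e2]
  ring

end tensor

section flat
variable {N : ℕ} {I r : Fin N → ℕ}

abbrev Tup (I r : Fin N → ℕ) := (n : Fin N) → Matrix (Fin (I n)) (Fin (r n)) ℝ
abbrev Sg (I r : Fin N → ℕ) := (n : Fin N) × (Fin (I n) × Fin (r n))

def fl (A : Tup I r) : Sg I r → ℝ := fun s => A s.1 s.2.1 s.2.2
def ufl (x : Sg I r → ℝ) : Tup I r := fun n i j => x ⟨n, (i, j)⟩

theorem ufl_fl (A : Tup I r) : ufl (fl A) = A := rfl
theorem fl_ufl (x : Sg I r → ℝ) : fl (ufl x) = x := rfl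

theorem ufl_cont : Continuous (ufl : (Sg I r → ℝ) → Tup I r) := by
  unfold ufl
  refine continuous_pi fun n => ?_
  refine continuous_pi fun i => continuous_pi fun j => continuous_apply _

theorem Gmat_cont (X : ((n : Fin N) → Fin (I n)) → ℝ) (n : Fin N) :
    Continuous (fun A : Tup I r => Gmat X A n) := by
  unfold Gmat
  refine continuous_pi fun j => continuous_pi fun c => ?_
  refine continuous_finsetSum _ fun idx _ => ?_
  refine continuous_const.mul (continuous_finsetProd _ fun m _ => ?_)
  exact (continuous_apply_apply (idx m) (c m)).comp (continuous_apply m.1)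

theorem froSq_cont {m ρ : Type} [Fintype m] [Fintype ρ] : Continuous (fun A : Matrix m ρ ℝ => froSq A) := by
  unfold froSq
  refine continuous_finsetSum _ fun i _ => continuous_finsetSum _ fun j _ => ?_
  exact (continuous_apply_apply i j).pow 2

def GrStep (X : ((n : Fin N) → Fin (I n)) → ℝ) (B : Tup I r) (n : Fin N) (U' : Matrix (Fin (I n)) (Fin (r n)) ℝ) : Prop :=
  U'ᵀ * U' = 1 ∧ (∀ V : Matrix (Fin (I n)) (Fin (r n)) ℝ, Vᵀ * V = 1 → froSq (Vᵀ * Gmat X B n) ≤ froSq (U'ᵀ * Gmat X B n)) ∧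
  ∀ V : Matrix (Fin (I n)) (Fin (r n)) ℝ, Vᵀ * V = 1 →
    (∀ C : Matrix (Fin (I n)) (Fin (r n)) ℝ, Cᵀ * C = 1 → froSq (Cᵀ * Gmat X B n) ≤ froSq (Vᵀ * Gmat X B n)) →
    fro (U' - B n) ≤ fro (V - B n)

theorem GrStep.max {X : ((n : Fin N) → Fin (I n)) → ℝ} {B : Tup I r} {n : Fin N} {U' : Matrix (Fin (I n)) (Fin (r n)) ℝ}
    (h : GrStep X B n U') : LcMax (Gmat X B n * (Gmat X B n)ᵀ) U' := by
  refine ⟨h.1, fun V hV => ?_⟩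
  have := h.2.1 V hV
  rwa [la_froSq_TG, la_froSq_TG] at this

theorem TFeas_update {B : Tup I r} (hB : TFeas B) (n : Fin N) (U : Matrix (Fin (I n)) (Fin (r n)) ℝ) (hU : Uᵀ * U = 1) :
    TFeas (Function.update B n U) := by
  intro k
  by_cases h : k = n
  · subst h; simpa using hU
  · rw [Function.update_of_ne h]; exact hB k

theorem fval_update (X : ((n : Fin N) → Fin (I n)) → ℝ) (B : Tup I r) (n : Fin N) (U : Matrix (Fin (I n)) (Fin (r n)) ℝ) :
    fval X (Function.update B n U) = froSq (Uᵀ * Gmat X B n) := by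
  rw [le_fval X _ n, Function.update_self, le_Gmat_congr X _ B n]
  intro i hi
  rw [Function.update_of_ne hi]

theorem lf_locmax (X : ((n : Fin N) → Fin (I n)) → ℝ) (As : Tup I r) (h : LocalMax X As) (n : Fin N) :
    LbLocMax (Gmat X As n * (Gmat X As n)ᵀ) (As n) := by
  obtain ⟨hf, e, he, hmax⟩ := h
  refine ⟨hf n, e^2, by positivity, fun V hV hd => ?_⟩
  have := hmax (Function.update As n V) (TFeas_update hf n V hV) (by
    unfold tdist
    rw [Finset.sum_eq_single n]
    · rw [Function.update_self]
      exact Real.sqrt_le_iff.2 ⟨he.le, hd⟩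
    · intro k _ hk
      rw [Function.update_of_ne hk]; simp [froSq]
    · simp)
  rw [fval_update, le_fval X As n, la_froSq_TG, la_froSq_TG] at this
  exact this

theorem lf_block (hr : ∀ n, r n ≤ I n) (X : ((n : Fin N) → Fin (I n)) → ℝ) (As : Tup I r) (hs : LocalMax X As) (hnd : NonDeg X As)
    (n : Fin N) : ∃ γ > (0:ℝ), ∀ d > (0:ℝ), ∀ᶠ x in nhds (fl As), TFeas (ufl x) → ∀ U', GrStep X (ufl x) n U' →
      (∀ i j, |U' i j - As n i j| ≤ d) ∧
      γ * froSq (U' - ufl x n) ≤ fval X (Function.update (ufl x) n U') - fval X (ufl x) := by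
  have hlm := lf_locmax X As hs n
  obtain ⟨ν, γ, hγ, hg⟩ := ld_gap (Gmat X As n) (r n) (hr n) (hnd n) (As n) hlm
  obtain ⟨e, he, hpert⟩ := lc_pert _ (by simp) (As n) (hs.1 n) ν γ hγ hg
  refine ⟨γ/2, by positivity, fun d hd => ?_⟩
  set Ms := Gmat X As n * (Gmat X As n)ᵀ with hMs
  have c1 : Continuous fun x : Sg I r → ℝ => froSq (Gmat X (ufl x) n * (Gmat X (ufl x) n)ᵀ - Ms) := by
    have hG : Continuous fun x : Sg I r → ℝ => Gmat X (ufl x) n := (Gmat_cont X n).comp ufl_cont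
    exact froSq_cont.comp ((hG.matrix_mul hG.matrix_transpose).sub continuous_const)
  have cU : Continuous fun x : Sg I r → ℝ => ufl x n := (continuous_apply n).comp ufl_cont
  have c2 : Continuous fun x : Sg I r → ℝ => froSq (As n * (As n)ᵀ - ufl x n * (ufl x n)ᵀ) :=
    froSq_cont.comp (continuous_const.sub (cU.matrix_mul cU.matrix_transpose))
  have c3 : Continuous fun x : Sg I r → ℝ => froSq (ufl x n - As n) :=
    froSq_cont.comp (cU.sub continuous_const)
  have z : ∀ (m ρ : Type) [Fintype m] [Fintype ρ], froSq (0 : Matrix m ρ ℝ) = 0 := by intros; simp [froSq]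
  have ev1 : ∀ᶠ x in nhds (fl As), froSq (Gmat X (ufl x) n * (Gmat X (ufl x) n)ᵀ - Ms) < e := by
    refine c1.tendsto' _ 0 ?_ (Iio_mem_nhds he)
    rw [ufl_fl, sub_self, z]
  have ev2 : ∀ᶠ x in nhds (fl As), 2 * (2 * (froSq (Gmat X (ufl x) n * (Gmat X (ufl x) n)ᵀ - Ms) / γ^2) +
      2 * froSq (As n * (As n)ᵀ - ufl x n * (ufl x n)ᵀ)) + 2 * froSq (ufl x n - As n) < d^2 := by
    have c4 : Continuous fun x : Sg I r → ℝ => 2 * (2 * (froSq (Gmat X (ufl x) n * (Gmat X (ufl x) n)ᵀ - Ms) / γ^2) +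
      2 * froSq (As n * (As n)ᵀ - ufl x n * (ufl x n)ᵀ)) + 2 * froSq (ufl x n - As n) :=
      (continuous_const.mul ((continuous_const.mul (c1.div_const _)).add (continuous_const.mul c2))).add (continuous_const.mul c3)
    refine c4.tendsto' _ 0 ?_ (Iio_mem_nhds (by positivity))
    rw [ufl_fl, sub_self, sub_self, sub_self, z, z]; simp
  filter_upwards [ev1, ev2] with x h1 h2 hx U' hU'
  obtain ⟨g1, g2⟩ := hpert _ U' (by simp) hU'.max h1.le
  have hb := lc_block (Gmat X (ufl x) n) (ufl x n) U' (hx n) hU'.max (by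
    intro V hV
    have := hU'.2.2 V hV.1 (fun C hC => by
      have := hV.2 C hC
      rwa [← la_froSq_TG, ← la_froSq_TG] at this)
    unfold fro at this
    rwa [Real.sqrt_le_sqrt_iff (la_froSq_nonneg _)] at this) ν (γ/2) (by positivity) g1
  constructor
  · intro i j
    have k1 := la_froSq_add_le (U' - ufl x n) (ufl x n - As n)
    rw [sub_add_sub_cancel] at k1
    have k2 := la_froSq_add_le (U' * U'ᵀ - As n * (As n)ᵀ) (As n * (As n)ᵀ - ufl x n * (ufl x n)ᵀ)
    rw [sub_add_sub_cancel] at k2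
    have k3 := la_froSq_entry (U' - As n) i j
    rw [Matrix.sub_apply] at k3
    have k4 : (U' i j - As n i j)^2 ≤ d^2 := by linarith [hb.1]
    exact abs_le_of_sq_le_sq k4 hd.le
  · rw [fval_update, le_fval X (ufl x) n]
    exact hb.2

def hy (A A' : Tup I r) (m : ℕ) : Tup I r := fun i => if i.1 < m then A' i else A i

theorem hy_hyb (A A' : Tup I r) (n : Fin N) : hyb A A' n = hy A A' n.1 := rfl

theorem hy_zero (A A' : Tup I r) : hy A A' 0 = A := by
  funext i; simp [hy]

theorem hy_top (A A' : Tup I r) : hy A A' N = A' := by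
  funext i; simp [hy]

theorem hy_succ (A A' : Tup I r) (n : Fin N) : hy A A' (n.1 + 1) = Function.update (hy A A' n.1) n (A' n) := by
  funext i
  by_cases h : i = n
  · subst h; simp [hy]
  · rw [Function.update_of_ne h]
    have : i.1 ≠ n.1 := fun h' => h (Fin.ext h')
    unfold hy
    by_cases h2 : i.1 < n.1
    · rw [if_pos h2, if_pos (by omega)]
    · rw [if_neg h2, if_neg (by omega)]

theorem hy_feas {A A' : Tup I r} (h : TFeas A) (h' : TFeas A') (m : ℕ) : TFeas (hy A A' m) := by
  intro i
  unfold hy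
  by_cases h2 : i.1 < m
  · rw [if_pos h2]; exact h' i
  · rw [if_neg h2]; exact h i

def StepT (X : ((n : Fin N) → Fin (I n)) → ℝ) (A A' : Tup I r) : Prop :=
  TFeas A' ∧ ∀ n, GrStep X (hyb A A' n) n (A' n)

theorem lf_sweep (hr : ∀ n, r n ≤ I n) (X : ((n : Fin N) → Fin (I n)) → ℝ) (As : Tup I r) (hs : LocalMax X As) (hnd : NonDeg X As)
    (m : ℕ) : ∀ p : (Sg I r → ℝ) → Prop, (∀ᶠ y in nhds (fl As), p y) →
      ∀ᶠ x in nhds (fl As), TFeas (ufl x) → ∀ A', StepT X (ufl x) A' → p (fl (hy (ufl x) A' m)) := by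
  induction m with
  | zero =>
    intro p hp
    filter_upwards [hp] with x hx _ A' _
    rw [hy_zero, fl_ufl]; exact hx
  | succ m ih =>
    intro p hp
    by_cases hm : m < N
    · obtain ⟨d, hd, hball⟩ := Metric.nhds_basis_closedBall.eventually_iff.1 hp
      obtain ⟨γ, hγ, hblk⟩ := lf_block hr X As hs hnd ⟨m, hm⟩
      have hcb : ∀ᶠ y in nhds (fl As), y ∈ Metric.closedBall (fl As) d := Metric.closedBall_mem_nhds _ hd
      filter_upwards [ih _ (hcb.and (hblk d hd))] with x hx hxf A' hA'
      obtain ⟨h1, h2⟩ := hx hxf A' hA'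
      rw [ufl_fl] at h2
      have h3 := (h2 (hy_feas hxf hA'.1 m) (A' ⟨m, hm⟩) (hA'.2 ⟨m, hm⟩)).1
      apply hball
      rw [Metric.mem_closedBall, dist_pi_le_iff hd.le] at h1 ⊢
      intro s
      have hsu := hy_succ (ufl x) A' ⟨m, hm⟩
      simp only at hsu
      obtain ⟨k, i, j⟩ := s
      rw [hsu]
      by_cases hk : k = ⟨m, hm⟩
      · subst hk
        simp only [fl, Function.update_self, Real.dist_eq]
        exact h3 i j
      · have := h1 ⟨k, i, j⟩
        simp only [fl, Function.update_of_ne hk] at this ⊢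
        exact this
    · filter_upwards [ih p hp] with x hx hxf A' hA'
      have : hy (ufl x) A' (m+1) = hy (ufl x) A' m := by
        funext i
        have := i.2
        unfold hy
        rw [if_pos (by omega), if_pos (by omega)]
      rw [this]; exact hx hxf A' hA'

end flat

section poly
variable {N : ℕ} {I r : Fin N → ℕ}

noncomputable def nsPoly (n : Fin N) (i : Fin (I n)) (j : Fin (r n)) : MvPolynomial (Sg I r) ℝ :=
  MvPolynomial.C (3/2) * MvPolynomial.X ⟨n, (i, j)⟩ - MvPolynomial.C (1/2) *
    ∑ l : Fin (I n), (∑ k : Fin (r n), MvPolynomial.X ⟨n, (i, k)⟩ * MvPolynomial.X ⟨n, (l, k)⟩) * MvPolynomial.X ⟨n, (l, j)⟩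

noncomputable def fPoly (X : ((n : Fin N) → Fin (I n)) → ℝ) : MvPolynomial (Sg I r) ℝ :=
  ∑ c : ((n : Fin N) → Fin (r n)),
    (∑ idx : ((n : Fin N) → Fin (I n)), MvPolynomial.C (X idx) * ∏ n, nsPoly n (idx n) (c n)) ^ 2

theorem nsPoly_eval (A : Tup I r) (n : Fin N) (i : Fin (I n)) (j : Fin (r n)) :
    MvPolynomial.eval (fl A) (nsPoly n i j) = NS (A n) i j := by
  simp only [nsPoly, NS, map_sub, map_mul, map_sum, MvPolynomial.eval_C, MvPolynomial.eval_X, fl,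
    Matrix.sub_apply, Matrix.smul_apply, Matrix.mul_apply, Matrix.transpose_apply, smul_eq_mul]

theorem fPoly_eval (X : ((n : Fin N) → Fin (I n)) → ℝ) (A : Tup I r) :
    MvPolynomial.eval (fl A) (fPoly X) = fval X (fun n => NS (A n)) := by
  simp only [fPoly, fval, map_sum, map_pow, map_mul, map_prod, MvPolynomial.eval_C, nsPoly_eval]

theorem fPoly_feas (X : ((n : Fin N) → Fin (I n)) → ℝ) (A : Tup I r) (h : TFeas A) :
    MvPolynomial.eval (fl A) (fPoly X) = fval X A := by
  rw [fPoly_eval]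
  congr 1
  funext n
  exact NS_feas _ (h n)

theorem fPoly_pderiv (X : ((n : Fin N) → Fin (I n)) → ℝ) (B : Tup I r) (hB : TFeas B) (n : Fin N)
    (h : Gmat X B n * (Gmat X B n)ᵀ * B n = B n * ((B n)ᵀ * (Gmat X B n * (Gmat X B n)ᵀ) * B n))
    (i : Fin (I n)) (j : Fin (r n)) : MvPolynomial.eval (fl B) (MvPolynomial.pderiv ⟨n, (i, j)⟩ (fPoly X)) = 0 := by
  classical
  have d1 := lc_deriv (Gmat X B n * (Gmat X B n)ᵀ) (by simp) (B n) (hB n) h (Matrix.single i j 1)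
  have hl : HasDerivAt (fun t : ℝ => fl B + t • (Pi.single (⟨n, (i, j)⟩ : Sg I r) (1:ℝ) : Sg I r → ℝ))
      (Pi.single (⟨n, (i, j)⟩ : Sg I r) (1:ℝ)) 0 := by
    have := ((hasDerivAt_id (0:ℝ)).smul_const (Pi.single (⟨n, (i, j)⟩ : Sg I r) (1:ℝ) : Sg I r → ℝ)).const_add (fl B)
    simpa using this
  have d2 := (kl_hasFDerivAt (fPoly X) (fl B + (0:ℝ) • (Pi.single (⟨n, (i, j)⟩ : Sg I r) (1:ℝ) : Sg I r → ℝ))).comp_hasDerivAt (0:ℝ) hl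
  have e : (fun t : ℝ => ((NS (B n + t • Matrix.single i j 1))ᵀ * (Gmat X B n * (Gmat X B n)ᵀ) * NS (B n + t • Matrix.single i j 1)).trace)
      = (fun x => MvPolynomial.eval x (fPoly X)) ∘ (fun t : ℝ => fl B + t • (Pi.single (⟨n, (i, j)⟩ : Sg I r) (1:ℝ) : Sg I r → ℝ)) := by
    funext t
    rw [← la_froSq_TG, Function.comp_apply]
    have e1 : fl B + t • (Pi.single (⟨n, (i, j)⟩ : Sg I r) (1:ℝ) : Sg I r → ℝ) = fl (Function.update B n (B n + t • Matrix.single i j 1)) := by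
      funext s
      obtain ⟨k, a, b⟩ := s
      by_cases hk : k = n
      · subst hk
        simp only [fl, Function.update_self, Pi.add_apply, Pi.smul_apply, Matrix.add_apply, Matrix.smul_apply, Matrix.single_apply, Pi.single_apply]
        congr 2
        simp [Sigma.ext_iff, Prod.ext_iff, eq_comm]
      · simp only [fl, Function.update_of_ne hk, Pi.add_apply, Pi.smul_apply, Pi.single_apply]
        rw [if_neg]
        · simp
        · intro hh; exact hk (congrArg Sigma.fst hh)
    have e2 := le_Gmat_congr X (fun k => NS (Function.update B n (B n + t • Matrix.single i j 1) k)) B n (by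
      intro k hk
      rw [Function.update_of_ne hk, NS_feas _ (hB k)])
    rw [e1, fPoly_eval, le_fval X _ n, Function.update_self, e2]
  rw [e] at d1
  have := d2.unique d1
  rw [klD_apply] at this
  simpa [Pi.single_apply] using this

theorem poly_lip {σ : Type} [Fintype σ] (p : MvPolynomial σ ℝ) : ∃ K L : ℝ, 0 ≤ K ∧ 0 ≤ L ∧
    (∀ x : σ → ℝ, (∀ i, |x i| ≤ 1) → |MvPolynomial.eval x p| ≤ K) ∧
    ∀ x y : σ → ℝ, (∀ i, |x i| ≤ 1) → (∀ i, |y i| ≤ 1) → |MvPolynomial.eval x p - MvPolynomial.eval y p| ≤ L * ‖x - y‖ := by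
  induction p using MvPolynomial.induction_on with
  | C a => exact ⟨|a|, 0, abs_nonneg _, le_rfl, by simp, by simp⟩
  | add p q hp hq =>
    obtain ⟨K, L, hK, hL, h1, h2⟩ := hp
    obtain ⟨K', L', hK', hL', h1', h2'⟩ := hq
    refine ⟨K + K', L + L', by positivity, by positivity, ?_, ?_⟩
    · intro x hx
      rw [map_add]
      exact (abs_add_le _ _).trans (add_le_add (h1 x hx) (h1' x hx))
    · intro x y hx hy
      rw [map_add, map_add, add_sub_add_comm, add_mul]
      exact (abs_add_le _ _).trans (add_le_add (h2 x y hx hy) (h2' x y hx hy))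
  | mul_X p i hp =>
    obtain ⟨K, L, hK, hL, h1, h2⟩ := hp
    refine ⟨K, L + K, hK, by positivity, ?_, ?_⟩
    · intro x hx
      rw [map_mul, MvPolynomial.eval_X, abs_mul]
      calc _ ≤ K * 1 := mul_le_mul (h1 x hx) (hx i) (abs_nonneg _) hK
        _ = K := mul_one K
    · intro x y hx hy
      rw [map_mul, map_mul, MvPolynomial.eval_X, MvPolynomial.eval_X]
      have : MvPolynomial.eval x p * x i - MvPolynomial.eval y p * y i =
        (MvPolynomial.eval x p - MvPolynomial.eval y p) * x i + MvPolynomial.eval y p * (x i - y i) := by ring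
      rw [this, add_mul]
      have h3 : |x i - y i| ≤ ‖x - y‖ := norm_le_pi_norm (x - y) i
      refine (abs_add_le _ _).trans (add_le_add ?_ ?_)
      · rw [abs_mul]
        calc _ ≤ (L * ‖x - y‖) * 1 := mul_le_mul (h2 x y hx hy) (hx i) (abs_nonneg _) (by positivity)
          _ = _ := mul_one _
      · rw [abs_mul]
        exact mul_le_mul (h1 y hy) h3 (abs_nonneg _) hK

theorem feas_entry {A : Tup I r} (h : TFeas A) (s : Sg I r) : |fl A s| ≤ 1 := by
  obtain ⟨n, i, j⟩ := s
  have := congrFun (congrFun (h n) j) j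
  rw [Matrix.mul_apply, Matrix.one_apply_eq] at this
  simp only [Matrix.transpose_apply] at this
  have h2 : A n i j * A n i j ≤ 1 := by
    rw [← this]
    exact Finset.single_le_sum (f := fun k => A n k j * A n k j) (fun k _ => mul_self_nonneg _) (Finset.mem_univ i)
  simp only [fl]
  exact abs_le_one_iff_mul_self_le_one.2 h2

theorem feas_closed : IsClosed {x : Sg I r → ℝ | TFeas (ufl x)} := by
  unfold TFeas
  rw [Set.setOf_forall]
  refine isClosed_iInter fun n => ?_
  have cU : Continuous fun x : Sg I r → ℝ => ufl x n := (continuous_apply n).comp ufl_cont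
  exact isClosed_eq (cU.matrix_transpose.matrix_mul cU) continuous_const

end poly

section final
variable {N : ℕ} {I r : Fin N → ℕ}

theorem lg_energy (hr : ∀ n, r n ≤ I n) (X : ((n : Fin N) → Fin (I n)) → ℝ) (As : Tup I r) (hs : LocalMax X As) (hnd : NonDeg X As) :
    ∃ c > (0:ℝ), ∀ᶠ x in nhds (fl As), TFeas (ufl x) → ∀ A', StepT X (ufl x) A' →
      c * ‖fl A' - x‖^2 ≤ fval X A' - fval X (ufl x) := by
  choose γ hγ hblk using lf_block hr X As hs hnd
  have hsum : 0 ≤ ∑ n, (γ n)⁻¹ := Finset.sum_nonneg fun n _ => (inv_pos.2 (hγ n)).le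
  have hc : 0 < (1 + ∑ n, (γ n)⁻¹)⁻¹ := by positivity
  obtain ⟨c, hcd⟩ : ∃ c, c = (1 + ∑ n, (γ n)⁻¹)⁻¹ := ⟨_, rfl⟩
  rw [← hcd] at hc
  have hcg : ∀ n, c ≤ γ n := by
    intro n
    rw [hcd]
    apply inv_le_of_inv_le₀ (hγ n)
    have := Finset.single_le_sum (f := fun n => (γ n)⁻¹) (fun n _ => (inv_pos.2 (hγ n)).le) (Finset.mem_univ n)
    linarith
  refine ⟨c, hc, ?_⟩
  have ev := Filter.eventually_all.2 (fun n : Fin N => lf_sweep hr X As hs hnd n.1 _ (hblk n 1 one_pos))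
  filter_upwards [ev] with x hx hxf A' hA'
  have step : ∀ n : Fin N, c * froSq (A' n - ufl x n) ≤ fval X (hy (ufl x) A' (n.1+1)) - fval X (hy (ufl x) A' n.1) := by
    intro n
    have h1 := (hx n hxf A' hA' (by rw [ufl_fl]; exact hy_feas hxf hA'.1 _) (A' n) (hA'.2 n)).2
    rw [ufl_fl, ← hy_succ] at h1
    have h2 : hy (ufl x) A' n.1 n = ufl x n := by simp [hy]
    rw [h2] at h1
    exact (mul_le_mul_of_nonneg_right (hcg n) (la_froSq_nonneg _)).trans h1
  have mono : Monotone fun m => fval X (hy (ufl x) A' m) := by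
    refine monotone_nat_of_le_succ fun m => ?_
    by_cases hm : m < N
    · have h1 := step ⟨m, hm⟩
      have h2 := mul_nonneg hc.le (la_froSq_nonneg (A' ⟨m, hm⟩ - ufl x ⟨m, hm⟩))
      simp only at h1
      linarith
    · have : hy (ufl x) A' (m+1) = hy (ufl x) A' m := by
        funext i
        have := i.2
        unfold hy
        rw [if_pos (by omega), if_pos (by omega)]
      rw [this]
  have tot : ∀ n : Fin N, c * froSq (A' n - ufl x n) ≤ fval X A' - fval X (ufl x) := by
    intro n
    have h1 := step n
    have h2 := mono (Nat.zero_le n.1)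
    have h3 := mono (show n.1 + 1 ≤ N from n.2)
    simp only [hy_zero, hy_top] at h2 h3
    linarith
  have hD : 0 ≤ fval X A' - fval X (ufl x) := by
    have h2 := mono (Nat.zero_le N)
    simp only [hy_zero, hy_top] at h2
    linarith
  have hn : ‖fl A' - x‖ ≤ Real.sqrt ((fval X A' - fval X (ufl x)) / c) := by
    rw [pi_norm_le_iff_of_nonneg (Real.sqrt_nonneg _)]
    rintro ⟨n, i, j⟩
    rw [Real.norm_eq_abs]
    apply Real.abs_le_sqrt
    rw [le_div_iff₀ hc]
    have h1 := tot n
    have h2 := la_froSq_entry (A' n - ufl x n) i j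
    have h3 : (fl A' - x) ⟨n, i, j⟩ = (A' n - ufl x n) i j := rfl
    rw [h3]
    nlinarith
  have h4 : ‖fl A' - x‖^2 ≤ (fval X A' - fval X (ufl x)) / c := by
    have := pow_le_pow_left₀ (norm_nonneg _) hn 2
    rwa [Real.sq_sqrt (by positivity)] at this
  rw [le_div_iff₀ hc] at h4
  linarith

theorem lg_grad (X : ((n : Fin N) → Fin (I n)) → ℝ) :
    ∃ C > (0:ℝ), ∀ A A' : Tup I r, TFeas A → StepT X A A' → ∀ s ∈ Set.Icc (0:ℝ) 1,
      ∑ i, ((fl A + s • (fl A' - fl A)) i)^2 ≤ (Real.sqrt (Fintype.card (Sg I r)))^2 ∧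
      Real.sqrt (∑ i, (MvPolynomial.eval (fl A + s • (fl A' - fl A)) (MvPolynomial.pderiv i (fPoly X)))^2) ≤ C * ‖fl A' - fl A‖ := by
  choose K L hK hL hb hlip using fun i : Sg I r => poly_lip (MvPolynomial.pderiv i (fPoly (r := r) X))
  refine ⟨Real.sqrt (∑ i, (L i)^2) + 1, by positivity, fun A A' hA hA' s hs => ?_⟩
  have hbox : ∀ i, |(fl A + s • (fl A' - fl A)) i| ≤ 1 := by
    intro i
    have h1 := abs_le.1 (feas_entry hA i)
    have h2 := abs_le.1 (feas_entry hA'.1 i)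
    obtain ⟨s0, s1⟩ := hs
    simp only [Pi.add_apply, Pi.smul_apply, Pi.sub_apply, smul_eq_mul]
    rw [abs_le]
    constructor <;> nlinarith
  constructor
  · rw [Real.sq_sqrt (by positivity)]
    calc _ ≤ ∑ i : Sg I r, (1:ℝ) := Finset.sum_le_sum fun i _ => by
          rw [sq_le_one_iff_abs_le_one]; exact hbox i
      _ = _ := by simp
  · have key : ∀ i, |MvPolynomial.eval (fl A + s • (fl A' - fl A)) (MvPolynomial.pderiv i (fPoly X))| ≤ L i * ‖fl A' - fl A‖ := by
      rintro ⟨n, i, j⟩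
      have hB := hy_feas hA hA'.1 (n.1+1)
      have hG : Gmat X (hy A A' (n.1+1)) n = Gmat X (hyb A A' n) n := by
        rw [hy_succ, hy_hyb]
        refine le_Gmat_congr X _ _ n fun k hk => ?_
        rw [Function.update_of_ne hk]
      have hBn : hy A A' (n.1+1) n = A' n := by simp [hy]
      have hz := fPoly_pderiv X (hy A A' (n.1+1)) hB n (by
        rw [hG, hBn]
        exact lb_MU _ (by simp) _ (hA'.2 n).max.loc) i j
      have h1 := hlip ⟨n, i, j⟩ (fl A + s • (fl A' - fl A)) (fl (hy A A' (n.1+1))) hbox (feas_entry hB)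
      rw [hz, sub_zero] at h1
      refine h1.trans (mul_le_mul_of_nonneg_left ?_ (hL _))
      rw [pi_norm_le_iff_of_nonneg (norm_nonneg _)]
      rintro ⟨k, a, b⟩
      have h2 := norm_le_pi_norm (fl A' - fl A) ⟨k, a, b⟩
      refine le_trans ?_ h2
      obtain ⟨s0, s1⟩ := hs
      simp only [Real.norm_eq_abs, Pi.add_apply, Pi.smul_apply, Pi.sub_apply, smul_eq_mul, fl, hy]
      split_ifs
      · have : A k a b + s * (A' k a b - A k a b) - A' k a b = (s - 1) * (A' k a b - A k a b) := by ring
        rw [this, abs_mul]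
        exact mul_le_of_le_one_left (abs_nonneg _) (by rw [abs_le]; constructor <;> linarith)
      · have : A k a b + s * (A' k a b - A k a b) - A k a b = s * (A' k a b - A k a b) := by ring
        rw [this, abs_mul]
        exact mul_le_of_le_one_left (abs_nonneg _) (by rw [abs_le]; constructor <;> linarith)
    have h3 : Real.sqrt (∑ i, (MvPolynomial.eval (fl A + s • (fl A' - fl A)) (MvPolynomial.pderiv i (fPoly X)))^2) ≤
        Real.sqrt ((∑ i, (L i)^2) * ‖fl A' - fl A‖^2) := by
      apply Real.sqrt_le_sqrt
      rw [Finset.sum_mul]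
      refine Finset.sum_le_sum fun i _ => ?_
      rw [← mul_pow]
      exact sq_le_sq' (neg_le_of_abs_le (key i)) (le_of_abs_le (key i))
    rw [Real.sqrt_mul (by positivity), Real.sqrt_sq (norm_nonneg _)] at h3
    refine h3.trans ?_
    rw [add_mul]
    linarith [norm_nonneg (fl A' - fl A)]

theorem lg_tdist (A B : Tup I r) : tdist A B = Real.sqrt (∑ s, ((fl A - fl B) s)^2) := by
  unfold tdist froSq
  congr 1
  rw [Fintype.sum_sigma]
  refine Finset.sum_congr rfl fun n _ => ?_
  rw [Fintype.sum_prod_type]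
  rfl

theorem lg_norm_le (A B : Tup I r) : ‖fl A - fl B‖ ≤ tdist A B := by
  rw [lg_tdist, pi_norm_le_iff_of_nonneg (Real.sqrt_nonneg _)]
  intro s
  rw [Real.norm_eq_abs]
  apply Real.abs_le_sqrt
  exact Finset.single_le_sum (f := fun s => ((fl A - fl B) s)^2) (fun k _ => sq_nonneg _) (Finset.mem_univ s)

theorem lg_tdist_le (A B : Tup I r) : tdist A B ≤ Real.sqrt (Fintype.card (Sg I r)) * ‖fl A - fl B‖ := by
  rw [lg_tdist]
  rw [← Real.sqrt_sq (norm_nonneg (fl A - fl B)), ← Real.sqrt_mul (by positivity)]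
  apply Real.sqrt_le_sqrt
  calc _ ≤ ∑ s : Sg I r, ‖fl A - fl B‖^2 := Finset.sum_le_sum fun s _ => by
        rw [← sq_abs]
        exact pow_le_pow_left₀ (abs_nonneg _) (norm_le_pi_norm (fl A - fl B) s) 2
    _ = _ := by simp

theorem lg_main (hr : ∀ n, r n ≤ I n) (X : ((n : Fin N) → Fin (I n)) → ℝ) (As : Tup I r) (hs : LocalMax X As) (hnd : NonDeg X As) :
    ∃ δ > (0 : ℝ), ∀ A : ℕ → Tup I r,
      IsGreedyHOOI X A → tdist (A 0) As ≤ δ →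
      ∃ Abar : Tup I r, TFeas Abar ∧ LocalMax X Abar ∧
        ∀ n, Filter.Tendsto (fun k => fro (A k n - Abar n)) Filter.atTop (nhds 0) := by
  obtain ⟨c, hc, hen⟩ := lg_energy hr X As hs hnd
  obtain ⟨C, hC, hgr⟩ := lg_grad (r := r) X
  obtain ⟨hf, e, he, hmax⟩ := id hs
  obtain ⟨ε, hε⟩ : ∃ ε, ε = e / (Real.sqrt (Fintype.card (Sg I r)) + 1) := ⟨_, rfl⟩
  have hε0 : 0 < ε := by rw [hε]; positivity
  have hloc : ∀ B : Tup I r, TFeas B → ‖fl B - fl As‖ ≤ ε → fval X B ≤ fval X As := by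
    intro B hB hd
    apply hmax B hB
    refine (lg_tdist_le B As).trans ?_
    calc _ ≤ (Real.sqrt (Fintype.card (Sg I r)) + 1) * ε :=
          mul_le_mul (by linarith) hd (norm_nonneg _) (by positivity)
      _ = e := by rw [hε]; field_simp
  have hcb : ∀ᶠ y in nhds (fl As), y ∈ Metric.closedBall (fl As) ε := Metric.closedBall_mem_nhds _ hε0
  have hsw := lf_sweep hr X As hs hnd N _ hcb
  obtain ⟨η0, hη0, hball⟩ := Metric.nhds_basis_closedBall.eventually_iff.1 (hen.and hsw)
  have hmain := kl_conv (fPoly X) (Real.sqrt (Fintype.card (Sg I r))) c C (min η0 (ε/2)) ε hc hC (by positivity) (fl As)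
    {x | TFeas (ufl x)} feas_closed (fun x x' => StepT X (ufl x) (ufl x')) (by
      intro x x' hx hd hst
      have hx1 : TFeas (ufl x) := hx
      obtain ⟨h1, h2⟩ := hball (show x ∈ Metric.closedBall (fl As) η0 by
        rw [mem_closedBall_iff_norm]; exact hd.trans (min_le_left _ _))
      have h3 := h1 hx1 _ hst
      have h4 := h2 hx1 _ hst
      rw [hy_top, fl_ufl, mem_closedBall_iff_norm] at h4
      rw [fl_ufl] at h3
      have h5 := hgr (ufl x) (ufl x') hx1 hst
      rw [fl_ufl, fl_ufl] at h5
      refine ⟨hst.1, h4, ?_, h5⟩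
      have e1 := fPoly_feas X _ hx1
      have e2 := fPoly_feas X _ hst.1
      rw [fl_ufl] at e1 e2
      rw [e1, e2]; exact h3) (by
      intro x hx hd
      have hx1 : TFeas (ufl x) := hx
      have e1 := fPoly_feas X _ hx1
      rw [fl_ufl] at e1
      rw [e1, fPoly_feas X _ hf]
      exact hloc _ hx1 hd) ((min_le_right _ _).trans (by linarith))
  obtain ⟨δ, hδ, hconv⟩ := hmain
  refine ⟨δ, hδ, fun A hA hd => ?_⟩
  obtain ⟨xb, hxb, ht, hn, hev⟩ := hconv (fun k => fl (A k)) (hA.1.1 0) ((lg_norm_le _ _).trans hd) (by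
    intro k
    refine ⟨hA.1.1 (k+1), fun n => ⟨hA.1.1 (k+1) n, hA.1.2 k n, ?_⟩⟩
    have h1 := hA.2 k n
    have h2 : hyb (A k) (A (k+1)) n n = A k n := by simp [hyb]
    simp only [ufl_fl]
    rw [h2]
    exact h1)
  have hfb : TFeas (ufl xb) := hxb
  refine ⟨ufl xb, hfb, ⟨hfb, ε/2, by positivity, fun B hB hBd => ?_⟩, fun n => ?_⟩
  · have e1 := fPoly_feas X _ hfb
    rw [fl_ufl, hev, fPoly_feas X _ hf] at e1
    rw [← e1]
    apply hloc B hB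
    have h1 := (lg_norm_le B (ufl xb)).trans hBd
    rw [fl_ufl] at h1
    have h2 := hn.trans (min_le_right _ _)
    calc ‖fl B - fl As‖ = ‖(fl B - xb) + (xb - fl As)‖ := by rw [sub_add_sub_cancel]
      _ ≤ ‖fl B - xb‖ + ‖xb - fl As‖ := norm_add_le _ _
      _ ≤ ε := by linarith
  · have cU : Continuous fun x : Sg I r → ℝ => fro (ufl x n - ufl xb n) := by
      unfold fro
      exact Real.continuous_sqrt.comp (froSq_cont.comp (((continuous_apply n).comp ufl_cont).sub continuous_const))
    have h1 := (cU.tendsto xb).comp ht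
    have h2 : fro (ufl xb n - ufl xb n) = 0 := by simp [fro, froSq]
    rw [h2] at h1
    exact h1

end final

/-- Every greedy HOOI sequence starting sufficiently close to a
block-nondegenerate local maximizer converges to a local maximizer. -/
theorem stmt13 {N : ℕ} {I r : Fin N → ℕ} (hr : ∀ n, r n ≤ I n)
    (X : ((n : Fin N) → Fin (I n)) → ℝ)
    (Astar : (n : Fin N) → Matrix (Fin (I n)) (Fin (r n)) ℝ)
    (hstar : LocalMax X Astar) (hnd : NonDeg X Astar) :
    ∃ δ > (0 : ℝ), ∀ A : ℕ → (n : Fin N) → Matrix (Fin (I n)) (Fin (r n)) ℝ,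
      IsGreedyHOOI X A → tdist (A 0) Astar ≤ δ →
      ∃ Abar : (n : Fin N) → Matrix (Fin (I n)) (Fin (r n)) ℝ,
        TFeas Abar ∧ LocalMax X Abar ∧
        ∀ n, Filter.Tendsto (fun k => fro (A k n - Abar n)) Filter.atTop (nhds 0) := by
  exact lg_main hr X Astar hstar hnd
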